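/- arXiv:math/0608199 — 8 statements merged into one kernel-verified Lean document; each statement's English description precedes it below -/
import Mathlib

section
/- Let G be a simple graph on vertex set [n] with clique number ω. Then for every vector x = (x_1,...,x_n) ∈ ℝ^n with x ≥ 0 (all coordinates nonnegative), the chain of inequalities ρ_1(G,x) ≥ ρ_2(G,x)^{1/2} ≥ ··· ≥ ρ_ω(G,x)^{1/ω} holds; equivalently, for every integer s with 1 ≤ s < ω, ρ_{s+1}(G,x)^{1/(s+1)} ≤ ρ_s(G,x)^{1/s}. -/
open Finset

/-- `fClique G s x` is the clique polynomial `f_s(G,x) = Σ_{S an s-clique of G} Π_{i ∈ S} x_i`. -/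
def fClique {n : ℕ} (G : SimpleGraph (Fin n)) [DecidableRel G.Adj] (s : ℕ)
    (x : Fin n → ℝ) : ℝ :=
  ∑ S ∈ G.cliqueFinset s, ∏ i ∈ S, x i

/-- Log-concave normalized sequences. -/
structure MacInv (N : ℕ) (p : ℕ → ℝ) : Prop where
  nonneg : ∀ k, 0 ≤ p k
  zero : p 0 = 1
  big : ∀ k, N < k → p k = 0
  supp : ∀ k, p k = 0 → p (k + 1) = 0
  newton : ∀ k, p k * p (k + 2) ≤ p (k + 1) ^ 2

/-- Adding one variable to the normalized sequence. -/
noncomputable def macStep (N : ℕ) (x : ℝ) (p : ℕ → ℝ) : ℕ → ℝ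
  | 0 => 1
  | k + 1 => (((N : ℝ) - k) * p (k + 1) + ((k : ℝ) + 1) * (x * p k)) / ((N : ℝ) + 1)

theorem mac_cross {a b c d : ℝ} (hb : 0 ≤ b) (hc : 0 ≤ c) (hd : 0 ≤ d)
    (h1 : a * c ≤ b ^ 2) (h2 : b * d ≤ c ^ 2) (hbc : b = 0 → c = 0) (hcd : c = 0 → d = 0) :
    a * d ≤ b * c := by
  by_cases hc0 : c = 0
  · simp [hc0, hcd hc0]
  have hb0 : b ≠ 0 := fun h => hc0 (hbc h)
  have hbp : 0 < b * c := by positivity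
  have h := mul_le_mul h1 h2 (by positivity) (by positivity)
  refine le_of_mul_le_mul_right ?_ hbp
  nlinarith

/-- The key quadratic inequality, `m` the middle index, `M = N + 1 - m`. -/
theorem mac_quad {a b c d x m M : ℝ} (hx : 0 ≤ x)
    (hm : 1 ≤ m) (hM : 1 ≤ M)
    (h1 : a * c ≤ b ^ 2) (h2 : b * d ≤ c ^ 2) (h3 : a * d ≤ b * c) :
    ((M + 1) * b + (m - 1) * (x * a)) * ((M - 1) * d + (m + 1) * (x * c))
      ≤ (M * c + m * (x * b)) ^ 2 := by
  have e1 : (M ^ 2 - 1) * (b * d) ≤ (M ^ 2 - 1) * c ^ 2 :=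
    mul_le_mul_of_nonneg_left h2 (by nlinarith)
  have e2 : x ^ 2 * (m ^ 2 - 1) * (a * c) ≤ x ^ 2 * (m ^ 2 - 1) * b ^ 2 :=
    mul_le_mul_of_nonneg_left h1 (mul_nonneg (sq_nonneg _) (by nlinarith))
  have e3 : x * ((M - 1) * (m - 1)) * (a * d) ≤ x * ((M - 1) * (m - 1)) * (b * c) :=
    mul_le_mul_of_nonneg_left h3
      (mul_nonneg hx (mul_nonneg (by linarith) (by linarith)))
  nlinarith [sq_nonneg (c - x * b)]

theorem MacInv.step {N : ℕ} {p : ℕ → ℝ} (h : MacInv N p) {x : ℝ} (hx : 0 ≤ x) :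
    MacInv (N + 1) (macStep N x p) := by
  have hN : (0 : ℝ) < (N : ℝ) + 1 := by positivity
  have hA : ∀ k, 0 ≤ ((N : ℝ) - k) * p (k + 1) := by
    intro k
    rcases Nat.lt_or_ge N (k + 1) with hk | hk
    · simp [h.big _ hk]
    · have : ((k : ℝ) + 1) ≤ N := by exact_mod_cast hk
      exact mul_nonneg (by linarith) (h.nonneg _)
  have hB : ∀ k : ℕ, 0 ≤ ((k : ℝ) + 1) * (x * p k) := fun k =>
    mul_nonneg (by positivity) (mul_nonneg hx (h.nonneg _))
  have hbig : ∀ k, N + 1 < k → macStep N x p k = 0 := by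
    rintro (_ | k) hk
    · omega
    · simp [macStep, h.big (k + 1) (by omega), h.big k (by omega)]
  refine ⟨?_, rfl, hbig, ?_, ?_⟩
  · rintro (_ | k)
    · simp [macStep]
    · exact div_nonneg (add_nonneg (hA k) (hB k)) hN.le
  · rintro (_ | k) hk
    · simp [macStep] at hk
    · have h0 : ((N : ℝ) - k) * p (k + 1) + ((k : ℝ) + 1) * (x * p k) = 0 := by
        have := hk
        simp only [macStep, div_eq_zero_iff] at this
        exact this.resolve_right hN.ne'
      have hA0 : ((N : ℝ) - k) * p (k + 1) = 0 := by linarith [hA k, hB k]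
      have hB0 : ((k : ℝ) + 1) * (x * p k) = 0 := by linarith [hA k, hB k]
      have hxk : x * p k = 0 := by
        rcases mul_eq_zero.1 hB0 with h' | h'
        · exact absurd h' (by positivity)
        · exact h'
      have hp2 : ((N : ℝ) - (k + 1 : ℕ)) * p (k + 2) = 0 := by
        rcases mul_eq_zero.1 hA0 with h' | h'
        · have : N = k := by
            have : (N : ℝ) = k := by linarith
            exact_mod_cast this
          simp [h.big (k + 2) (by omega)]
        · simp [h.supp _ h']
      have hxp : x * p (k + 1) = 0 := by
        rcases mul_eq_zero.1 hxk with h' | h'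
        · simp [h']
        · simp [h.supp _ h']
      show (((N : ℝ) - (k + 1 : ℕ)) * p (k + 2) + (((k + 1 : ℕ) : ℝ) + 1) * (x * p (k + 1))) / _ = 0
      rw [hp2, hxp]; simp
  · intro k
    rcases Nat.lt_or_ge (N + 1) (k + 2) with hk | hk
    · rw [hbig _ hk, mul_zero]; positivity
    have hkN : ((k : ℝ) + 1) ≤ N := by exact_mod_cast (by omega : k + 1 ≤ N)
    rcases k with _ | k
    · have hq := mac_quad (a := 0) (b := 1) (c := p 1) (d := p 2) (x := x) (m := 1) (M := N) hx
        le_rfl (by simpa using hkN) (by simp) (by simpa [h.zero] using h.newton 0)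
        (by simpa using h.nonneg 1)
      simp only [macStep, h.zero]
      rw [one_mul, div_pow, div_le_div_iff₀ hN (by positivity)]
      push_cast
      have := mul_le_mul_of_nonneg_right hq hN.le
      nlinarith
    · push_cast at hkN
      have hq := mac_quad (a := p k) (b := p (k + 1)) (c := p (k + 2)) (d := p (k + 3)) (x := x)
        (m := (k : ℝ) + 2) (M := (N : ℝ) - k - 1) hx
        (by have : (0 : ℝ) ≤ k := by positivity
            linarith) (by linarith) (h.newton k) (h.newton (k + 1))
        (mac_cross (h.nonneg _) (h.nonneg _) (h.nonneg _) (h.newton k)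
          (h.newton (k + 1)) (h.supp _) (h.supp _))
      simp only [macStep]
      rw [div_mul_div_comm, div_pow, ← sq]
      refine div_le_div_of_nonneg_right ?_ (by positivity)
      push_cast
      refine le_of_eq_of_le ?_ (hq.trans_eq ?_) <;> ring_nf

theorem macStep_choose {N : ℕ} {p : ℕ → ℝ} (x : ℝ) (k : ℕ) :
    macStep N x p (k + 1) * ((N + 1).choose (k + 1) : ℝ)
      = p (k + 1) * (N.choose (k + 1) : ℝ) + x * (p k * (N.choose k : ℝ)) := by
  have hN : (0 : ℝ) < (N : ℝ) + 1 := by positivity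
  have h1 : ((N : ℝ) + 1) * (N.choose k : ℝ) = ((N + 1).choose (k + 1) : ℝ) * ((k : ℝ) + 1) := by
    exact_mod_cast Nat.add_one_mul_choose_eq N k
  have h2 : ((N + 1).choose (k + 1) : ℝ) = (N.choose k : ℝ) + (N.choose (k + 1) : ℝ) := by
    exact_mod_cast Nat.choose_succ_succ N k
  have h3 : ((N : ℝ) + 1) * (N.choose (k + 1) : ℝ)
      = ((N + 1).choose (k + 1) : ℝ) * ((N : ℝ) - k) := by
    linear_combination -h1 - ((N : ℝ) + 1) * h2
  simp only [macStep]
  rw [div_mul_eq_mul_div, div_eq_iff hN.ne']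
  linear_combination (-p (k + 1)) * h3 - x * p k * h1

theorem mac_exists {V : Type*} [DecidableEq V] (x : V → ℝ) (hx : ∀ i, 0 ≤ x i) (K : Finset V) :
    ∃ p, MacInv K.card p ∧
      ∀ k, ∑ S ∈ K.powersetCard k, ∏ i ∈ S, x i = p k * (K.card.choose k : ℝ) := by
  induction K using Finset.induction_on with
  | empty =>
    refine ⟨fun k => if k = 0 then 1 else 0, ⟨?_, by simp, ?_, ?_, ?_⟩, ?_⟩
    · intro k; split_ifs <;> norm_num
    · intro k hk
      have : k ≠ 0 := by simp at hk; omega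
      simp [this]
    · intro k; simp
    · intro k; simp
    · rintro (_ | k)
      · simp
      · rw [Finset.powersetCard_eq_empty.2 (by simp)]; simp
  | insert a K ha ih =>
    obtain ⟨p, hp, hk⟩ := ih
    refine ⟨macStep K.card (x a) p, ?_, ?_⟩
    · rw [Finset.card_insert_of_notMem ha]; exact hp.step (hx a)
    · rw [Finset.card_insert_of_notMem ha]
      rintro (_ | k)
      · simp [macStep]
      · rw [macStep_choose, ← hk, ← hk, Finset.powersetCard_succ_insert ha, Finset.sum_union,
          Finset.sum_image, Finset.mul_sum]
        · congr 1
          refine Finset.sum_congr rfl fun S hS => ?_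
          rw [Finset.prod_insert]
          exact fun h => ha ((Finset.mem_powersetCard.1 hS).1 h)
        · intro S hS T hT hST
          have hS' : a ∉ S := fun h => ha ((Finset.mem_powersetCard.1 hS).1 h)
          have hT' : a ∉ T := fun h => ha ((Finset.mem_powersetCard.1 hT).1 h)
          rw [← Finset.erase_insert hS', ← Finset.erase_insert hT', hST]
        · rw [Finset.disjoint_left]
          intro S hS hS'
          obtain ⟨T, _, rfl⟩ := Finset.mem_image.1 hS'
          exact ha ((Finset.mem_powersetCard.1 hS).1 (Finset.mem_insert_self _ _))

theorem mac_pad {N M : ℕ} (hNM : N ≤ M) (e : ℕ → ℝ)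
    (h : ∃ p, MacInv N p ∧ ∀ k, e k = p k * (N.choose k : ℝ)) :
    ∃ p, MacInv M p ∧ ∀ k, e k = p k * (M.choose k : ℝ) := by
  induction M, hNM using Nat.le_induction with
  | base => exact h
  | succ M _ ih =>
    obtain ⟨p, hp, hk⟩ := ih
    refine ⟨macStep M 0 p, hp.step le_rfl, ?_⟩
    rintro (_ | k)
    · rw [hk, hp.zero]; simp [macStep]
    · rw [macStep_choose, hk]; ring

theorem MacInv.maclaurin {N : ℕ} {p : ℕ → ℝ} (h : MacInv N p) (s : ℕ) :
    p (s + 1) ^ s ≤ p s ^ (s + 1) := by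
  induction s with
  | zero => simp [h.zero]
  | succ s ih =>
    by_cases h0 : p (s + 1) = 0
    · rw [h.supp _ h0, h0]; simp
    have hs0 : p s ≠ 0 := fun h' => h0 (h.supp _ h')
    have hpos : 0 < p (s + 1) := lt_of_le_of_ne (h.nonneg _) (Ne.symm h0)
    have n0 := h.nonneg s
    have n2 := h.nonneg (s + 2)
    have h1 := pow_le_pow_left₀ (mul_nonneg n0 n2) (h.newton s) (s + 1)
    rw [mul_pow] at h1
    refine le_of_mul_le_mul_left ?_ (pow_pos hpos s)
    calc p (s + 1) ^ s * p (s + 2) ^ (s + 1) ≤ p s ^ (s + 1) * p (s + 2) ^ (s + 1) :=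
          mul_le_mul_of_nonneg_right ih (by positivity)
      _ ≤ _ := h1
      _ = _ := by ring

/-- Partial derivative of the clique polynomial. -/
def dClique {n : ℕ} (G : SimpleGraph (Fin n)) [DecidableRel G.Adj] (s : ℕ) (u : Fin n)
    (x : Fin n → ℝ) : ℝ :=
  ∑ S ∈ G.cliqueFinset s, if u ∈ S then ∏ i ∈ S.erase u, x i else 0

theorem dClique_nonneg {n : ℕ} (G : SimpleGraph (Fin n)) [DecidableRel G.Adj] (s : ℕ) (u : Fin n)
    (x : Fin n → ℝ) (hx : ∀ i, 0 ≤ x i) : 0 ≤ dClique G s u x := by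
  refine Finset.sum_nonneg fun S _ => ?_
  split_ifs
  · exact Finset.prod_nonneg fun i _ => hx i
  · exact le_rfl

theorem dClique_succ_zero {n : ℕ} (G : SimpleGraph (Fin n)) [DecidableRel G.Adj] (s : ℕ)
    (hs : 1 ≤ s) (u : Fin n) (x : Fin n → ℝ) (hx : ∀ i, 0 ≤ x i) (h : dClique G s u x = 0) :
    dClique G (s + 1) u x = 0 := by
  unfold dClique at h
  rw [Finset.sum_eq_zero_iff_of_nonneg] at h
  swap
  · intro S _
    split_ifs
    · exact Finset.prod_nonneg fun i _ => hx i
    · exact le_rfl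
  refine Finset.sum_eq_zero fun T hT => ?_
  split_ifs with hu
  swap
  · rfl
  rw [SimpleGraph.mem_cliqueFinset_iff, SimpleGraph.isNClique_iff] at hT
  have hc : 0 < (T.erase u).card := by rw [Finset.card_erase_of_mem hu]; omega
  obtain ⟨w, hw⟩ := Finset.card_pos.1 hc
  have hwT := Finset.mem_of_mem_erase hw
  have hwu := Finset.ne_of_mem_erase hw
  have := h (T.erase w) (by
    rw [SimpleGraph.mem_cliqueFinset_iff, SimpleGraph.isNClique_iff]
    refine ⟨hT.1.subset (by simp), ?_⟩
    rw [Finset.card_erase_of_mem hwT]; omega)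
  rw [if_pos (Finset.mem_erase.2 ⟨hwu.symm, hu⟩)] at this
  rw [← Finset.mul_prod_erase _ _ hw, Finset.erase_right_comm, this, mul_zero]

theorem fClique_move {n : ℕ} (G : SimpleGraph (Fin n)) [DecidableRel G.Adj] (s : ℕ)
    {u v : Fin n} (huv : u ≠ v) (hadj : ¬ G.Adj u v) (x y : Fin n → ℝ)
    (hy : ∀ i, i ≠ u → i ≠ v → y i = x i) :
    fClique G s y = fClique G s x + (y u - x u) * dClique G s u x
      + (y v - x v) * dClique G s v x := by
  unfold fClique dClique
  rw [Finset.mul_sum, Finset.mul_sum, ← Finset.sum_add_distrib, ← Finset.sum_add_distrib]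
  refine Finset.sum_congr rfl fun S hS => ?_
  rw [SimpleGraph.mem_cliqueFinset_iff, SimpleGraph.isNClique_iff] at hS
  have hnot : u ∈ S → v ∈ S → False := fun hu hv => hadj (hS.1 hu hv huv)
  by_cases hu : u ∈ S
  · have hv : v ∉ S := fun hv => hnot hu hv
    have e : ∏ i ∈ S.erase u, y i = ∏ i ∈ S.erase u, x i :=
      Finset.prod_congr rfl fun i hi => hy i (Finset.ne_of_mem_erase hi)
        (fun h => hv (h ▸ Finset.mem_of_mem_erase hi))
    rw [if_pos hu, if_neg hv, ← Finset.mul_prod_erase _ _ hu, ← Finset.mul_prod_erase _ _ hu, e]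
    ring
  · by_cases hv : v ∈ S
    · have e : ∏ i ∈ S.erase v, y i = ∏ i ∈ S.erase v, x i :=
        Finset.prod_congr rfl fun i hi => hy i
          (fun h => hu (h ▸ Finset.mem_of_mem_erase hi)) (Finset.ne_of_mem_erase hi)
      rw [if_neg hu, if_pos hv, ← Finset.mul_prod_erase _ _ hv, ← Finset.mul_prod_erase _ _ hv, e]
      ring
    · rw [if_neg hu, if_neg hv, Finset.prod_congr rfl fun i hi => hy i
        (fun h => hu (h ▸ hi)) (fun h => hv (h ▸ hi))]
      ring

/-- One can kill `v` or `u`. -/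
theorem exists_kill {n : ℕ} (G : SimpleGraph (Fin n)) [DecidableRel G.Adj] (s : ℕ) (hs : 1 ≤ s)
    {u v : Fin n} (huv : u ≠ v) (hadj : ¬ G.Adj u v) (x : Fin n → ℝ) (hx : ∀ i, 0 ≤ x i)
    (hle : dClique G s u x * dClique G (s + 1) v x ≤ dClique G s v x * dClique G (s + 1) u x) :
    ∃ y : Fin n → ℝ, (∀ i, 0 ≤ y i) ∧ (y u = 0 ∨ y v = 0) ∧ (∀ i, i ≠ u → i ≠ v → y i = x i) ∧
      fClique G s y = fClique G s x ∧ fClique G (s + 1) x ≤ fClique G (s + 1) y := by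
  rcases (dClique_nonneg G s u x hx).eq_or_lt with hB | hB
  · have hB' := dClique_succ_zero G s hs u x hx hB.symm
    have hy : ∀ i, i ≠ u → i ≠ v → Function.update x u 0 i = x i := fun i hi _ => by simp [hi]
    refine ⟨Function.update x u 0, ?_, Or.inl (by simp), hy, ?_, ?_⟩
    · intro i
      by_cases hi : i = u
      · simp [hi]
      · simp [hi, hx i]
    · rw [fClique_move G s huv hadj x _ hy, ← hB]; simp [huv.symm]
    · rw [fClique_move G (s + 1) huv hadj x _ hy, hB']; simp [huv.symm]
  · set B := dClique G s u x with hBdef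
    set C := dClique G s v x with hCdef
    have hC : 0 ≤ C := dClique_nonneg G s v x hx
    set t := x v / B with ht
    have ht0 : 0 ≤ t := div_nonneg (hx v) hB.le
    have htB : t * B = x v := div_mul_cancel₀ _ hB.ne'
    set y : Fin n → ℝ := Function.update (Function.update x u (x u + t * C)) v 0 with hydef
    have hyu : y u = x u + t * C := by simp [hydef, huv]
    have hyv : y v = 0 := by simp [hydef]
    have hy : ∀ i, i ≠ u → i ≠ v → y i = x i := fun i hi hi' => by simp [hydef, hi, hi']
    refine ⟨y, ?_, Or.inr hyv, hy, ?_, ?_⟩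
    · intro i
      by_cases hi : i = u
      · rw [hi, hyu]; have := hx u; positivity
      by_cases hi' : i = v
      · rw [hi', hyv]
      · rw [hy i hi hi']; exact hx i
    · rw [fClique_move G s huv hadj x _ hy, hyu, hyv, ← hBdef, ← hCdef, ← htB]; ring
    · rw [fClique_move G (s + 1) huv hadj x _ hy, hyu, hyv, ← htB]
      have := mul_le_mul_of_nonneg_left hle ht0
      nlinarith

theorem exists_clique_support {n : ℕ} (G : SimpleGraph (Fin n)) [DecidableRel G.Adj] (s : ℕ)
    (hs : 1 ≤ s) : ∀ (m : ℕ) (x : Fin n → ℝ), (∀ i, 0 ≤ x i) →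
    (univ.filter fun i => x i ≠ 0).card = m →
    ∃ (y : Fin n → ℝ) (K : Finset (Fin n)), (∀ i, 0 ≤ y i) ∧ G.IsClique (K : Set (Fin n)) ∧
      (∀ i, i ∉ K → y i = 0) ∧
      fClique G s y = fClique G s x ∧ fClique G (s + 1) x ≤ fClique G (s + 1) y := by
  intro m
  induction m using Nat.strong_induction_on with
  | _ m ih =>
    intro x hx hm
    by_cases hcl : G.IsClique ((univ.filter fun i => x i ≠ 0 : Finset (Fin n)) : Set (Fin n))
    · exact ⟨x, _, hx, hcl, by intro i hi; simpa using hi, rfl, le_rfl⟩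
    · have hex : ∃ u v, x u ≠ 0 ∧ x v ≠ 0 ∧ u ≠ v ∧ ¬ G.Adj u v := by
        by_contra hcon
        push Not at hcon
        apply hcl
        intro u hu v hv huv
        exact hcon u v (by simpa using hu) (by simpa using hv) huv
      obtain ⟨u, v, hu, hv, huv, hadj⟩ := hex
      have key : ∃ y : Fin n → ℝ, (∀ i, 0 ≤ y i) ∧ (y u = 0 ∨ y v = 0) ∧
          (∀ i, i ≠ u → i ≠ v → y i = x i) ∧
          fClique G s y = fClique G s x ∧ fClique G (s + 1) x ≤ fClique G (s + 1) y := by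
        rcases le_total (dClique G s u x * dClique G (s + 1) v x)
          (dClique G s v x * dClique G (s + 1) u x) with hle | hle
        · exact exists_kill G s hs huv hadj x hx hle
        · obtain ⟨y, h1, h2, h3, h4⟩ :=
            exists_kill G s hs huv.symm (fun h => hadj h.symm) x hx hle
          exact ⟨y, h1, h2.symm, fun i hi hi' => h3 i hi' hi, h4⟩
      obtain ⟨y, hy0, hz, hyx, hf, hf'⟩ := key
      have hlt : (univ.filter fun i => y i ≠ 0).card < m := by
        rw [← hm]
        apply Finset.card_lt_card
        rw [Finset.ssubset_iff_of_subset]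
        · rcases hz with hz | hz
          · exact ⟨u, by simpa using hu, by simpa using hz⟩
          · exact ⟨v, by simpa using hv, by simpa using hz⟩
        · intro i hi
          simp only [mem_filter, mem_univ, true_and] at hi ⊢
          by_cases hiu : i = u
          · rwa [hiu]
          by_cases hiv : i = v
          · rwa [hiv]
          rwa [← hyx i hiu hiv]
      obtain ⟨z, K, a1, a2, a3, a4, a5⟩ := ih _ hlt y hy0 rfl
      exact ⟨z, K, a1, a2, a3, a4.trans hf, hf'.trans a5⟩

theorem fClique_eq_esymm {n : ℕ} (G : SimpleGraph (Fin n)) [DecidableRel G.Adj] (s : ℕ)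
    (y : Fin n → ℝ) (K : Finset (Fin n)) (hK : G.IsClique (K : Set (Fin n)))
    (hy : ∀ i, i ∉ K → y i = 0) :
    fClique G s y = ∑ S ∈ K.powersetCard s, ∏ i ∈ S, y i := by
  unfold fClique
  symm
  apply Finset.sum_subset
  · intro S hS
    rw [Finset.mem_powersetCard] at hS
    rw [SimpleGraph.mem_cliqueFinset_iff, SimpleGraph.isNClique_iff]
    exact ⟨hK.subset (by exact_mod_cast hS.1), hS.2⟩
  · intro S hS hS'
    rw [SimpleGraph.mem_cliqueFinset_iff, SimpleGraph.isNClique_iff] at hS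
    have : ¬ S ⊆ K := fun h => hS' (Finset.mem_powersetCard.2 ⟨h, hS.2⟩)
    obtain ⟨i, hi, hiK⟩ := Finset.not_subset.1 this
    exact Finset.prod_eq_zero hi (hy i hiK)

/-- Extension of Maclaurin's inequality: for a graph `G` with clique number `ω`,
nonnegative `x`, and `1 ≤ s < ω`, one has
`ρ_{s+1}(G,x)^{1/(s+1)} ≤ ρ_s(G,x)^{1/s}` where `ρ_s = f_s / C(ω,s)`. -/
theorem maclaurin_extension {n : ℕ} (G : SimpleGraph (Fin n)) [DecidableRel G.Adj]
    (x : Fin n → ℝ) (hx : ∀ i, 0 ≤ x i) (s : ℕ) (hs : 1 ≤ s) (hsw : s < G.cliqueNum) :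
    (fClique G (s + 1) x / (G.cliqueNum.choose (s + 1) : ℝ)) ^ ((1 : ℝ) / ((s : ℝ) + 1))
      ≤ (fClique G s x / (G.cliqueNum.choose s : ℝ)) ^ ((1 : ℝ) / (s : ℝ)) := by
  obtain ⟨y, K, hy0, hK, hyK, hf, hf'⟩ := exists_clique_support G s hs _ x hx rfl
  have hcard : K.card ≤ G.cliqueNum := hK.card_le_cliqueNum
  obtain ⟨p, hp, hpk⟩ := mac_pad hcard _ (mac_exists y hy0 K)
  have hc1 : (0 : ℝ) < (G.cliqueNum.choose (s + 1) : ℝ) := by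
    exact_mod_cast Nat.choose_pos hsw
  have hc0 : (0 : ℝ) < (G.cliqueNum.choose s : ℝ) := by
    exact_mod_cast Nat.choose_pos hsw.le
  have e0 : fClique G s x / (G.cliqueNum.choose s : ℝ) = p s := by
    rw [← hf, fClique_eq_esymm G s y K hK hyK, hpk, mul_div_cancel_right₀ _ hc0.ne']
  have e1 : fClique G (s + 1) x / (G.cliqueNum.choose (s + 1) : ℝ) ≤ p (s + 1) := by
    rw [div_le_iff₀ hc1, ← hpk, ← fClique_eq_esymm G (s + 1) y K hK hyK]
    exact hf'
  have n1 : 0 ≤ fClique G (s + 1) x / (G.cliqueNum.choose (s + 1) : ℝ) :=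
    div_nonneg (Finset.sum_nonneg fun S _ => Finset.prod_nonneg fun i _ => hx i) hc1.le
  have hs0 : (0 : ℝ) < s := by exact_mod_cast hs
  rw [e0]
  refine (Real.rpow_le_rpow n1 e1 (by positivity)).trans ?_
  have q1 := hp.nonneg (s + 1)
  have q0 := hp.nonneg s
  have hm := hp.maclaurin s
  have hr := Real.rpow_le_rpow (by positivity) hm
    (by positivity : (0 : ℝ) ≤ 1 / ((s : ℝ) * ((s : ℝ) + 1)))
  rw [← Real.rpow_natCast, ← Real.rpow_natCast, ← Real.rpow_mul q1, ← Real.rpow_mul q0] at hr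
  have x1 : (s : ℝ) * (1 / ((s : ℝ) * ((s : ℝ) + 1))) = 1 / ((s : ℝ) + 1) := by
    field_simp
  have x0 : ((s + 1 : ℕ) : ℝ) * (1 / ((s : ℝ) * ((s : ℝ) + 1))) = 1 / (s : ℝ) := by
    push_cast
    field_simp
  rwa [x1, x0] at hr
end

section
/- Let G be a simple graph on n vertices with clique number ω, and for 1 ≤ s ≤ ω let k_s(G) denote the number of s-cliques of G. Then for every integer s with 1 ≤ s < ω, (k_s(G)/C(ω,s))^{1/s} ≥ (k_{s+1}(G)/C(ω,s+1))^{1/(s+1)}; in particular k_1(G)/C(ω,1) ≥ (k_2(G)/C(ω,2))^{1/2} ≥ ··· ≥ (k_ω(G)/C(ω,ω))^{1/ω}. -/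
open Finset

lemma esymm_cons_succ' (a : ℝ) (M : Multiset ℝ) (k : ℕ) :
    (a ::ₘ M).esymm (k + 1) = M.esymm (k + 1) + a * M.esymm k := by
  simp [Multiset.esymm, Multiset.powersetCard_cons, Multiset.sum_map_mul_left]

lemma esymm_nonneg' (M : Multiset ℝ) (hM : ∀ a ∈ M, 0 ≤ a) (k : ℕ) : 0 ≤ M.esymm k := by
  induction M using Multiset.induction_on generalizing k with
  | empty => cases k <;> simp [Multiset.esymm, Multiset.powersetCard_zero_right]
  | cons a M ih =>
    have ih' := ih (fun b hb => hM b (Multiset.mem_cons_of_mem hb))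
    have ha := hM a (Multiset.mem_cons_self a M)
    cases k with
    | zero => simp [Multiset.esymm]
    | succ k =>
      rw [esymm_cons_succ']
      have := ih' k
      have := ih' (k+1)
      positivity

lemma esymm_zero_of_card_lt' (M : Multiset ℝ) (k : ℕ) (h : M.card < k) : M.esymm k = 0 := by
  simp [Multiset.esymm, Multiset.powersetCard_eq_empty _ h]

lemma esymm_zero_succ' (M : Multiset ℝ) (hM : ∀ a ∈ M, 0 ≤ a) (k : ℕ) (h : M.esymm k = 0) :
    M.esymm (k + 1) = 0 := by
  induction M using Multiset.induction_on generalizing k with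
  | empty => simp [Multiset.esymm, Multiset.powersetCard_zero_right]
  | cons a M ih =>
    have hM' : ∀ b ∈ M, 0 ≤ b := (fun b hb => hM b (Multiset.mem_cons_of_mem hb))
    have ha := hM a (Multiset.mem_cons_self a M)
    cases k with
    | zero => simp [Multiset.esymm] at h
    | succ k =>
      rw [esymm_cons_succ'] at h ⊢
      have h1 := esymm_nonneg' M hM' (k+1)
      have h2 := mul_nonneg ha (esymm_nonneg' M hM' k)
      have h3 : M.esymm (k+1) = 0 := by linarith
      rw [ih hM' _ h3, h3]; simp

/-- normalized elementary symmetric mean -/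
noncomputable def pmean (M : Multiset ℝ) (k : ℕ) : ℝ := M.esymm k / (M.card.choose k : ℝ)

lemma pmean_nonneg (M : Multiset ℝ) (hM : ∀ a ∈ M, 0 ≤ a) (k : ℕ) : 0 ≤ pmean M k :=
  div_nonneg (esymm_nonneg' M hM k) (by positivity)

lemma pmean_zero_of_lt (M : Multiset ℝ) (k : ℕ) (h : M.card < k) : pmean M k = 0 := by
  simp [pmean, esymm_zero_of_card_lt' M k h]

lemma pmean_zero (M : Multiset ℝ) : pmean M 0 = 1 := by simp [pmean, Multiset.esymm]

lemma pmean_zero_succ (M : Multiset ℝ) (hM : ∀ a ∈ M, 0 ≤ a) (k : ℕ) (h : pmean M k = 0) :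
    pmean M (k + 1) = 0 := by
  rcases lt_or_ge M.card (k+1) with h1 | h1
  · exact pmean_zero_of_lt _ _ h1
  · have hc : (M.card.choose k : ℝ) ≠ 0 := by
      exact_mod_cast (Nat.choose_pos (by omega)).ne'
    have : M.esymm k = 0 := by
      simpa [pmean, hc] using h
    simp [pmean, esymm_zero_succ' M hM k this]

lemma esymm_eq (M : Multiset ℝ) (k : ℕ) : M.esymm k = M.card.choose k * pmean M k := by
  rcases lt_or_ge M.card k with h1 | h1
  · simp [esymm_zero_of_card_lt' _ _ h1, pmean_zero_of_lt _ _ h1]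
  · have hc : (M.card.choose k : ℝ) ≠ 0 := by
      exact_mod_cast (Nat.choose_pos (by omega)).ne'
    rw [pmean]; field_simp

lemma pmean_cons (a : ℝ) (M : Multiset ℝ) (k : ℕ) (hk : k ≤ M.card) :
    ((M.card : ℝ) + 1) * pmean (a ::ₘ M) (k + 1) =
      ((M.card : ℝ) - k) * pmean M (k + 1) + (k + 1) * a * pmean M k := by
  have h := esymm_eq (a ::ₘ M) (k+1)
  rw [esymm_cons_succ', esymm_eq M, esymm_eq M, Multiset.card_cons] at h
  generalize pmean (a ::ₘ M) (k+1) = P at *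
  generalize pmean M (k+1) = Q at *
  generalize pmean M k = R at *
  generalize M.card = n at *
  have hc : (0:ℝ) < (n.choose k : ℝ) := by exact_mod_cast (Nat.choose_pos hk)
  have e1 : ((n:ℝ) + 1) * n.choose k = (n+1).choose (k+1) * (k+1) := by
    exact_mod_cast Nat.add_one_mul_choose_eq n k
  have e2 : (n.choose (k+1) : ℝ) * (k+1) = n.choose k * ((n:ℝ) - k) := by
    rw [← Nat.cast_sub hk]
    exact_mod_cast Nat.choose_succ_right_eq n k
  have : (n.choose k : ℝ) * (((n : ℝ) + 1) * P) = n.choose k * (((n : ℝ) - k) * Q + (k + 1) * a * R) := by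
    linear_combination (-(k+1:ℝ)) * h + P * e1 + Q * e2
  exact mul_left_cancel₀ hc.ne' this

lemma newton (M : Multiset ℝ) (hM : ∀ a ∈ M, 0 ≤ a) (k : ℕ) :
    pmean M k * pmean M (k + 2) ≤ pmean M (k + 1) ^ 2 := by
  induction M using Multiset.induction_on generalizing k with
  | empty =>
    rw [pmean_zero_of_lt 0 (k+2) (by simp)]; simp; positivity
  | cons x M ih =>
    have hM' : ∀ b ∈ M, 0 ≤ b := (fun b hb => hM b (Multiset.mem_cons_of_mem hb))
    have hx := hM x (Multiset.mem_cons_self x M)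
    have ih := ih hM'
    have hn := pmean_nonneg M hM'
    rcases lt_or_ge M.card (k+1) with h1 | h1
    · rw [pmean_zero_of_lt _ (k+2) (by simp; omega)]; simp; positivity
    have r2 := pmean_cons x M (k+1) h1
    have r1 := pmean_cons x M k (by omega)
    have hm : (0:ℝ) < (M.card : ℝ) + 1 := by positivity
    push_cast at r2
    obtain ⟨c, hc⟩ : ∃ c : ℝ, c = (M.card : ℝ) - k := ⟨_, rfl⟩
    have hc1 : 1 ≤ c := by
      have : ((k:ℝ)+1) ≤ M.card := by exact_mod_cast h1
      linarith
    have key : (((M.card : ℝ) + 1) * pmean (x ::ₘ M) k) * (((M.card : ℝ) + 1) * pmean (x ::ₘ M) (k+2)) ≤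
        (((M.card : ℝ) + 1) * pmean (x ::ₘ M) (k+1))^2 := by
      rw [r1, show k + 2 = k + 1 + 1 from rfl, r2]
      cases k with
      | zero =>
        simp only [pmean_zero] at *
        have i0 := ih 0
        rw [pmean_zero] at i0
        push_cast at *
        have : (M.card : ℝ) = c := by linarith
        rw [this]
        simp only [zero_add] at *
        nlinarith [sq_nonneg (pmean M 1 - x), mul_nonneg (sub_nonneg.2 i0) (show 0 ≤ c^2-1 by nlinarith)]
      | succ j =>
        have r0 := pmean_cons x M j (by omega)
        rw [r0]
        have i0 := ih j
        have i1 := ih (j+1)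
        have n0 := hn j
        have n1 := hn (j+1)
        have n2 := hn (j+2)
        have n3 := hn (j+3)
        have z1 := pmean_zero_succ M hM' (j+1)
        have z2 := pmean_zero_succ M hM' (j+2)
        simp only [show j + 1 + 1 = j + 2 from rfl, show j + 1 + 2 = j + 3 from rfl, show j + 2 + 1 = j + 3 from rfl] at *
        push_cast at *
        have : (M.card : ℝ) = c + j + 1 := by linarith
        rw [this]
        generalize pmean M j = a at *
        generalize pmean M (j+1) = b at *
        generalize pmean M (j+2) = d at *
        generalize pmean M (j+3) = e at *
        have i2 : a * e ≤ b * d := by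
          rcases n1.eq_or_lt with h | h
          · rw [z2 (z1 h.symm)]; rw [mul_zero]; positivity
          rcases n2.eq_or_lt with h' | h'
          · rw [z2 h'.symm]; rw [mul_zero]; positivity
          have : (a * e) * (b * d) ≤ (b * d) * (b * d) := by
            have := mul_le_mul i0 i1 (by positivity) (by positivity)
            linarith
          exact le_of_mul_le_mul_right this (by positivity)
        have hj : (0:ℝ) ≤ j := by positivity
        have t1 := mul_nonneg (sub_nonneg.2 i1) (show 0 ≤ c^2-1 by nlinarith)
        have t2 := mul_nonneg (mul_nonneg (sub_nonneg.2 i2) hx) (mul_nonneg (show 0 ≤ c-1 by linarith) (show 0 ≤ (j:ℝ)+1 by linarith))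
        have t3 := mul_nonneg (mul_nonneg (sub_nonneg.2 i0) (sq_nonneg x)) (show 0 ≤ ((j:ℝ)+1)*(j+3) by positivity)
        have t4 := sq_nonneg (d - x * b)
        nlinarith [t1, t2, t3, t4]
    have : 0 < ((M.card : ℝ) + 1)^2 := by positivity
    refine le_of_mul_le_mul_left ?_ this
    linarith [key]

lemma maclaurin (M : Multiset ℝ) (hM : ∀ a ∈ M, 0 ≤ a) (k : ℕ) :
    pmean M (k + 1) ^ k ≤ pmean M k ^ (k + 1) := by
  induction k with
  | zero => simp [pmean_zero]
  | succ k ih =>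
    have n0 := pmean_nonneg M hM k
    have n2 := pmean_nonneg M hM (k+2)
    rcases (pmean_nonneg M hM (k+1)).eq_or_lt with h | h
    · rw [pmean_zero_succ M hM (k+1) h.symm]; rw [zero_pow (by omega)]; positivity
    have N := pow_le_pow_left₀ (by positivity) (newton M hM k) (k+1)
    have : pmean M (k+2) ^ (k+1) * pmean M (k+1) ^ k ≤ pmean M (k+1) ^ (k+2) * pmean M (k+1) ^ k := by
      calc _ ≤ pmean M (k+2) ^ (k+1) * pmean M k ^ (k+1) := by gcongr
        _ = (pmean M k * pmean M (k+2)) ^ (k+1) := by rw [mul_pow]; ring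
        _ ≤ _ := N
        _ = _ := by ring
    exact le_of_mul_le_mul_right this (by positivity)

lemma esymm_pad (M : Multiset ℝ) (r k : ℕ) :
    (M + Multiset.replicate r 0).esymm k = M.esymm k := by
  induction r with
  | zero => simp
  | succ r ih =>
    rw [Multiset.replicate_succ, Multiset.add_cons]
    cases k with
    | zero => simp [Multiset.esymm]
    | succ k => rw [esymm_cons_succ', ih]; simp

lemma maclaurin_pad (M : Multiset ℝ) (hM : ∀ a ∈ M, 0 ≤ a) (w : ℕ) (hw : M.card ≤ w) (k : ℕ) :
    (M.esymm (k+1) / (w.choose (k+1) : ℝ)) ^ k ≤ (M.esymm k / (w.choose k : ℝ)) ^ (k+1) := by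
  have h := maclaurin (M + Multiset.replicate (w - M.card) 0) (by
    intro a ha
    rcases Multiset.mem_add.1 ha with h | h
    · exact hM a h
    · exact (Multiset.eq_of_mem_replicate h).ge) k
  simp only [pmean, esymm_pad, Multiset.card_add, Multiset.card_replicate] at h
  rwa [Nat.add_sub_cancel' hw] at h

/-- weighted clique count -/
noncomputable def hw {n : ℕ} (G : SimpleGraph (Fin n)) [DecidableRel G.Adj] (t : ℕ)
    (x : Fin n → ℝ) : ℝ := ∑ S ∈ G.cliqueFinset t, ∏ i ∈ S, x i

/-- coefficient of the weight of `u` -/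
noncomputable def hcoef {n : ℕ} (G : SimpleGraph (Fin n)) [DecidableRel G.Adj] (t : ℕ)
    (x : Fin n → ℝ) (u : Fin n) : ℝ :=
  ∑ S ∈ G.cliqueFinset t, if u ∈ S then ∏ i ∈ S.erase u, x i else 0

lemma hcoef_nonneg {n : ℕ} (G : SimpleGraph (Fin n)) [DecidableRel G.Adj] (t : ℕ)
    (x : Fin n → ℝ) (hx : ∀ i, 0 ≤ x i) (u : Fin n) : 0 ≤ hcoef G t x u := by
  refine Finset.sum_nonneg fun S _ => ?_
  split_ifs
  · exact Finset.prod_nonneg fun i _ => hx i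
  · exact le_rfl

lemma hcoef_zero {n : ℕ} (G : SimpleGraph (Fin n)) [DecidableRel G.Adj] (s : ℕ) (hs : 1 ≤ s)
    (x : Fin n → ℝ) (hx : ∀ i, 0 ≤ x i) (u : Fin n) (h : hcoef G s x u = 0) :
    hcoef G (s + 1) x u = 0 := by
  have hnn : ∀ S ∈ G.cliqueFinset s, 0 ≤ (if u ∈ S then ∏ i ∈ S.erase u, x i else 0) := by
    intro S _
    split_ifs
    · exact Finset.prod_nonneg fun i _ => hx i
    · exact le_rfl
  have h0 := (Finset.sum_eq_zero_iff_of_nonneg hnn).1 h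
  refine Finset.sum_eq_zero fun S hS => ?_
  split_ifs with hu
  · rw [SimpleGraph.mem_cliqueFinset_iff] at hS
    have hcard := hS.card_eq
    have : 0 < #(S.erase u) := by rw [Finset.card_erase_of_mem hu]; omega
    obtain ⟨w, hw⟩ := Finset.card_pos.1 this
    have hwS := Finset.mem_of_mem_erase hw
    have hwu := Finset.ne_of_mem_erase hw
    have hT : S.erase w ∈ G.cliqueFinset s := by
      rw [SimpleGraph.mem_cliqueFinset_iff, SimpleGraph.isNClique_iff]
      refine ⟨hS.isClique.subset (by exact_mod_cast Finset.erase_subset w S), ?_⟩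
      rw [Finset.card_erase_of_mem hwS]; omega
    have := h0 _ hT
    rw [if_pos (Finset.mem_erase.2 ⟨hwu.symm, hu⟩)] at this
    rw [← Finset.mul_prod_erase _ _ hw, Finset.erase_right_comm, this, mul_zero]
  · rfl

lemma hw_affine {n : ℕ} (G : SimpleGraph (Fin n)) [DecidableRel G.Adj] (t : ℕ)
    (x : Fin n → ℝ) (u v : Fin n) (huv : u ≠ v) (hadj : ¬ G.Adj u v) (a b : ℝ) :
    hw G t (Function.update (Function.update x u a) v b) =
      (∑ S ∈ G.cliqueFinset t, if u ∈ S ∨ v ∈ S then 0 else ∏ i ∈ S, x i)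
        + a * hcoef G t x u + b * hcoef G t x v := by
  simp only [hw, hcoef, Finset.mul_sum, ← Finset.sum_add_distrib]
  refine Finset.sum_congr rfl fun S hS => ?_
  rw [SimpleGraph.mem_cliqueFinset_iff] at hS
  by_cases hu : u ∈ S
  · have hv : v ∉ S := fun hv => hadj (hS.isClique hu hv huv)
    simp only [hu, hv, if_true, if_false, true_or, mul_zero, zero_add, add_zero]
    rw [← Finset.mul_prod_erase _ _ hu, Function.update_of_ne huv, Function.update_self]
    congr 1
    refine Finset.prod_congr rfl fun i hi => ?_
    rw [Function.update_of_ne, Function.update_of_ne]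
    · exact Finset.ne_of_mem_erase hi
    · rintro rfl; exact hv (Finset.mem_of_mem_erase hi)
  · by_cases hv : v ∈ S
    · simp only [hu, hv, if_true, if_false, or_true, mul_zero, zero_add]
      rw [← Finset.mul_prod_erase _ _ hv, Function.update_self]
      congr 1
      refine Finset.prod_congr rfl fun i hi => ?_
      rw [Function.update_of_ne, Function.update_of_ne]
      · rintro rfl; exact hu (Finset.mem_of_mem_erase hi)
      · exact Finset.ne_of_mem_erase hi
    · simp only [hu, hv, if_false, or_self, mul_zero, add_zero]
      refine Finset.prod_congr rfl fun i hi => ?_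
      rw [Function.update_of_ne, Function.update_of_ne]
      · rintro rfl; exact hu hi
      · rintro rfl; exact hv hi

lemma hw_nonneg {n : ℕ} (G : SimpleGraph (Fin n)) [DecidableRel G.Adj] (t : ℕ)
    (x : Fin n → ℝ) (hx : ∀ i, 0 ≤ x i) : 0 ≤ hw G t x :=
  Finset.sum_nonneg fun _ _ => Finset.prod_nonneg fun i _ => hx i

/-- Moving weights along a line. -/
lemma shift_exists (a b B C B' C' : ℝ) (ha : 0 < a) (hb : 0 < b) (hB : 0 ≤ B) (hC : 0 ≤ C)
    (hB' : B = 0 → B' = 0) (hC' : C = 0 → C' = 0) :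
    ∃ a' b' : ℝ, 0 ≤ a' ∧ 0 ≤ b' ∧ (a' = 0 ∨ b' = 0) ∧
      a' * B + b' * C = a * B + b * C ∧ a * B' + b * C' ≤ a' * B' + b' * C' := by
  rcases hB.eq_or_lt with h | h
  · refine ⟨0, b, le_rfl, hb.le, Or.inl rfl, ?_, ?_⟩
    · rw [← h]; ring
    · rw [hB' h.symm]; simp
  rcases hC.eq_or_lt with h' | h'
  · refine ⟨a, 0, ha.le, le_rfl, Or.inr rfl, ?_, ?_⟩
    · rw [← h']; ring
    · rw [hC' h'.symm]; simp
  rcases le_total (B' * C) (C' * B) with hd | hd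
  · refine ⟨0, b + a * B / C, le_rfl, by positivity, Or.inl rfl, by field_simp; ring, ?_⟩
    have : B' ≤ B / C * C' := by rw [div_mul_eq_mul_div, le_div_iff₀ h']; linarith
    have := mul_le_mul_of_nonneg_left this ha.le
    calc _ ≤ a * (B / C * C') + b * C' := by linarith
      _ = _ := by ring
  · refine ⟨a + b * C / B, 0, by positivity, le_rfl, Or.inr rfl, by field_simp; ring, ?_⟩
    have : C' ≤ C / B * B' := by rw [div_mul_eq_mul_div, le_div_iff₀ h]; linarith
    have := mul_le_mul_of_nonneg_left this hb.le
    calc _ ≤ a * B' + b * (C / B * B') := by linarith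
      _ = _ := by ring

lemma hw_clique {n : ℕ} (G : SimpleGraph (Fin n)) [DecidableRel G.Adj] (t : ℕ)
    (x : Fin n → ℝ) (A : Finset (Fin n)) (hA : ∀ i, i ∉ A → x i = 0)
    (hc : G.IsClique (A : Set (Fin n))) : hw G t x = (A.val.map x).esymm t := by
  rw [Finset.esymm_map_val, hw]
  symm
  refine Finset.sum_subset ?_ ?_
  · intro S hS
    rw [Finset.mem_powersetCard] at hS
    rw [SimpleGraph.mem_cliqueFinset_iff, SimpleGraph.isNClique_iff]
    exact ⟨hc.subset (by exact_mod_cast hS.1), hS.2⟩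
  · intro S hS hn
    rw [SimpleGraph.mem_cliqueFinset_iff] at hS
    have : ¬ S ⊆ A := fun h => hn (Finset.mem_powersetCard.2 ⟨h, hS.card_eq⟩)
    obtain ⟨i, hi, hiA⟩ := Finset.not_subset.1 this
    exact Finset.prod_eq_zero hi (hA i hiA)

lemma weighted {n : ℕ} (G : SimpleGraph (Fin n)) [DecidableRel G.Adj] (s : ℕ) (hs : 1 ≤ s)
    (m : ℕ) (x : Fin n → ℝ) (hx : ∀ i, 0 ≤ x i)
    (hm : #(Finset.univ.filter fun i => x i ≠ 0) = m) :
    (hw G (s+1) x / (G.cliqueNum.choose (s+1) : ℝ)) ^ s ≤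
      (hw G s x / (G.cliqueNum.choose s : ℝ)) ^ (s+1) := by
  induction m using Nat.strong_induction_on generalizing x with
  | _ m ih =>
    set A := Finset.univ.filter fun i => x i ≠ 0 with hAdef
    by_cases hc : G.IsClique (A : Set (Fin n))
    · have hA : ∀ i, i ∉ A → x i = 0 := by intro i hi; simpa [hAdef] using hi
      rw [hw_clique G _ x A hA hc, hw_clique G _ x A hA hc]
      refine maclaurin_pad _ ?_ _ ?_ s
      · intro a ha
        obtain ⟨i, _, rfl⟩ := Multiset.mem_map.1 ha
        exact hx i
      · rw [Multiset.card_map]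
        exact SimpleGraph.IsClique.card_le_cliqueNum (tc := hc)
    · have : ∃ u ∈ A, ∃ v ∈ A, u ≠ v ∧ ¬ G.Adj u v := by
        by_contra hcon
        push Not at hcon
        exact hc fun u hu v hv huv => hcon u hu v hv huv
      obtain ⟨u, hu, v, hv, huv, hadj⟩ := this
      have hxu : x u ≠ 0 := by simpa [hAdef] using hu
      have hxv : x v ≠ 0 := by simpa [hAdef] using hv
      obtain ⟨a, b, ha, hb, hab, e1, e2⟩ := shift_exists (x u) (x v) (hcoef G s x u)
        (hcoef G s x v) (hcoef G (s+1) x u) (hcoef G (s+1) x v)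
        ((hx u).lt_of_ne' hxu) ((hx v).lt_of_ne' hxv) (hcoef_nonneg G s x hx u)
        (hcoef_nonneg G s x hx v) (hcoef_zero G s hs x hx u) (hcoef_zero G s hs x hx v)
      have hself : Function.update (Function.update x u (x u)) v (x v) = x := by simp
      have f1 := hw_affine G s x u v huv hadj (x u) (x v)
      have f2 := hw_affine G (s+1) x u v huv hadj (x u) (x v)
      rw [hself] at f1 f2
      have g1 := hw_affine G s x u v huv hadj a b
      have g2 := hw_affine G (s+1) x u v huv hadj a b
      set y := Function.update (Function.update x u a) v b with hy
      have hyv : y v = b := by simp [hy]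
      have hyu : y u = a := by simp [hy, Function.update_of_ne huv]
      have hyi : ∀ i, i ≠ u → i ≠ v → y i = x i := by
        intro i h1 h2; simp [hy, Function.update_of_ne h1, Function.update_of_ne h2]
      have hy0 : ∀ i, 0 ≤ y i := by
        intro i
        by_cases h1 : i = u
        · rw [h1, hyu]; exact ha
        by_cases h2 : i = v
        · rw [h2, hyv]; exact hb
        rw [hyi i h1 h2]; exact hx i
      have hlt : #(Finset.univ.filter fun i => y i ≠ 0) < m := by
        rw [← hm]
        refine Finset.card_lt_card ?_
        rw [Finset.ssubset_iff_subset_ne]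
        constructor
        · intro i hi
          by_cases h1 : i = u
          · rw [h1]; exact hu
          by_cases h2 : i = v
          · rw [h2]; exact hv
          simpa [hAdef, hyi i h1 h2] using hi
        · intro heq
          rcases hab with h | h
          · rw [← heq] at hu; simp [hyu, h] at hu
          · rw [← heq] at hv; simp [hyv, h] at hv
      have key := ih _ hlt y hy0 rfl
      have k1 : hw G s y = hw G s x := by rw [f1, g1]; linarith
      have k2 : hw G (s+1) x ≤ hw G (s+1) y := by rw [f2, g2]; linarith
      rw [k1] at key
      refine le_trans ?_ key
      have := hw_nonneg G (s+1) x hx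
      gcongr

/-- The combinatorial form of the extended Maclaurin inequality:
for a graph `G` with clique number `ω` and `1 ≤ s < ω`,
`(k_{s+1}(G)/C(ω,s+1))^{1/(s+1)} ≤ (k_s(G)/C(ω,s))^{1/s}`,
where `k_s(G)` is the number of `s`-cliques of `G`. -/
theorem clique_count_maclaurin {n : ℕ} (G : SimpleGraph (Fin n)) [DecidableRel G.Adj]
    (s : ℕ) (hs : 1 ≤ s) (hsw : s < G.cliqueNum) :
    ((#(G.cliqueFinset (s + 1)) : ℝ) / (G.cliqueNum.choose (s + 1) : ℝ))
        ^ ((1 : ℝ) / ((s : ℝ) + 1))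
      ≤ ((#(G.cliqueFinset s) : ℝ) / (G.cliqueNum.choose s : ℝ)) ^ ((1 : ℝ) / (s : ℝ)) := by

  have h := weighted G s hs _ (fun _ => 1) (fun _ => zero_le_one) rfl
  simp only [hw, Finset.prod_const_one, Finset.sum_const, nsmul_eq_mul, mul_one] at h
  set p : ℝ := (#(G.cliqueFinset (s + 1)) : ℝ) / (G.cliqueNum.choose (s + 1) : ℝ) with hp
  set q : ℝ := (#(G.cliqueFinset s) : ℝ) / (G.cliqueNum.choose s : ℝ) with hq
  have hp0 : 0 ≤ p := by positivity
  have hq0 : 0 ≤ q := by positivity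
  have hs0 : (0:ℝ) < s := by exact_mod_cast hs
  have h2 := Real.rpow_le_rpow (by positivity) h (show 0 ≤ 1 / ((s:ℝ) * (s + 1)) by positivity)
  rw [← Real.rpow_natCast, ← Real.rpow_natCast, ← Real.rpow_mul hp0, ← Real.rpow_mul hq0] at h2
  have e1 : (s:ℝ) * (1 / ((s:ℝ) * (s + 1))) = 1 / ((s:ℝ) + 1) := by field_simp
  have e2 : ((s + 1 : ℕ) : ℝ) * (1 / ((s:ℝ) * (s + 1))) = 1 / (s:ℝ) := by
    push_cast; field_simp
  rwa [e1, e2] at h2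
end

section
/- Let G be a simple graph on vertex set [n] with clique number ω ≥ 2. Then for every x = (x_1,...,x_n) ∈ ℝ^n with x ≥ 0, one has Σ_{{i,j} ∈ E(G)} x_i x_j ≤ (1 - 1/ω)·(x_1 + ··· + x_n)^2 / 2; equivalently ρ_1(G,x)^2 ≥ ρ_2(G,x). -/
open Finset

open Matrix in
lemma ms_aux {n : ℕ} (G : SimpleGraph (Fin n)) [DecidableRel G.Adj]
    (hw : 2 ≤ G.cliqueNum) : ∀ (k : ℕ) (x : Fin n → ℝ), (∀ i, 0 ≤ x i) →
    #{i | x i ≠ 0} = k →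
    x ⬝ᵥ (G.adjMatrix ℝ *ᵥ x) ≤ (1 - 1 / (G.cliqueNum : ℝ)) * (∑ i, x i) ^ 2 := by
  intro k
  induction k using Nat.strong_induction_on with
  | _ k ih =>
  intro x hx hk
  have hw0 : (0 : ℝ) < G.cliqueNum := by exact_mod_cast (by omega : 0 < G.cliqueNum)
  by_cases hc : G.IsClique (({i | x i ≠ 0} : Finset (Fin n)) : Set (Fin n))
  · have hcard : #{i | x i ≠ 0} ≤ G.cliqueNum := hc.card_le_cliqueNum
    have hQ : x ⬝ᵥ (G.adjMatrix ℝ *ᵥ x) = (∑ i, x i) ^ 2 - ∑ i, x i ^ 2 := by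
      rw [sq, Finset.sum_mul, ← Finset.sum_sub_distrib]
      unfold dotProduct
      refine Finset.sum_congr rfl fun i _ => ?_
      by_cases hi : x i = 0
      · simp [hi]
      have : (G.adjMatrix ℝ *ᵥ x) i = ∑ j, x j - x i := by
        have h1 : x i = ∑ j, if i = j then x j else 0 := by simp
        conv_rhs => rw [h1]
        rw [← Finset.sum_sub_distrib]
        unfold mulVec dotProduct
        refine Finset.sum_congr rfl fun j _ => ?_
        by_cases hj : x j = 0
        · simp [hj]
        by_cases hij : i = j
        · subst hij; simp
        · have : G.Adj i j := hc (by simpa using hi) (by simpa using hj) hij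
          simp [this, hij]
      rw [this]; ring
    have hcs : (∑ i, x i) ^ 2 ≤ G.cliqueNum * ∑ i, x i ^ 2 := by
      have h1 := sq_sum_le_card_mul_sum_sq (s := ({i | x i ≠ 0} : Finset (Fin n))) (f := x)
      have e1 : ∑ i with x i ≠ 0, x i = ∑ i, x i := Finset.sum_filter_ne_zero _
      have e2 : ∑ i with x i ≠ 0, x i ^ 2 = ∑ i, x i ^ 2 := by
        apply Finset.sum_filter_of_ne
        intro i _ h h0
        simp [h0] at h
      rw [e1, e2] at h1
      refine h1.trans ?_
      have : (0:ℝ) ≤ ∑ i, x i ^ 2 := Finset.sum_nonneg fun i _ => sq_nonneg _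
      gcongr
    have : (∑ i, x i) ^ 2 / G.cliqueNum ≤ ∑ i, x i ^ 2 := by
      rw [div_le_iff₀ hw0]; linarith
    rw [hQ]
    have e : (1 - 1 / (G.cliqueNum : ℝ)) * (∑ i, x i) ^ 2
      = (∑ i, x i) ^ 2 - (∑ i, x i) ^ 2 / G.cliqueNum := by ring
    linarith
  · have key : ∃ u v, x u ≠ 0 ∧ x v ≠ 0 ∧ u ≠ v ∧ ¬ G.Adj u v ∧
        (G.adjMatrix ℝ *ᵥ x) v ≤ (G.adjMatrix ℝ *ᵥ x) u := by
      simp only [SimpleGraph.IsClique, Set.Pairwise] at hc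
      push Not at hc
      obtain ⟨u, hu, v, hv, huv, hadj⟩ := hc
      rcases le_total ((G.adjMatrix ℝ *ᵥ x) v) ((G.adjMatrix ℝ *ᵥ x) u) with h | h
      · exact ⟨u, v, by simpa using hu, by simpa using hv, huv, hadj, h⟩
      · exact ⟨v, u, by simpa using hv, by simpa using hu, huv.symm,
          fun h => hadj h.symm, h⟩
    obtain ⟨u, v, hu, hv, huv, hadj, hle⟩ := key
    have hadj' : ¬ G.Adj v u := fun h => hadj h.symm
    set d : Fin n → ℝ := Pi.single u (x v) - Pi.single v (x v) with hd
    have hyu : (x + d) u = x u + x v := by simp [hd, huv]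
    have hyv : (x + d) v = 0 := by simp [hd, huv.symm]
    have hyo : ∀ i, i ≠ u → i ≠ v → (x + d) i = x i := by
      intro i h1 h2; simp [hd, h1, h2]
    have hlt : #{i | (x + d) i ≠ 0} < k := by
      rw [← hk]
      apply Finset.card_lt_card
      rw [Finset.ssubset_iff_of_subset]
      · exact ⟨v, by simpa using hv, by simp [hd, huv.symm]⟩
      · intro i hi
        have hi := (Finset.mem_filter.1 hi).2
        refine Finset.mem_filter.2 ⟨Finset.mem_univ _, ?_⟩
        by_cases h1 : i = u
        · rw [h1]; exact hu
        by_cases h2 : i = v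
        · rw [h2]; exact hv
        rwa [hyo i h1 h2] at hi
    have hy0 : ∀ i, 0 ≤ (x + d) i := by
      intro i
      by_cases h1 : i = u
      · rw [h1, hyu]; exact add_nonneg (hx _) (hx _)
      by_cases h2 : i = v
      · rw [h2, hyv]
      rw [hyo i h1 h2]; exact hx i
    have := ih _ hlt (x + d) hy0 rfl
    have hs : ∑ i, (x + d) i = ∑ i, x i := by
      simp [hd, Finset.sum_add_distrib]
    rw [hs] at this
    refine le_trans ?_ this
    have hsym : x ⬝ᵥ (G.adjMatrix ℝ *ᵥ d) = d ⬝ᵥ (G.adjMatrix ℝ *ᵥ x) := by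
      rw [dotProduct_mulVec, ← mulVec_transpose, G.transpose_adjMatrix, dotProduct_comm]
    have hdx : d ⬝ᵥ (G.adjMatrix ℝ *ᵥ x)
        = x v * ((G.adjMatrix ℝ *ᵥ x) u - (G.adjMatrix ℝ *ᵥ x) v) := by
      rw [hd, sub_dotProduct, single_dotProduct, single_dotProduct]; ring
    have hdd : d ⬝ᵥ (G.adjMatrix ℝ *ᵥ d) = 0 := by
      rw [hd, sub_dotProduct, single_dotProduct, single_dotProduct, mulVec_sub]
      simp [hadj, hadj', mulVec_single]
    rw [mulVec_add, dotProduct_add, add_dotProduct, add_dotProduct, hsym, hdd, hdx]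
    have := mul_nonneg (hx v) (sub_nonneg.2 hle)
    linarith

open Matrix in
lemma ms_sum {n : ℕ} (G : SimpleGraph (Fin n)) [DecidableRel G.Adj] (x : Fin n → ℝ) :
    x ⬝ᵥ (G.adjMatrix ℝ *ᵥ x) = 2 * ∑ S ∈ G.cliqueFinset 2, ∏ i ∈ S, x i := by
  have h1 : x ⬝ᵥ (G.adjMatrix ℝ *ᵥ x)
      = ∑ p : Fin n × Fin n with G.Adj p.1 p.2, x p.1 * x p.2 := by
    rw [Finset.sum_filter, Fintype.sum_prod_type]
    unfold dotProduct mulVec dotProduct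
    refine Finset.sum_congr rfl fun i _ => ?_
    rw [Finset.mul_sum]
    refine Finset.sum_congr rfl fun j _ => ?_
    by_cases h : G.Adj i j <;> simp [h]
  rw [h1, ← Finset.sum_fiberwise_of_maps_to (t := G.cliqueFinset 2)
    (g := fun p => ({p.1, p.2} : Finset (Fin n))), Finset.mul_sum]
  · refine Finset.sum_congr rfl fun S hS => ?_
    rw [SimpleGraph.mem_cliqueFinset_iff, SimpleGraph.isNClique_iff, Finset.card_eq_two] at hS
    obtain ⟨hS, a, b, hab, rfl⟩ := hS
    have hadj : G.Adj a b := hS (by simp) (by simp) hab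
    have : ({p ∈ ({p : Fin n × Fin n | G.Adj p.1 p.2} : Finset _) |
        ({p.1, p.2} : Finset (Fin n)) = {a, b}} : Finset _) = {(a, b), (b, a)} := by
      ext ⟨i, j⟩
      simp only [Finset.mem_filter, Finset.mem_univ, true_and, Finset.mem_insert,
        Finset.mem_singleton, Prod.mk.injEq]
      constructor
      · rintro ⟨hij, h⟩
        have hne := hij.ne
        have hi : i ∈ ({a, b} : Finset (Fin n)) := h ▸ (by simp)
        have hj : j ∈ ({a, b} : Finset (Fin n)) := h ▸ (by simp)
        simp only [Finset.mem_insert, Finset.mem_singleton] at hi hj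
        grind
      · rintro (⟨rfl, rfl⟩ | ⟨rfl, rfl⟩)
        · exact ⟨hadj, rfl⟩
        · exact ⟨hadj.symm, Finset.pair_comm _ _⟩
    rw [this, Finset.sum_pair (by simp [hab]), Finset.prod_pair hab]
    ring
  · rintro ⟨i, j⟩ h
    have h : G.Adj i j := by simpa using h
    rw [SimpleGraph.mem_cliqueFinset_iff, SimpleGraph.isNClique_iff]
    exact ⟨by simp [SimpleGraph.isClique_iff, Set.pairwise_insert, h, h.symm],
      Finset.card_pair h.ne⟩

/-- Motzkin–Straus-type inequality: if `G` has clique number `ω ≥ 2` and `x ≥ 0`, then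
`Σ_{{i,j} ∈ E(G)} x_i x_j ≤ (1 - 1/ω)·(x_1 + ⋯ + x_n)^2 / 2`.
The edge sum is written as the sum over `2`-cliques of the product of the coordinates. -/
theorem motzkin_straus_ineq {n : ℕ} (G : SimpleGraph (Fin n)) [DecidableRel G.Adj]
    (hw : 2 ≤ G.cliqueNum) (x : Fin n → ℝ) (hx : ∀ i, 0 ≤ x i) :
    ∑ S ∈ G.cliqueFinset 2, ∏ i ∈ S, x i
      ≤ (1 - 1 / (G.cliqueNum : ℝ)) * (∑ i, x i) ^ 2 / 2 := by
  have h := ms_aux G hw _ x hx rfl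
  rw [ms_sum] at h
  linarith
end

section
/- Let G be a simple graph on vertex set [n] with clique number ω, let 1 ≤ s < ω, let x = (x_1,...,x_n) ∈ ℝ^n with all coordinates strictly positive, and let R_s be the set of vertices of G contained in some s-clique. Then ρ_{s+1}(G,x)^{1/(s+1)} = ρ_s(G,x)^{1/s} holds if and only if the subgraph of G induced by R_s is a complete ω-partite graph and, denoting its vertex classes by V_1,...,V_ω, one has Σ_{v ∈ V_i} x_v = Σ_{v ∈ V_j} x_v for all 1 ≤ i < j ≤ ω. -/
open Finset

/-- The multi-affine form attached to a set family. -/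
def famE {ι : Type*} (F : Finset (Finset ι)) (x : ι → ℝ) : ℝ := ∑ S ∈ F, ∏ i ∈ S, x i

lemma famE_nonneg {ι : Type*} (F : Finset (Finset ι)) (x : ι → ℝ) (hx : ∀ i, 0 ≤ x i) :
    0 ≤ famE F x :=
  Finset.sum_nonneg fun _ _ => Finset.prod_nonneg fun i _ => hx i

lemma famE_pos {ι : Type*} (F : Finset (Finset ι)) (x : ι → ℝ) (hx : ∀ i, 0 ≤ x i)
    (S : Finset ι) (hS : S ∈ F) (h : ∀ i ∈ S, 0 < x i) : 0 < famE F x :=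
  Finset.sum_pos' (fun _ _ => Finset.prod_nonneg fun i _ => hx i)
    ⟨S, hS, Finset.prod_pos h⟩

lemma famE_exists {ι : Type*} (F : Finset (Finset ι)) (x : ι → ℝ) (hx : ∀ i, 0 ≤ x i)
    (h : famE F x ≠ 0) : ∃ S ∈ F, ∀ i ∈ S, 0 < x i := by
  obtain ⟨S, hS, h⟩ := Finset.exists_ne_zero_of_sum_ne_zero h
  refine ⟨S, hS, fun i hi => lt_of_le_of_ne (hx i) fun h0 => h ?_⟩
  exact Finset.prod_eq_zero hi h0.symm

/-- normalized elementary symmetric functions -/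
noncomputable def nP {ι : Type*} (N : ℕ) (K : Finset ι) (x : ι → ℝ) (t : ℕ) : ℝ :=
  famE (Finset.powersetCard t K) x / (N.choose t : ℝ)

lemma nP_nonneg {ι : Type*} (N : ℕ) (K : Finset ι) (x : ι → ℝ) (hx : ∀ i, 0 ≤ x i) (t : ℕ) :
    0 ≤ nP N K x t := div_nonneg (famE_nonneg _ _ hx) (Nat.cast_nonneg _)

lemma nP_zero {ι : Type*} (N : ℕ) (K : Finset ι) (x : ι → ℝ) : nP N K x 0 = 1 := by
  simp [nP, famE]

lemma nP_eq_zero_succ {ι : Type*} (N : ℕ) (K : Finset ι) (x : ι → ℝ) (hx : ∀ i, 0 ≤ x i) (t : ℕ)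
    (ht : t ≤ N) (h : nP N K x t = 0) : nP N K x (t + 1) = 0 := by
  by_contra h1
  have h2 : famE (Finset.powersetCard (t+1) K) x ≠ 0 := by
    intro h0; apply h1; simp [nP, h0]
  obtain ⟨S, hS, hp⟩ := famE_exists _ _ hx h2
  rw [Finset.mem_powersetCard] at hS
  obtain ⟨T, hT, hc⟩ := Finset.exists_subset_card_eq (show t ≤ S.card by omega)
  have : 0 < famE (Finset.powersetCard t K) x :=
    famE_pos _ _ hx T (Finset.mem_powersetCard.2 ⟨hT.trans hS.1, hc⟩) fun i hi => hp i (hT hi)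
  have hch : (0:ℝ) < (N.choose t : ℝ) := by exact_mod_cast Nat.choose_pos ht
  have := div_pos this hch
  simp only [nP] at h
  linarith

lemma esymm_insert {ι : Type*} [DecidableEq ι] (K : Finset ι) (x : ι → ℝ) (a : ι) (ha : a ∉ K)
    (t : ℕ) : famE (Finset.powersetCard (t+1) (insert a K)) x =
      famE (Finset.powersetCard (t+1) K) x + x a * famE (Finset.powersetCard t K) x := by
  have hn : ∀ S ∈ Finset.powersetCard t K, a ∉ S := fun S hS h =>
    ha ((Finset.mem_powersetCard.1 hS).1 h)
  unfold famE
  rw [Finset.powersetCard_succ_insert ha, Finset.sum_union]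
  · congr 1
    rw [Finset.sum_image, Finset.mul_sum]
    · exact Finset.sum_congr rfl fun S hS => Finset.prod_insert (hn S hS)
    · intro S hS T hT h
      rw [← Finset.erase_insert (hn S hS), ← Finset.erase_insert (hn T hT), h]
  · rw [Finset.disjoint_left]
    intro S hS hS'
    obtain ⟨T, hT, rfl⟩ := Finset.mem_image.1 hS'
    exact ha ((Finset.mem_powersetCard.1 hS).1 (Finset.mem_insert_self _ _))

lemma nP_insert {ι : Type*} [DecidableEq ι] (N : ℕ) (K : Finset ι) (x : ι → ℝ) (a : ι)
    (ha : a ∉ K) (hK : K.card ≤ N) (k : ℕ) (hk : k ≤ N) :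
    ((N:ℝ) + 1) * nP (N+1) (insert a K) x (k+1) =
      ((N:ℝ) - k) * nP N K x (k+1) + ((k:ℝ) + 1) * x a * nP N K x k := by
  have h1 : ((N:ℝ) + 1) * (N.choose k) = ((N+1).choose (k+1)) * ((k:ℝ)+1) := by
    exact_mod_cast Nat.add_one_mul_choose_eq N k
  have c0 : (N.choose k : ℝ) ≠ 0 := by exact_mod_cast (Nat.choose_pos hk).ne'
  have c1 : ((N+1).choose (k+1) : ℝ) ≠ 0 := by
    exact_mod_cast (Nat.choose_pos (Nat.succ_le_succ hk)).ne'
  unfold nP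
  rw [esymm_insert K x a ha]
  have e1 : ((N:ℝ) + 1) * (x a * famE (Finset.powersetCard k K) x / ((N+1).choose (k+1))) =
    ((k:ℝ) + 1) * x a * (famE (Finset.powersetCard k K) x / (N.choose k)) := by
    field_simp
    linear_combination (x a * famE (Finset.powersetCard k K) x) * h1
  have e2 : ((N:ℝ) + 1) * (famE (Finset.powersetCard (k+1) K) x / ((N+1).choose (k+1))) =
    ((N:ℝ) - k) * (famE (Finset.powersetCard (k+1) K) x / (N.choose (k+1))) := by
    rcases hk.eq_or_lt with h | h
    · have : famE (Finset.powersetCard (k+1) K) x = 0 := by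
        rw [Finset.powersetCard_eq_empty.2 (by omega)]; simp [famE]
      simp [this]
    · have c2 : (N.choose (k+1) : ℝ) ≠ 0 := by exact_mod_cast (Nat.choose_pos h).ne'
      have h2 : (N.choose (k+1) : ℝ) * ((N:ℝ) + 1) = ((N+1).choose (k+1)) * ((N:ℝ) - k) := by
        have := Nat.choose_mul_succ_eq N (k+1)
        have h3 : N + 1 - (k+1) = N - k := by omega
        rw [h3] at this
        have h4 : (((N - k : ℕ)) : ℝ) = (N:ℝ) - k := by rw [Nat.cast_sub hk]
        rw [← h4]
        exact_mod_cast this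
      field_simp
      linear_combination (famE (Finset.powersetCard (k+1) K) x) * h2
  rw [add_div, mul_add, e1, e2]

lemma newton_alg (a d c0 c1 c2 k m : ℝ) (ha : 0 ≤ a) (hk : 0 ≤ k) (hm : 0 ≤ m)
    (h1 : k * (d * c1) ≤ k * c0 ^ 2) (h2 : m * (c0 * c2) ≤ m * c1 ^ 2)
    (h3 : k * m * (d * c2) ≤ k * m * (c0 * c1)) :
    ((m+2) * c0 + k * a * d) * (m * c2 + (k+2) * a * c1) ≤ ((m+1) * c1 + (k+1) * a * c0)^2 := by
  have s := sq_nonneg (c1 - a * c0)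
  have e1 := mul_le_mul_of_nonneg_left h1 (mul_nonneg (mul_nonneg ha ha) (by linarith : 0 ≤ k + 2))
  have e2 := mul_le_mul_of_nonneg_left h2 (by linarith : 0 ≤ m + 2)
  have e3 := mul_le_mul_of_nonneg_left h3 ha
  nlinarith

lemma newton_s5 {ι : Type*} [DecidableEq ι] (x : ι → ℝ) (hx : ∀ i, 0 ≤ x i) (K : Finset ι) :
    ∀ (N : ℕ), K.card ≤ N → ∀ k, k + 2 ≤ N →
      nP N K x k * nP N K x (k+2) ≤ nP N K x (k+1) ^ 2 := by
  induction K using Finset.induction_on with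
  | empty =>
    intro N _ k hk
    have : nP N (∅ : Finset ι) x (k+2) = 0 := by
      rw [nP, Finset.powersetCard_eq_empty.2 (by simp)]; simp [famE]
    rw [this]; simp; positivity
  | insert a K ha ih =>
    intro N' hN' k hk
    rw [Finset.card_insert_of_notMem ha] at hN'
    obtain ⟨N, rfl⟩ : ∃ N, N' = N + 1 := ⟨N' - 1, by omega⟩
    have hKN : K.card ≤ N := by omega
    have r2 := nP_insert N K x a ha hKN (k+1) (by omega)
    have r1 := nP_insert N K x a ha hKN k (by omega)
    set c := nP N K x with hc
    have hc0 : ∀ t, 0 ≤ c t := nP_nonneg N K x hx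
    -- the previous index
    obtain ⟨d, hd, r0⟩ : ∃ d : ℝ, (k = 0 ∨ (∃ j, k = j + 1 ∧ d = c j)) ∧
        ((N:ℝ) + 1) * nP (N+1) (insert a K) x k = ((N:ℝ) + 1 - k) * c k + k * x a * d := by
      rcases k with _ | j
      · exact ⟨0, Or.inl rfl, by rw [nP_zero, hc, nP_zero]; simp⟩
      · refine ⟨c j, Or.inr ⟨j, rfl, rfl⟩, ?_⟩
        rw [nP_insert N K x a ha hKN j (by omega)]
        push_cast; ring
    obtain ⟨m, rfl⟩ : ∃ m, N = k + m + 1 := ⟨N - k - 1, by omega⟩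
    have H2 : (m:ℝ) * (c k * c (k+2)) ≤ m * c (k+1) ^ 2 := by
      rcases m with _ | m
      · simp
      · exact mul_le_mul_of_nonneg_left (ih _ hKN k (by omega)) (Nat.cast_nonneg _)
    have H1 : (k:ℝ) * (d * c (k+1)) ≤ k * c k ^ 2 := by
      rcases hd with h | ⟨j, rfl, rfl⟩
      · simp [h]
      · exact mul_le_mul_of_nonneg_left (ih _ hKN j (by omega)) (Nat.cast_nonneg _)
    have H3 : (k:ℝ) * m * (d * c (k+2)) ≤ k * m * (c k * c (k+1)) := by
      rcases hd with h | ⟨j, rfl, rfl⟩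
      · simp [h]
      · rcases m with _ | m
        · simp
        refine mul_le_mul_of_nonneg_left ?_ (by positivity)
        have i1 := ih _ hKN j (by omega)
        have i2 := ih _ hKN (j+1) (by omega)
        rw [← hc] at i1 i2
        by_cases z1 : c (j+2) = 0
        · have z2 : c (j + 1 + 2) = 0 := nP_eq_zero_succ _ K x hx (j+2) (by omega) z1
          rw [z2, mul_zero]; exact mul_nonneg (hc0 _) (hc0 _)
        by_cases z0 : c (j+1) = 0
        · exact absurd (nP_eq_zero_succ _ K x hx (j+1) (by omega) z0) z1
        have p1 : 0 < c (j+2) := lt_of_le_of_ne (hc0 _) (Ne.symm z1)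
        have p0 : 0 < c (j+1) := lt_of_le_of_ne (hc0 _) (Ne.symm z0)
        have := mul_le_mul i1 i2 (mul_nonneg (hc0 _) (hc0 _)) (by positivity)
        have q : 0 < c (j+1) * c (j+2) := mul_pos p0 p1
        have : (c (j+1) * c (j+2)) * (c j * c (j+3)) ≤
            (c (j+1) * c (j+2)) * (c (j+1) * c (j+2)) := by
          calc _ = _ := by ring
            _ ≤ _ := this
            _ = _ := by ring
        exact le_of_mul_le_mul_left this q
    have key := newton_alg (x a) d (c k) (c (k+1)) (c (k+2)) k m (hx a) (by positivity)
      (by positivity) H1 H2 H3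
    have hN : (0:ℝ) < ((k + m + 1 : ℕ) : ℝ) + 1 := by positivity
    have hN2 := mul_pos hN hN
    refine le_of_mul_le_mul_left ?_ hN2
    calc _ = ((((k + m + 1 : ℕ) : ℝ) + 1) * nP (k + m + 1 + 1) (insert a K) x k) *
          ((((k + m + 1 : ℕ) : ℝ) + 1) * nP (k + m + 1 + 1) (insert a K) x (k+1+1)) := by ring
      _ ≤ ((((k + m + 1 : ℕ) : ℝ) + 1) * nP (k + m + 1 + 1) (insert a K) x (k+1)) ^ 2 := by
        rw [r0, r1, r2]
        push_cast
        convert key using 1 <;> ring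
      _ = _ := by ring

lemma maclaurin_s5 {ι : Type*} [DecidableEq ι] (x : ι → ℝ) (hx : ∀ i, 0 ≤ x i) (K : Finset ι)
    (N : ℕ) (hK : K.card ≤ N) (k : ℕ) (hk : k + 1 ≤ N) :
      nP N K x (k+1) ^ k ≤ nP N K x k ^ (k + 1) := by
  induction k with
  | zero => simp [nP_zero]
  | succ k ih =>
    have ih := ih (by omega)
    have nw := newton_s5 x hx K N hK k hk
    have h0 := nP_nonneg N K x hx
    by_cases hz : nP N K x (k+1) = 0
    · rw [nP_eq_zero_succ N K x hx (k+1) (by omega) hz]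
      rw [hz]; simp
    have hp : 0 < nP N K x (k+1) := lt_of_le_of_ne (h0 _) (Ne.symm hz)
    have h2 := pow_le_pow_left₀ (mul_nonneg (h0 _) (h0 _)) nw (k+1)
    rw [mul_pow] at h2
    have h3 := mul_le_mul_of_nonneg_right ih (pow_nonneg (h0 (k+2)) (k+1))
    refine le_of_mul_le_mul_left ?_ (pow_pos hp k)
    calc _ ≤ _ := h3
      _ ≤ _ := h2
      _ = _ := by ring

lemma maclaurin_eq {ι : Type*} [DecidableEq ι] (x : ι → ℝ) (hx : ∀ i, 0 ≤ x i) (K : Finset ι)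
    (N : ℕ) (hK : K.card ≤ N) (k : ℕ) (hk : k + 2 ≤ N)
    (hpos : 0 < nP N K x (k+2))
    (he : nP N K x (k+2) ^ (k+1) = nP N K x (k+1) ^ (k + 2)) :
      nP N K x 2 = nP N K x 1 ^ 2 := by
  induction k with
  | zero => simpa using he
  | succ k ih =>
    have h0 := nP_nonneg N K x hx
    have hp : 0 < nP N K x (k+2) := by
      refine lt_of_le_of_ne (h0 _) fun hz => ?_
      have := nP_eq_zero_succ N K x hx (k+2) (by omega) hz.symm
      linarith
    refine ih (by omega) hp ?_
    have nw := newton_s5 x hx K N hK (k+1) hk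
    refine le_antisymm (maclaurin_s5 x hx K N hK (k+1) (by omega)) ?_
    have h2 := pow_le_pow_left₀ (mul_nonneg (h0 _) (h0 _)) nw (k+2)
    rw [mul_pow] at h2
    have he' : nP N K x (k+1+2) ^ (k+2) = nP N K x (k+2) ^ (k+3) := he
    rw [he'] at h2
    refine le_of_mul_le_mul_right ?_ (pow_pos hp (k+3))
    calc _ ≤ _ := h2
      _ = _ := by ring

lemma esymm_one {ι : Type*} (K : Finset ι) (x : ι → ℝ) :
    famE (Finset.powersetCard 1 K) x = ∑ i ∈ K, x i := by
  simp [famE, Finset.powersetCard_one]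

lemma esymm_two {ι : Type*} [DecidableEq ι] (K : Finset ι) (x : ι → ℝ) :
    2 * famE (Finset.powersetCard 2 K) x = (∑ i ∈ K, x i) ^ 2 - ∑ i ∈ K, x i ^ 2 := by
  induction K using Finset.induction_on with
  | empty => rw [Finset.powersetCard_eq_empty.2 (by simp)]; simp [famE]
  | insert a K ha ih =>
    rw [esymm_insert K x a ha, esymm_one, Finset.sum_insert ha, Finset.sum_insert ha]
    linear_combination ih

lemma maclaurin_eq_const {ι : Type*} [DecidableEq ι] (x : ι → ℝ) (hx : ∀ i, 0 ≤ x i) (K : Finset ι)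
    (N : ℕ) (hK : K.card ≤ N) (k : ℕ) (hk1 : 1 ≤ k) (hk : k + 1 ≤ N)
    (hpos : 0 < nP N K x (k+1))
    (he : nP N K x (k+1) ^ k = nP N K x k ^ (k + 1)) :
      ∀ i ∈ K, ∀ j ∈ K, x i = x j := by
  obtain ⟨k, rfl⟩ : ∃ k', k = k' + 1 := ⟨k - 1, by omega⟩
  have h := maclaurin_eq x hx K N hK k hk hpos he
  have hN : (2:ℝ) ≤ N := by exact_mod_cast (show 2 ≤ N by omega)
  unfold nP at h
  rw [esymm_one, Nat.choose_one_right, Nat.cast_choose_two] at h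
  have h2 := esymm_two K x
  have h3 : (N:ℝ) * ∑ i ∈ K, x i ^ 2 = (∑ i ∈ K, x i) ^ 2 := by
    have : (N:ℝ) - 1 ≠ 0 := by linarith
    have : (N:ℝ) ≠ 0 := by linarith
    field_simp at h
    have h4 : (N:ℝ) * (2 * famE (Finset.powersetCard 2 K) x) = (∑ i ∈ K, x i) ^ 2 * (N - 1) := by
      linarith
    rw [h2] at h4
    linarith
  have hs : ∑ i ∈ K, ∑ j ∈ K, (x i - x j) ^ 2 ≤ 0 := by
    have : ∑ i ∈ K, ∑ j ∈ K, (x i - x j) ^ 2 =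
        2 * (K.card * ∑ i ∈ K, x i ^ 2) - 2 * (∑ i ∈ K, x i) ^ 2 := by
      simp only [sub_sq, Finset.sum_add_distrib, Finset.sum_sub_distrib, Finset.sum_const,
        nsmul_eq_mul, ← Finset.mul_sum, ← Finset.sum_mul]
      ring
    rw [this, ← h3]
    have : (K.card : ℝ) ≤ N := by exact_mod_cast hK
    have := mul_le_mul_of_nonneg_right this (Finset.sum_nonneg fun i (_ : i ∈ K) => sq_nonneg (x i))
    linarith
  have hz : ∑ i ∈ K, ∑ j ∈ K, (x i - x j) ^ 2 = 0 :=
    le_antisymm hs (Finset.sum_nonneg fun _ _ => Finset.sum_nonneg fun _ _ => sq_nonneg _)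
  intro i hi j hj
  have := (Finset.sum_eq_zero_iff_of_nonneg
    (fun _ _ => Finset.sum_nonneg fun _ _ => sq_nonneg _)).1 hz i hi
  have := (Finset.sum_eq_zero_iff_of_nonneg (fun _ _ => sq_nonneg _)).1 this j hj
  nlinarith [pow_eq_zero_iff (two_ne_zero) |>.1 this]

lemma famE_split {ι : Type*} [DecidableEq ι] (F : Finset (Finset ι)) (x : ι → ℝ) (i : ι) :
    famE F x = famE (F.nonMemberSubfamily i) x + x i * famE (F.memberSubfamily i) x := by
  unfold famE
  rw [← Finset.sum_filter_add_sum_filter_not F (fun S => i ∉ S)]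
  congr 1
  rw [Finset.mul_sum]
  symm
  refine Finset.sum_bij (fun S _ => insert i S) ?_ ?_ ?_ ?_
  · intro S hS
    rw [Finset.mem_memberSubfamily] at hS
    simp [hS.1]
  · intro S hS T hT h
    rw [Finset.mem_memberSubfamily] at hS hT
    rw [← Finset.erase_insert hS.2, ← Finset.erase_insert hT.2, h]
  · intro S hS
    simp only [not_not, Finset.mem_filter] at hS
    refine ⟨S.erase i, ?_, Finset.insert_erase hS.2⟩
    rw [Finset.mem_memberSubfamily]
    simp [Finset.insert_erase hS.2, hS.1]
  · intro S hS
    rw [Finset.mem_memberSubfamily] at hS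
    rw [Finset.prod_insert hS.2]

lemma famE_congr {ι : Type*} (F : Finset (Finset ι)) (x y : ι → ℝ)
    (h : ∀ S ∈ F, ∀ i ∈ S, x i = y i) : famE F x = famE F y :=
  Finset.sum_congr rfl fun S hS => Finset.prod_congr rfl fun i hi => h S hS i hi

lemma famE_update {ι : Type*} [DecidableEq ι] (F : Finset (Finset ι)) (x : ι → ℝ) (i : ι) (y : ℝ) :
    famE F (Function.update x i y) = famE F x + (y - x i) * famE (F.memberSubfamily i) x := by
  rw [famE_split F x i, famE_split F (Function.update x i y) i]
  have h1 : famE (F.nonMemberSubfamily i) (Function.update x i y) =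
      famE (F.nonMemberSubfamily i) x := by
    refine famE_congr _ _ _ fun S hS j hj => ?_
    rw [Finset.mem_nonMemberSubfamily] at hS
    exact Function.update_of_ne (fun h => by subst h; exact hS.2 hj) _ _
  have h2 : famE (F.memberSubfamily i) (Function.update x i y) =
      famE (F.memberSubfamily i) x := by
    refine famE_congr _ _ _ fun S hS j hj => ?_
    rw [Finset.mem_memberSubfamily] at hS
    exact Function.update_of_ne (fun h => by subst h; exact hS.2 hj) _ _
  rw [h1, h2, Function.update_self]
  ring

/-- `p` and `q` lie in no common member of `F` -/
def FSep {ι : Type*} (F : Finset (Finset ι)) (p q : ι) : Prop := ∀ S ∈ F, p ∈ S → q ∉ S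

lemma FSep.symm {ι : Type*} {F : Finset (Finset ι)} {p q : ι} (h : FSep F p q) : FSep F q p :=
  fun S hS h1 h2 => h S hS h2 h1

lemma FSep.member {ι : Type*} [DecidableEq ι] {F : Finset (Finset ι)} {p q : ι} (h : FSep F p q)
    (i : ι) : FSep (F.memberSubfamily i) p q := by
  intro S hS h1 h2
  rw [Finset.mem_memberSubfamily] at hS
  exact h _ hS.1 (Finset.mem_insert_of_mem h1) (Finset.mem_insert_of_mem h2)

lemma FSep.famE_zero {ι : Type*} [DecidableEq ι] {F : Finset (Finset ι)} {p q : ι} (h : FSep F p q)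
    (x : ι → ℝ) : famE ((F.memberSubfamily p).memberSubfamily q) x = 0 := by
  have : (F.memberSubfamily p).memberSubfamily q = ∅ := by
    rw [Finset.eq_empty_iff_forall_notMem]
    intro S hS
    rw [Finset.mem_memberSubfamily, Finset.mem_memberSubfamily] at hS
    exact h _ hS.1.1 (Finset.mem_insert_self _ _)
      (Finset.mem_insert_of_mem (Finset.mem_insert_self _ _))
  rw [this]; simp [famE]

lemma famE_update2 {ι : Type*} [DecidableEq ι] (F : Finset (Finset ι)) (x : ι → ℝ) (p q : ι)
    (hpq : p ≠ q) (α β : ℝ) :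
    famE F (Function.update (Function.update x p (x p + α)) q (x q + β)) =
      famE F x + α * famE (F.memberSubfamily p) x + β * famE (F.memberSubfamily q) x
        + α * β * famE ((F.memberSubfamily q).memberSubfamily p) x := by
  rw [famE_update, famE_update, famE_update, Function.update_of_ne hpq.symm]
  ring

/-- the shifted point -/
def shift {ι : Type*} [DecidableEq ι] (x : ι → ℝ) (p q : ι) (c d r : ℝ) : ι → ℝ :=
  Function.update (Function.update x p (x p + r * c)) q (x q + - (r * d))

lemma famE_shift {ι : Type*} [DecidableEq ι] (F : Finset (Finset ι)) (x : ι → ℝ) (p q : ι)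
    (hpq : p ≠ q) (h : FSep F p q) (c d r : ℝ) :
    famE F (shift x p q c d r) =
      famE F x + r * (c * famE (F.memberSubfamily p) x - d * famE (F.memberSubfamily q) x) := by
  rw [shift, famE_update2 F x p q hpq, h.symm.famE_zero]
  ring

lemma shift_q {ι : Type*} [DecidableEq ι] (x : ι → ℝ) (p q : ι) (c d r : ℝ) :
    shift x p q c d r q = x q - r * d := by simp [shift, sub_eq_add_neg]
lemma shift_p {ι : Type*} [DecidableEq ι] (x : ι → ℝ) (p q : ι) (hpq : p ≠ q) (c d r : ℝ) :
    shift x p q c d r p = x p + r * c := by simp [shift, hpq]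
lemma shift_o {ι : Type*} [DecidableEq ι] (x : ι → ℝ) (p q i : ι) (hp : i ≠ p) (hq : i ≠ q)
    (c d r : ℝ) : shift x p q c d r i = x i := by simp [shift, hp, hq]

/-- support -/
noncomputable def supp {n : ℕ} (x : Fin n → ℝ) : Finset (Fin n) :=
  Finset.univ.filter fun i => x i ≠ 0

lemma mem_supp {n : ℕ} (x : Fin n → ℝ) (i : Fin n) : i ∈ supp x ↔ x i ≠ 0 := by simp [supp]

lemma sep_cliques {n : ℕ} (G : SimpleGraph (Fin n)) [DecidableRel G.Adj] (t : ℕ) (p q : Fin n)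
    (hpq : p ≠ q) (h : ¬ G.Adj p q) : FSep (G.cliqueFinset t) p q := by
  intro S hS hp hq
  rw [SimpleGraph.mem_cliqueFinset_iff] at hS
  exact h (hS.isClique hp hq hpq)

lemma famE_clique {n : ℕ} (G : SimpleGraph (Fin n)) [DecidableRel G.Adj] (t : ℕ)
    (K : Finset (Fin n)) (hK : G.IsClique (K : Set (Fin n))) (x : Fin n → ℝ)
    (hx : ∀ i, i ∉ K → x i = 0) :
    famE (G.cliqueFinset t) x = famE (Finset.powersetCard t K) x := by
  unfold famE
  symm
  refine Finset.sum_subset ?_ ?_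
  · intro S hS
    rw [Finset.mem_powersetCard] at hS
    rw [SimpleGraph.mem_cliqueFinset_iff]
    exact ⟨hK.subset (by exact_mod_cast hS.1), hS.2⟩
  · intro S hS hS'
    rw [SimpleGraph.mem_cliqueFinset_iff] at hS
    have : ¬ S ⊆ K := fun h => hS' (Finset.mem_powersetCard.2 ⟨h, hS.card_eq⟩)
    obtain ⟨i, hi, hiK⟩ := Finset.not_subset.1 this
    exact Finset.prod_eq_zero hi (hx i hiK)

/-- if no `s`-clique through `q` is visible then no `(s+1)`-clique is -/
lemma member_zero {n : ℕ} (G : SimpleGraph (Fin n)) [DecidableRel G.Adj] (s : ℕ) (hs : 1 ≤ s)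
    (x : Fin n → ℝ) (hx : ∀ i, 0 ≤ x i) (q : Fin n)
    (h : famE ((G.cliqueFinset s).memberSubfamily q) x = 0) :
    famE ((G.cliqueFinset (s+1)).memberSubfamily q) x = 0 := by
  by_contra h1
  obtain ⟨S, hS, hp⟩ := famE_exists _ _ hx h1
  rw [Finset.mem_memberSubfamily, SimpleGraph.mem_cliqueFinset_iff] at hS
  have hc : S.card = s := by
    have := hS.1.card_eq
    rw [Finset.card_insert_of_notMem hS.2] at this
    omega
  obtain ⟨T, hT, hTc⟩ := Finset.exists_subset_card_eq (show s - 1 ≤ S.card by omega)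
  have hqT : q ∉ T := fun h => hS.2 (hT h)
  have : 0 < famE ((G.cliqueFinset s).memberSubfamily q) x := by
    refine famE_pos _ _ hx T ?_ fun i hi => hp i (hT hi)
    rw [Finset.mem_memberSubfamily, SimpleGraph.mem_cliqueFinset_iff]
    refine ⟨⟨hS.1.isClique.subset ?_, ?_⟩, hqT⟩
    · exact_mod_cast Finset.insert_subset_insert q hT
    · rw [Finset.card_insert_of_notMem hqT, hTc]; omega
  linarith

lemma not_clique_exists {n : ℕ} (G : SimpleGraph (Fin n)) (K : Finset (Fin n))
    (h : ¬ G.IsClique (K : Set (Fin n))) : ∃ p ∈ K, ∃ q ∈ K, p ≠ q ∧ ¬ G.Adj p q := by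
  by_contra hc
  push Not at hc
  exact h fun p hp q hq hpq => hc p hp q hq hpq

lemma graph_ineq {n : ℕ} (G : SimpleGraph (Fin n)) [DecidableRel G.Adj] (s : ℕ) (hs : 1 ≤ s)
    (hsw : s < G.cliqueNum) : ∀ (m : ℕ) (x : Fin n → ℝ) (_ : ∀ i, 0 ≤ x i)
      (_ : (supp x).card ≤ m),
    (famE (G.cliqueFinset (s+1)) x / (G.cliqueNum.choose (s+1) : ℝ)) ^ s ≤
      (famE (G.cliqueFinset s) x / (G.cliqueNum.choose s : ℝ)) ^ (s+1) := by
  intro m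
  induction m with
  | zero =>
    intro x hx hm
    have : supp x = ∅ := by simpa using hm
    have h0 : ∀ i, x i = 0 := fun i => by
      by_contra h; have := (mem_supp x i).2 h; simp_all
    rw [famE_clique G (s+1) ∅ (by simp) x (fun i _ => h0 i),
      famE_clique G s ∅ (by simp) x (fun i _ => h0 i)]
    exact maclaurin_s5 x hx ∅ _ (by simp) s hsw
  | succ m ih =>
    intro x hx hm
    by_cases hc : G.IsClique (supp x : Set (Fin n))
    · have h0 : ∀ i, i ∉ supp x → x i = 0 := fun i hi => by
        by_contra h; exact hi ((mem_supp x i).2 h)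
      rw [famE_clique G (s+1) _ hc x h0, famE_clique G s _ hc x h0]
      exact maclaurin_s5 x hx _ _ (SimpleGraph.IsClique.card_le_cliqueNum (tc := hc)) s hsw
    · -- reduction to a smaller support
      suffices H : ∃ y : Fin n → ℝ, (∀ i, 0 ≤ y i) ∧ supp y ⊂ supp x ∧
          famE (G.cliqueFinset s) y = famE (G.cliqueFinset s) x ∧
          famE (G.cliqueFinset (s+1)) x ≤ famE (G.cliqueFinset (s+1)) y by
        obtain ⟨y, hy, hss, hA, hB⟩ := H
        have := ih y hy (by have := Finset.card_lt_card hss; omega)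
        rw [hA] at this
        refine le_trans (pow_le_pow_left₀ ?_ ?_ s) this
        · exact div_nonneg (famE_nonneg _ _ hx) (Nat.cast_nonneg _)
        · exact div_le_div_of_nonneg_right hB (Nat.cast_nonneg _)
      -- killing an invisible vertex
      have kill : ∀ q ∈ supp x, famE ((G.cliqueFinset s).memberSubfamily q) x = 0 →
          ∃ y : Fin n → ℝ, (∀ i, 0 ≤ y i) ∧ supp y ⊂ supp x ∧
          famE (G.cliqueFinset s) y = famE (G.cliqueFinset s) x ∧
          famE (G.cliqueFinset (s+1)) x ≤ famE (G.cliqueFinset (s+1)) y := by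
        intro q hq hz
        refine ⟨Function.update x q 0, ?_, ?_, ?_, ?_⟩
        · intro i
          by_cases h : i = q
          · subst h; simp
          · rw [Function.update_of_ne h]; exact hx i
        · refine (Finset.ssubset_iff_of_subset ?_).2 ⟨q, hq, by simp [mem_supp]⟩
          intro i hi
          rw [mem_supp] at hi ⊢
          by_cases h : i = q
          · subst h; simp at hi
          · rwa [Function.update_of_ne h] at hi
        · rw [famE_update, hz]; ring
        · rw [famE_update, member_zero G s hs x hx q hz]; simp
      -- moving weight from `q` to `p`
      have move : ∀ p ∈ supp x, ∀ q ∈ supp x, p ≠ q → ¬ G.Adj p q →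
          0 < famE ((G.cliqueFinset s).memberSubfamily p) x →
          0 ≤ famE ((G.cliqueFinset s).memberSubfamily q) x *
            famE ((G.cliqueFinset (s+1)).memberSubfamily p) x -
            famE ((G.cliqueFinset s).memberSubfamily p) x *
            famE ((G.cliqueFinset (s+1)).memberSubfamily q) x →
          ∃ y : Fin n → ℝ, (∀ i, 0 ≤ y i) ∧ supp y ⊂ supp x ∧
          famE (G.cliqueFinset s) y = famE (G.cliqueFinset s) x ∧
          famE (G.cliqueFinset (s+1)) x ≤ famE (G.cliqueFinset (s+1)) y := by
        intro p hp q hq hpq hadj hpos hsl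
        set d := famE ((G.cliqueFinset s).memberSubfamily p) x with hd
        set c := famE ((G.cliqueFinset s).memberSubfamily q) x with hcdef
        have hc0 : 0 ≤ c := famE_nonneg _ _ hx
        have hr : 0 ≤ x q / d := div_nonneg (hx q) hpos.le
        have hyq : shift x p q c d (x q / d) q = 0 := by
          rw [shift_q, div_mul_cancel₀ _ hpos.ne', sub_self]
        refine ⟨shift x p q c d (x q / d), ?_, ?_, ?_, ?_⟩
        · intro i
          by_cases h : i = q
          · subst h; rw [hyq]
          by_cases h' : i = p
          · subst h'; rw [shift_p _ _ _ hpq]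
            have := mul_nonneg hr hc0
            linarith [hx i]
          · rw [shift_o _ _ _ _ h' h]; exact hx i
        · refine (Finset.ssubset_iff_of_subset ?_).2 ⟨q, hq, by simp [mem_supp, hyq]⟩
          intro i hi
          by_cases h : i = q
          · subst h; exact hq
          by_cases h' : i = p
          · subst h'; exact hp
          · rw [mem_supp, shift_o _ _ _ _ h' h] at hi; rwa [mem_supp]
        · rw [famE_shift _ _ _ _ hpq (sep_cliques G _ p q hpq hadj), ← hd, ← hcdef]
          ring
        · rw [famE_shift _ _ _ _ hpq (sep_cliques G _ p q hpq hadj)]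
          have := mul_nonneg hr hsl
          linarith
      obtain ⟨p, hp, q, hq, hpq, hadj⟩ := not_clique_exists G _ hc
      by_cases hzp : famE ((G.cliqueFinset s).memberSubfamily p) x = 0
      · exact kill p hp hzp
      by_cases hzq : famE ((G.cliqueFinset s).memberSubfamily q) x = 0
      · exact kill q hq hzq
      have hpp := lt_of_le_of_ne (famE_nonneg _ _ hx) (Ne.symm hzp)
      have hqq := lt_of_le_of_ne (famE_nonneg _ _ hx) (Ne.symm hzq)
      rcases le_total 0 (famE ((G.cliqueFinset s).memberSubfamily q) x *
            famE ((G.cliqueFinset (s+1)).memberSubfamily p) x -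
            famE ((G.cliqueFinset s).memberSubfamily p) x *
            famE ((G.cliqueFinset (s+1)).memberSubfamily q) x) with h | h
      · exact move p hp q hq hpq hadj hpp h
      · exact move q hq p hp hpq.symm (fun h => hadj h.symm) hqq (by linarith)

lemma member_pos {n : ℕ} (G : SimpleGraph (Fin n)) [DecidableRel G.Adj] (s : ℕ) (hs : 1 ≤ s)
    (x : Fin n → ℝ) (hx : ∀ i, 0 ≤ x i) (S : Finset (Fin n)) (hS : G.IsClique (S : Set (Fin n)))
    (hc : s ≤ S.card) (hp : ∀ i ∈ S, 0 < x i) (q : Fin n) (hq : q ∈ S) :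
    0 < famE ((G.cliqueFinset s).memberSubfamily q) x := by
  have he := Finset.card_erase_of_mem hq
  obtain ⟨T, hT, hTc⟩ := Finset.exists_subset_card_eq (show s - 1 ≤ (S.erase q).card by omega)
  have hqT : q ∉ T := fun h => by have := hT h; simp at this
  refine famE_pos _ _ hx T ?_ fun i hi => hp i (Finset.mem_of_mem_erase (hT hi))
  rw [Finset.mem_memberSubfamily, SimpleGraph.mem_cliqueFinset_iff]
  refine ⟨⟨hS.subset ?_, ?_⟩, hqT⟩
  · have : insert q T ⊆ S := by
      intro i hi
      rcases Finset.mem_insert.1 hi with rfl | h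
      · exact hq
      · exact Finset.mem_of_mem_erase (hT h)
    exact_mod_cast this
  · rw [Finset.card_insert_of_notMem hqT, hTc]; omega

/-- points with prescribed values of the two clique polynomials -/
structure IsMx {n : ℕ} (G : SimpleGraph (Fin n)) [DecidableRel G.Adj] (s : ℕ) (A B : ℝ)
    (x : Fin n → ℝ) : Prop where
  nonneg : ∀ i, 0 ≤ x i
  eqA : famE (G.cliqueFinset s) x = A
  eqB : famE (G.cliqueFinset (s+1)) x = B

/-- extremality of the pair of values -/
structure Extr {n : ℕ} (G : SimpleGraph (Fin n)) (s : ℕ) (A B : ℝ) : Prop where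
  hs : 1 ≤ s
  hsw : s < G.cliqueNum
  hA : 0 < A
  hB : 0 < B
  heq : (B / (G.cliqueNum.choose (s+1) : ℝ)) ^ s = (A / (G.cliqueNum.choose s : ℝ)) ^ (s+1)

lemma Extr.le {n : ℕ} {G : SimpleGraph (Fin n)} [DecidableRel G.Adj] {s : ℕ} {A B : ℝ}
    (E : Extr G s A B) (y : Fin n → ℝ) (hy : ∀ i, 0 ≤ y i)
    (h : famE (G.cliqueFinset s) y = A) : famE (G.cliqueFinset (s+1)) y ≤ B := by
  have := graph_ineq G s E.hs E.hsw _ y hy le_rfl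
  rw [h, ← E.heq] at this
  have hc : (0:ℝ) < (G.cliqueNum.choose (s+1) : ℝ) := by
    exact_mod_cast Nat.choose_pos E.hsw
  have h2 := (pow_le_pow_iff_left₀ (div_nonneg (famE_nonneg _ _ hy) hc.le)
    (div_nonneg E.hB.le hc.le) (by have := E.hs; omega)).1 this
  exact (div_le_div_iff_of_pos_right hc).1 h2

lemma Extr.kkt {n : ℕ} {G : SimpleGraph (Fin n)} [DecidableRel G.Adj] {s : ℕ} {A B : ℝ}
    (E : Extr G s A B) (x : Fin n → ℝ) (hx : IsMx G s A B x) (i : Fin n) (hi : 0 < x i) :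
    famE ((G.cliqueFinset (s+1)).memberSubfamily i) x =
      ((s+1) * B / (s * A)) * famE ((G.cliqueFinset s).memberSubfamily i) x := by
  set a := famE ((G.cliqueFinset s).memberSubfamily i) x with ha
  set b := famE ((G.cliqueFinset (s+1)).memberSubfamily i) x with hb
  have hA := E.hA
  have hB := E.hB
  have hs0 : (0:ℝ) < s := by exact_mod_cast E.hs
  obtain ⟨cA, hcA⟩ : ∃ c, c = (G.cliqueNum.choose s : ℝ) := ⟨_, rfl⟩
  obtain ⟨cB, hcB⟩ : ∃ c, c = (G.cliqueNum.choose (s+1) : ℝ) := ⟨_, rfl⟩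
  have cApos : 0 < cA := by rw [hcA]; exact_mod_cast Nat.choose_pos E.hsw.le
  have cBpos : 0 < cB := by rw [hcB]; exact_mod_cast Nat.choose_pos E.hsw
  have heq := E.heq
  rw [← hcA, ← hcB] at heq
  have hge : ∀ t : ℝ, -x i < t → 0 ≤ ((A + t * a) / cA) ^ (s+1) - ((B + t * b) / cB) ^ s := by
    intro t ht
    have h0 : ∀ j, 0 ≤ Function.update x i (x i + t) j := by
      intro j
      by_cases h : j = i
      · subst h; simp; linarith
      · rw [Function.update_of_ne h]; exact hx.nonneg j
    have := graph_ineq G s E.hs E.hsw _ _ h0 le_rfl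
    rw [famE_update, famE_update, hx.eqA, hx.eqB, ← ha, ← hb, ← hcA, ← hcB,
      add_sub_cancel_left] at this
    linarith
  have hmin : IsLocalMin (fun t : ℝ => ((A + t * a) / cA) ^ (s+1) - ((B + t * b) / cB) ^ s) 0 := by
    filter_upwards [Ioi_mem_nhds (show -x i < 0 by linarith)] with t ht
    have := hge t ht
    simp only [zero_mul, add_zero]
    linarith
  have hd1 : HasDerivAt (fun t : ℝ => (A + t * a) / cA) (a / cA) 0 := by
    simpa using (((hasDerivAt_id (0:ℝ)).mul_const a).const_add A).div_const cA
  have hd2 : HasDerivAt (fun t : ℝ => (B + t * b) / cB) (b / cB) 0 := by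
    simpa using (((hasDerivAt_id (0:ℝ)).mul_const b).const_add B).div_const cB
  have hd := (hd1.pow (s+1)).sub (hd2.pow s)
  have h0 := hmin.hasDerivAt_eq_zero hd
  simp only [zero_mul, add_zero, Nat.add_sub_cancel] at h0
  have hsplit : (B / cB) ^ s = (B / cB) ^ (s - 1) * (B / cB) := by
    rw [← pow_succ, Nat.sub_add_cancel E.hs]
  have e1 : (A / cA) ^ (s+1) = (A / cA) ^ s * (A / cA) := pow_succ _ _
  have hP : 0 < (A / cA) ^ (s+1) := pow_pos (div_pos hA cApos) _
  have h3 : (A / cA) ^ (s+1) * ((s+1) * B * a) = (A / cA) ^ (s+1) * (s * A * b) := by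
    have l1 : (A / cA) ^ (s+1) * ((s+1) * B * a) =
        A * B * (((s:ℝ)+1) * (A / cA) ^ s * (a / cA)) := by
      rw [e1]; field_simp
    have l2 : (A / cA) ^ (s+1) * (s * A * b) = A * B * (s * (B / cB) ^ (s-1) * (b / cB)) := by
      rw [← heq, hsplit]; field_simp
    rw [l1, l2]
    push_cast at h0
    congr 1
    linarith
  have h4 := mul_left_cancel₀ hP.ne' h3
  field_simp
  linarith

lemma pert_alg (xw au aw auw : ℝ) (hw : 0 < xw) (hau : 0 < au) (haw : 0 < aw) (hauw : 0 ≤ auw) :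
    ∃ α > 0, ∃ γ < 0, -xw ≤ γ ∧ α * au + γ * aw + α * γ * auw = 0 := by
  obtain ⟨α, hα⟩ : ∃ α, α = xw * aw / au := ⟨_, rfl⟩
  have hαpos : 0 < α := by rw [hα]; positivity
  have hαa : α * au = xw * aw := by rw [hα]; field_simp
  have hden : 0 < aw + α * auw := by positivity
  obtain ⟨γ, hγ⟩ : ∃ γ, γ = - (α * au / (aw + α * auw)) := ⟨_, rfl⟩
  have hγneg : γ < 0 := by
    rw [hγ]; have : 0 < α * au / (aw + α * auw) := by positivity
    linarith
  have hrel : α * au + γ * aw + α * γ * auw = 0 := by rw [hγ]; field_simp; ring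
  have hγge : -xw ≤ γ := by
    rw [hγ, neg_le_neg_iff, div_le_iff₀ hden, hαa]
    have : 0 ≤ xw * (α * auw) := by positivity
    linarith
  exact ⟨α, hαpos, γ, hγneg, hγge, hrel⟩

lemma bad_alg (xv au aw auw av : ℝ) (hv : 0 < xv) (hau : 0 ≤ au) (haw : 0 ≤ aw) (hauw : 0 ≤ auw)
    (hav : 0 < av) :
    ∃ ε > 0, ∃ β, -xv ≤ β ∧ ε * au + ε * aw + ε * ε * auw + β * av = 0 := by
  obtain ⟨ε, hε⟩ : ∃ ε, ε = min 1 (xv * av / (au + aw + auw + 1)) := ⟨_, rfl⟩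
  have hεpos : 0 < ε := by rw [hε]; positivity
  have hε1 : ε ≤ 1 := by rw [hε]; exact min_le_left _ _
  have hε2 : ε * (au + aw + auw + 1) ≤ xv * av := by
    rw [← le_div_iff₀ (by positivity), hε]; exact min_le_right _ _
  obtain ⟨β, hβ⟩ : ∃ β, β = - ((ε * au + ε * aw + ε * ε * auw) / av) := ⟨_, rfl⟩
  have hrel : ε * au + ε * aw + ε * ε * auw + β * av = 0 := by rw [hβ]; field_simp; ring
  have hβge : -xv ≤ β := by
    rw [hβ, neg_le_neg_iff, div_le_iff₀ hav]
    have : ε * ε * auw ≤ ε * auw := by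
      have := mul_le_mul_of_nonneg_right hε1 (mul_nonneg hεpos.le hauw)
      linarith
    linarith
  exact ⟨ε, hεpos, β, hβge, hrel⟩

/-- perturbation of two weights preserving the first polynomial -/
lemma Extr.pert {n : ℕ} {G : SimpleGraph (Fin n)} [DecidableRel G.Adj] {s : ℕ} {A B : ℝ}
    (E : Extr G s A B) (x : Fin n → ℝ) (hx : IsMx G s A B x) (u w : Fin n) (huw : u ≠ w)
    (hu : 0 < x u) (hw : 0 < x w)
    (hau : 0 < famE ((G.cliqueFinset s).memberSubfamily u) x)
    (haw : 0 < famE ((G.cliqueFinset s).memberSubfamily w) x) :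
    ∃ α > 0, ∃ γ < 0, ∃ y : Fin n → ℝ,
      y = Function.update (Function.update x u (x u + α)) w (x w + γ) ∧
      (∀ i, 0 ≤ y i) ∧ famE (G.cliqueFinset s) y = A ∧
      famE (G.cliqueFinset (s+1)) y = B + α * γ *
        (famE (((G.cliqueFinset (s+1)).memberSubfamily w).memberSubfamily u) x -
          ((s+1) * B / (s * A)) *
          famE (((G.cliqueFinset s).memberSubfamily w).memberSubfamily u) x) := by
  have ku := E.kkt x hx u hu
  have kw := E.kkt x hx w hw
  have hauw : 0 ≤ famE (((G.cliqueFinset s).memberSubfamily w).memberSubfamily u) x :=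
    famE_nonneg _ _ hx.nonneg
  obtain ⟨α, hαpos, γ, hγneg, hγge, hrel⟩ := pert_alg (x w) _ _ _ hw hau haw hauw
  refine ⟨α, hαpos, γ, hγneg, _, rfl, ?_, ?_, ?_⟩
  · intro i
    by_cases h : i = w
    · subst h; simp; linarith
    by_cases h' : i = u
    · subst h'; rw [Function.update_of_ne h, Function.update_self]; linarith
    · rw [Function.update_of_ne h, Function.update_of_ne h']; exact hx.nonneg i
  · rw [famE_update2 _ _ _ _ huw, hx.eqA]
    linear_combination hrel
  · rw [famE_update2 _ _ _ _ huw, hx.eqB, ku, kw]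
    linear_combination ((s+1) * B / (s * A)) * hrel

lemma Extr.g_nonneg {n : ℕ} {G : SimpleGraph (Fin n)} [DecidableRel G.Adj] {s : ℕ} {A B : ℝ}
    (E : Extr G s A B) (x : Fin n → ℝ) (hx : IsMx G s A B x) (u w : Fin n) (huw : u ≠ w)
    (hu : 0 < x u) (hw : 0 < x w)
    (hau : 0 < famE ((G.cliqueFinset s).memberSubfamily u) x)
    (haw : 0 < famE ((G.cliqueFinset s).memberSubfamily w) x) :
    0 ≤ famE (((G.cliqueFinset (s+1)).memberSubfamily w).memberSubfamily u) x -
          ((s+1) * B / (s * A)) *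
          famE (((G.cliqueFinset s).memberSubfamily w).memberSubfamily u) x := by
  obtain ⟨α, hα, γ, hγ, y, -, hy, hyA, hyB⟩ := E.pert x hx u w huw hu hw hau haw
  have := E.le y hy hyA
  rw [hyB] at this
  by_contra hneg
  push Not at hneg
  have := mul_pos_of_neg_of_neg (mul_neg_of_pos_of_neg hα hγ) hneg
  linarith

lemma FSep.empty {ι : Type*} [DecidableEq ι] {F : Finset (Finset ι)} {p q : ι} (h : FSep F p q) :
    (F.memberSubfamily p).memberSubfamily q = ∅ := by
  rw [Finset.eq_empty_iff_forall_notMem]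
  intro S hS
  rw [Finset.mem_memberSubfamily, Finset.mem_memberSubfamily] at hS
  exact h _ hS.1.1 (Finset.mem_insert_self _ _)
      (Finset.mem_insert_of_mem (Finset.mem_insert_self _ _))

lemma famE_update3 {ι : Type*} [DecidableEq ι] (F : Finset (Finset ι)) (x : ι → ℝ) (u w v : ι)
    (huw : u ≠ w) (hvu : v ≠ u) (hvw : v ≠ w) (h1 : FSep F u v) (h2 : FSep F w v) (α γ β : ℝ) :
    famE F (Function.update (Function.update (Function.update x u (x u + α)) w (x w + γ))
        v (x v + β)) =
      famE F x + α * famE (F.memberSubfamily u) x + γ * famE (F.memberSubfamily w) x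
        + α * γ * famE ((F.memberSubfamily w).memberSubfamily u) x
        + β * famE (F.memberSubfamily v) x := by
  rw [famE_update, famE_update2 _ _ _ _ huw, famE_update2 _ _ _ _ huw, h1.symm.empty, h2.symm.empty,
    Function.update_of_ne hvw, Function.update_of_ne hvu]
  have hme : Finset.memberSubfamily u (∅ : Finset (Finset ι)) = ∅ := by simp [Finset.memberSubfamily]
  simp [famE, hme]

lemma Extr.g_bad {n : ℕ} {G : SimpleGraph (Fin n)} [DecidableRel G.Adj] {s : ℕ} {A B : ℝ}
    (E : Extr G s A B) (x : Fin n → ℝ) (hx : IsMx G s A B x) (u w v : Fin n) (huw : u ≠ w)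
    (hvu : v ≠ u) (hvw : v ≠ w)
    (hu : 0 < x u) (hw : 0 < x w) (hv : 0 < x v)
    (hav : 0 < famE ((G.cliqueFinset s).memberSubfamily v) x)
    (h1 : FSep (G.cliqueFinset s) u v) (h2 : FSep (G.cliqueFinset s) w v)
    (h3 : FSep (G.cliqueFinset (s+1)) u v) (h4 : FSep (G.cliqueFinset (s+1)) w v) :
    famE (((G.cliqueFinset (s+1)).memberSubfamily w).memberSubfamily u) x -
          ((s+1) * B / (s * A)) *
          famE (((G.cliqueFinset s).memberSubfamily w).memberSubfamily u) x ≤ 0 := by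
  have ku := E.kkt x hx u hu
  have kw := E.kkt x hx w hw
  have kv := E.kkt x hx v hv
  have hauw : 0 ≤ famE (((G.cliqueFinset s).memberSubfamily w).memberSubfamily u) x :=
    famE_nonneg _ _ hx.nonneg
  have hau : 0 ≤ famE ((G.cliqueFinset s).memberSubfamily u) x := famE_nonneg _ _ hx.nonneg
  have haw : 0 ≤ famE ((G.cliqueFinset s).memberSubfamily w) x := famE_nonneg _ _ hx.nonneg
  obtain ⟨l, hl⟩ : ∃ l, l = ((s+1) * B / (s * A)) := ⟨_, rfl⟩
  rw [← hl] at ku kw kv ⊢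
  obtain ⟨ε, hεpos, β, hβge, hrel⟩ := bad_alg (x v) _ _ _ _ hv hau haw hauw hav
  have := E.le (Function.update (Function.update (Function.update x u (x u + ε)) w (x w + ε))
        v (x v + β)) ?_ ?_
  · rw [famE_update3 _ _ _ _ _ huw hvu hvw h3 h4, hx.eqB, ku, kw, kv] at this
    by_contra hpos
    push Not at hpos
    have hh := mul_pos (mul_pos hεpos hεpos) hpos
    have := congrArg (fun z => l * z) hrel
    simp only [mul_zero] at this
    linarith
  · intro i
    by_cases h0 : i = v
    · subst h0; simp; linarith
    rw [Function.update_of_ne h0]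
    by_cases h : i = w
    · subst h; rw [Function.update_self]; linarith
    by_cases h' : i = u
    · subst h'; rw [Function.update_of_ne h, Function.update_self]; linarith
    · rw [Function.update_of_ne h, Function.update_of_ne h']; exact hx.nonneg i
  · rw [famE_update3 _ _ _ _ _ huw hvu hvw h1 h2, hx.eqA]
    linear_combination hrel

lemma Extr.clique_const {n : ℕ} {G : SimpleGraph (Fin n)} [DecidableRel G.Adj] {s : ℕ} {A B : ℝ}
    (E : Extr G s A B) (x : Fin n → ℝ) (hx : IsMx G s A B x) (K : Finset (Fin n))
    (hK : G.IsClique (K : Set (Fin n))) (h0 : ∀ i, i ∉ K → x i = 0) :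
    ∀ i ∈ K, ∀ j ∈ K, x i = x j := by
  have hA := hx.eqA
  have hB := hx.eqB
  rw [famE_clique G _ K hK x h0] at hA hB
  refine maclaurin_eq_const x hx.nonneg K G.cliqueNum
    (SimpleGraph.IsClique.card_le_cliqueNum (tc := hK)) s E.hs E.hsw ?_ ?_
  · unfold nP
    rw [hB]
    exact div_pos E.hB (by exact_mod_cast Nat.choose_pos E.hsw)
  · unfold nP
    rw [hA, hB]; exact E.heq

lemma Extr.persist {n : ℕ} {G : SimpleGraph (Fin n)} [DecidableRel G.Adj] {s : ℕ} {A B : ℝ}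
    (E : Extr G s A B) (u w : Fin n) (huw : u ≠ w) (S : Finset (Fin n))
    (hS : G.IsClique (S : Set (Fin n))) (hc : s ≤ S.card) (huS : u ∈ S) (hwS : w ∈ S) :
    ∀ (m : ℕ) (x : Fin n → ℝ) (_ : IsMx G s A B x) (_ : (supp x).card ≤ m)
      (_ : ∀ i ∈ S, 0 < x i)
      (_ : famE (((G.cliqueFinset (s+1)).memberSubfamily w).memberSubfamily u) x -
          ((s+1) * B / (s * A)) *
          famE (((G.cliqueFinset s).memberSubfamily w).memberSubfamily u) x = 0), False := by
  intro m
  induction m with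
  | zero =>
    intro x hx hm hSx _
    have : supp x = ∅ := by simpa using hm
    have hu := (mem_supp x u).2 (hSx u huS).ne'
    simp_all
  | succ m ih =>
    intro x hx hm hSx hg
    have hpos : ∀ i ∈ supp x, 0 < x i := fun i hi =>
      lt_of_le_of_ne (hx.nonneg i) (Ne.symm ((mem_supp x i).1 hi))
    have hSsupp : ∀ i ∈ S, i ∈ supp x := fun i hi => (mem_supp x i).2 (hSx i hi).ne'
    have hSA : ∀ i ∈ S, 0 < famE ((G.cliqueFinset s).memberSubfamily i) x := fun i hi =>
      member_pos G s E.hs x hx.nonneg S hS hc hSx i hi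
    by_cases hcl : G.IsClique (supp x : Set (Fin n))
    · obtain ⟨α, hα, γ, hγ, y, hy, hy0, hyA, hyB⟩ := E.pert x hx u w huw (hSx u huS) (hSx w hwS)
        (hSA u huS) (hSA w hwS)
      rw [hg, mul_zero, add_zero] at hyB
      have h0 : ∀ i, i ∉ supp x → x i = 0 := fun i hi => by
        by_contra h; exact hi ((mem_supp x i).2 h)
      have c1 := E.clique_const x hx _ hcl h0 u (hSsupp u huS) w (hSsupp w hwS)
      have c2 := E.clique_const y ⟨hy0, hyA, hyB⟩ _ hcl (fun i hi => by
        have hiu : i ≠ u := fun h => hi (h ▸ hSsupp u huS)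
        have hiw : i ≠ w := fun h => hi (h ▸ hSsupp w hwS)
        rw [hy, Function.update_of_ne hiw, Function.update_of_ne hiu]; exact h0 i hi)
        u (hSsupp u huS) w (hSsupp w hwS)
      rw [hy, Function.update_of_ne huw, Function.update_self, Function.update_self] at c2
      linarith
    · obtain ⟨p, hp, q, hq, hpq, hadj, hqS, c, d, hc0, hd0, hcd⟩ : ∃ p ∈ supp x, ∃ q ∈ supp x,
          p ≠ q ∧ ¬ G.Adj p q ∧ q ∉ S ∧ ∃ c d : ℝ, 0 ≤ c ∧ 0 < d ∧
          c * famE ((G.cliqueFinset s).memberSubfamily p) x =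
            d * famE ((G.cliqueFinset s).memberSubfamily q) x := by
        obtain ⟨p, hp, q, hq, hpq, hadj⟩ := not_clique_exists G _ hcl
        have hadj' : ¬ G.Adj q p := fun h => hadj h.symm
        have n1 : 0 ≤ famE ((G.cliqueFinset s).memberSubfamily p) x := famE_nonneg _ _ hx.nonneg
        have n2 : 0 ≤ famE ((G.cliqueFinset s).memberSubfamily q) x := famE_nonneg _ _ hx.nonneg
        by_cases hqS : q ∈ S
        · have hpS : p ∉ S := fun h => hadj (hS h hqS hpq)
          exact ⟨q, hq, p, hp, hpq.symm, hadj', hpS, _, _, n1, hSA q hqS, mul_comm _ _⟩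
        · rcases n1.eq_or_lt with h | h
          · by_cases hpS : p ∈ S
            · have := hSA p hpS; linarith
            · exact ⟨q, hq, p, hp, hpq.symm, hadj', hpS, 0, 1, le_rfl, one_pos, by
                rw [← h]; simp⟩
          · exact ⟨p, hp, q, hq, hpq, hadj, hqS, _, _, n2, h, mul_comm _ _⟩
      have hxp := hpos p hp
      have hxq := hpos q hq
      have sA := sep_cliques G s p q hpq hadj
      have sB := sep_cliques G (s+1) p q hpq hadj
      have mx : ∀ r : ℝ, 0 ≤ x p + r * c → 0 ≤ x q - r * d → IsMx G s A B (shift x p q c d r) := by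
        intro r h1 h2
        refine ⟨?_, ?_, ?_⟩
        · intro i
          by_cases h : i = q
          · subst h; rw [shift_q]; exact h2
          by_cases h' : i = p
          · subst h'; rw [shift_p _ _ _ hpq]; exact h1
          · rw [shift_o _ _ _ _ h' h]; exact hx.nonneg i
        · rw [famE_shift _ _ _ _ hpq sA, hx.eqA]
          linear_combination r * hcd
        · rw [famE_shift _ _ _ _ hpq sB, hx.eqB, E.kkt x hx p hxp, E.kkt x hx q hxq]
          linear_combination r * ((s+1) * B / (s * A)) * hcd
      have posS : ∀ r : ℝ, 0 < x p + r * c → ∀ i ∈ S, 0 < shift x p q c d r i := by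
        intro r h1 i hi
        have h : i ≠ q := fun h => hqS (h ▸ hi)
        by_cases h' : i = p
        · subst h'; rw [shift_p _ _ _ hpq]; exact h1
        · rw [shift_o _ _ _ _ h' h]; exact hSx i hi
      obtain ⟨g', hg'⟩ : ∃ g' : ℝ, ∀ r : ℝ,
          famE (((G.cliqueFinset (s+1)).memberSubfamily w).memberSubfamily u) (shift x p q c d r) -
          ((s+1) * B / (s * A)) *
          famE (((G.cliqueFinset s).memberSubfamily w).memberSubfamily u) (shift x p q c d r)
            = r * g' := by
        refine ⟨(c * famE ((((G.cliqueFinset (s+1)).memberSubfamily w).memberSubfamily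
            u).memberSubfamily p) x - d * famE ((((G.cliqueFinset (s+1)).memberSubfamily
            w).memberSubfamily u).memberSubfamily q) x) - ((s+1) * B / (s * A)) *
            (c * famE ((((G.cliqueFinset s).memberSubfamily w).memberSubfamily
            u).memberSubfamily p) x - d * famE ((((G.cliqueFinset s).memberSubfamily
            w).memberSubfamily u).memberSubfamily q) x), fun r => ?_⟩
        rw [famE_shift _ _ _ _ hpq ((sA.member w).member u),
          famE_shift _ _ _ _ hpq ((sB.member w).member u)]
        linear_combination hg
      have gnn : ∀ r : ℝ, 0 < x p + r * c → 0 ≤ x q - r * d → 0 ≤ r * g' := by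
        intro r h1 h2
        rw [← hg' r]
        have hm := mx r h1.le h2
        have hps := posS r h1
        exact E.g_nonneg _ hm u w huw (hps u huS) (hps w hwS)
          (member_pos G s E.hs _ hm.nonneg S hS hc hps u huS)
          (member_pos G s E.hs _ hm.nonneg S hS hc hps w hwS)
      have r1 : 0 < x q / d := div_pos hxq hd0
      have e1 : x q / d * d = x q := div_mul_cancel₀ _ hd0.ne'
      have hr1 : 0 < x p + x q / d * c := by positivity
      have hr1' : 0 ≤ x q - x q / d * d := by rw [e1, sub_self]
      have hg1 := gnn _ hr1 hr1'
      have hr2 : 0 < x p + (-(x p / (c + 1))) * c := by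
        have : x p + (-(x p / (c + 1))) * c = x p / (c+1) := by field_simp; ring
        rw [this]; positivity
      have hr2' : 0 ≤ x q - (-(x p / (c + 1))) * d := by
        have : 0 < x p / (c+1) := by positivity
        nlinarith
      have hg2 := gnn _ hr2 hr2'
      have r2 : 0 < x p / (c+1) := by positivity
      have hg0 : g' = 0 := by
        apply le_antisymm
        · by_contra h
          push Not at h
          have := mul_pos r2 h
          linarith
        · by_contra h
          push Not at h
          have := mul_neg_of_pos_of_neg r1 h
          linarith
      refine ih (shift x p q c d (x q / d)) (mx _ hr1.le hr1') ?_ (posS _ hr1) ?_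
      · have : supp (shift x p q c d (x q / d)) ⊂ supp x := by
          refine (Finset.ssubset_iff_of_subset ?_).2 ⟨q, hq, by
            rw [mem_supp, shift_q, e1]; simp⟩
          intro i hi
          by_cases h : i = q
          · subst h; exact hq
          by_cases h' : i = p
          · subst h'; exact hp
          · rw [mem_supp, shift_o _ _ _ _ h' h] at hi; rwa [mem_supp]
        have := Finset.card_lt_card this
        omega
      · rw [hg' _, hg0, mul_zero]

lemma Extr.no_bad {n : ℕ} {G : SimpleGraph (Fin n)} [DecidableRel G.Adj] {s : ℕ} {A B : ℝ}
    (E : Extr G s A B) (x : Fin n → ℝ) (hx : IsMx G s A B x) (hpos : ∀ i, 0 < x i)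
    (u w v : Fin n) (huw : u ≠ w) (hvu : v ≠ u) (hvw : v ≠ w) (S : Finset (Fin n))
    (hS : G.IsClique (S : Set (Fin n))) (hc : s ≤ S.card) (huS : u ∈ S) (hwS : w ∈ S)
    (T : Finset (Fin n)) (hT : T ∈ G.cliqueFinset s) (hvT : v ∈ T)
    (h1 : FSep (G.cliqueFinset s) u v) (h2 : FSep (G.cliqueFinset s) w v)
    (h3 : FSep (G.cliqueFinset (s+1)) u v) (h4 : FSep (G.cliqueFinset (s+1)) w v) : False := by
  rw [SimpleGraph.mem_cliqueFinset_iff] at hT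
  have mp := member_pos G s E.hs x hx.nonneg
  refine E.persist u w huw S hS hc huS hwS _ x hx le_rfl (fun i _ => hpos i) (le_antisymm ?_ ?_)
  · exact E.g_bad x hx u w v huw hvu hvw (hpos u) (hpos w) (hpos v)
      (mp T hT.isClique hT.card_eq.ge (fun i _ => hpos i) v hvT) h1 h2 h3 h4
  · exact E.g_nonneg x hx u w huw (hpos u) (hpos w)
      (mp S hS hc (fun i _ => hpos i) u huS) (mp S hS hc (fun i _ => hpos i) w hwS)

lemma rpow_equiv (a b : ℝ) (ha : 0 ≤ a) (hb : 0 ≤ b) (s : ℕ) (hs : 1 ≤ s) :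
    a ^ ((1 : ℝ) / ((s : ℝ) + 1)) = b ^ ((1 : ℝ) / (s : ℝ)) ↔ a ^ s = b ^ (s+1) := by
  obtain ⟨α, hα⟩ : ∃ α, α = a ^ ((1 : ℝ) / ((s : ℝ) + 1)) := ⟨_, rfl⟩
  obtain ⟨β, hβ⟩ : ∃ β, β = b ^ ((1 : ℝ) / (s : ℝ)) := ⟨_, rfl⟩
  have hα0 : 0 ≤ α := by rw [hα]; exact Real.rpow_nonneg ha _
  have hβ0 : 0 ≤ β := by rw [hβ]; exact Real.rpow_nonneg hb _
  have e1 : α ^ (s+1) = a := by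
    rw [hα, one_div]
    have := Real.rpow_inv_natCast_pow ha (show s + 1 ≠ 0 by omega)
    push_cast at this
    exact this
  have e2 : β ^ s = b := by
    rw [hβ, one_div]
    exact Real.rpow_inv_natCast_pow hb (by omega)
  rw [← hα, ← hβ, ← e1, ← e2, ← pow_mul, ← pow_mul, mul_comm s (s+1)]
  constructor
  · rintro rfl; rfl
  · intro h
    exact (pow_left_inj₀ hα0 hβ0 (by positivity)).1 h

lemma multipartite_famE {n : ℕ} (G : SimpleGraph (Fin n)) [DecidableRel G.Adj] (s N : ℕ)
    (x : Fin n → ℝ) (V : Fin N → Finset (Fin n))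
    (hdisj : ∀ i j, i ≠ j → Disjoint (V i) (V j))
    (hcov : ∀ v : Fin n, (∃ S ∈ G.cliqueFinset s, v ∈ S) ↔ ∃ i, v ∈ V i)
    (hind : ∀ i, ∀ u ∈ V i, ∀ w ∈ V i, ¬ G.Adj u w)
    (hadj : ∀ i j, i ≠ j → ∀ u ∈ V i, ∀ w ∈ V j, G.Adj u w)
    (hs : 1 ≤ s) (t : ℕ) (hst : s ≤ t) :
    famE (G.cliqueFinset t) x =
      famE (Finset.powersetCard t (Finset.univ : Finset (Fin N))) (fun i => ∑ v ∈ V i, x v) := by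
  have huniq : ∀ i j v, v ∈ V i → v ∈ V j → i = j := by
    intro i j v hi hj
    by_contra h
    exact Finset.disjoint_left.1 (hdisj i j h) hi hj
  unfold famE
  simp_rw [Finset.prod_sum]
  rw [Finset.sum_sigma']
  symm
  refine Finset.sum_bij (fun a _ => a.1.attach.image (fun i => a.2 i.1 i.2)) ?_ ?_ ?_ ?_
  · rintro ⟨I, p⟩ h
    simp only [Finset.mem_sigma, Finset.mem_powersetCard, Finset.mem_pi] at h
    rw [SimpleGraph.mem_cliqueFinset_iff]
    refine ⟨?_, ?_⟩
    · intro a ha b hb hab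
      simp only [Finset.coe_image, Set.mem_image, Finset.mem_coe, Finset.mem_attach, true_and,
        Subtype.exists] at ha hb
      obtain ⟨i, hi, rfl⟩ := ha
      obtain ⟨j, hj, rfl⟩ := hb
      have hij : i ≠ j := by rintro rfl; exact hab rfl
      exact hadj i j hij _ (h.2 i hi) _ (h.2 j hj)
    · rw [Finset.card_image_of_injective, Finset.card_attach]
      · exact h.1.2
      · rintro ⟨i, hi⟩ ⟨j, hj⟩ hij
        have h1 := h.2 i hi
        have h2 := h.2 j hj
        simp only at hij
        rw [hij] at h1
        exact Subtype.ext (huniq i j _ h1 h2)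
  · rintro ⟨I, p⟩ h ⟨J, q⟩ h' heq
    simp only [Finset.mem_sigma, Finset.mem_powersetCard, Finset.mem_pi] at h h'
    simp only at heq
    have key : ∀ i (hi : i ∈ I), ∃ hj : i ∈ J, p i hi = q i hj := by
      intro i hi
      have : p i hi ∈ J.attach.image (fun j => q j.1 j.2) := by
        rw [← heq]; exact Finset.mem_image.2 ⟨⟨i, hi⟩, Finset.mem_attach _ _, rfl⟩
      obtain ⟨⟨j, hj⟩, -, hq⟩ := Finset.mem_image.1 this
      simp only at hq
      have hij : i = j := huniq i j (p i hi) (h.2 i hi) (hq ▸ h'.2 j hj)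
      subst hij
      exact ⟨hj, hq.symm⟩
    have hIJ : I = J := by
      refine Finset.eq_of_subset_of_card_le (fun i hi => (key i hi).1) ?_
      rw [h.1.2, h'.1.2]
    subst hIJ
    congr 1
    funext i hi
    exact (key i hi).2
  · intro S hS
    rw [SimpleGraph.mem_cliqueFinset_iff] at hS
    have hmem : ∀ v ∈ S, ∃ i, v ∈ V i := by
      intro v hv
      rw [← hcov]
      have hcard := hS.card_eq
      obtain ⟨T, h1, h2, h3⟩ := Finset.exists_subsuperset_card_eq
        (s := {v}) (t := S) (n := s) (by simpa using hv) (by simpa using hs) (by omega)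
      refine ⟨T, ?_, h1 (by simp)⟩
      rw [SimpleGraph.mem_cliqueFinset_iff]
      exact ⟨hS.isClique.subset (by exact_mod_cast h2), h3⟩
    have hSne : S.Nonempty := Finset.card_pos.1 (by have := hS.card_eq; omega)
    obtain ⟨v0, hv0⟩ := hSne
    have : Nonempty (Fin N) := ⟨(hmem v0 hv0).choose⟩
    choose! cls hcls using hmem
    have hinj : ∀ v ∈ S, ∀ w ∈ S, cls v = cls w → v = w := by
      intro v hv w hw hvw
      by_contra hne
      refine hind (cls v) v (hcls v hv) w (hvw ▸ hcls w hw) (hS.isClique hv hw hne)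
    have hch : ∀ i, ∀ hi : i ∈ S.image cls, ∃ v ∈ S, cls v = i := fun i hi =>
      Finset.mem_image.1 hi
    choose p hp1 hp2 using hch
    refine ⟨⟨S.image cls, p⟩, ?_, ?_⟩
    · simp only [Finset.mem_sigma, Finset.mem_powersetCard, Finset.mem_pi]
      refine ⟨⟨Finset.subset_univ _, ?_⟩, ?_⟩
      · rw [Finset.card_image_of_injOn (fun v hv w hw h => hinj v hv w hw h)]
        exact hS.card_eq
      · intro i hi
        have := hcls (p i hi) (hp1 i hi)
        rwa [hp2 i hi] at this
    · ext v
      simp only [Finset.mem_image, Finset.mem_attach, true_and, Subtype.exists]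
      constructor
      · rintro ⟨i, hi, rfl⟩
        exact hp1 i (Finset.mem_image.2 hi)
      · intro hv
        have hi : cls v ∈ S.image cls := Finset.mem_image_of_mem _ hv
        exact ⟨cls v, ⟨v, hv, rfl⟩, hinj _ (hp1 _ hi) _ hv (hp2 _ hi)⟩
  · rintro ⟨I, p⟩ h
    simp only [Finset.mem_sigma, Finset.mem_powersetCard, Finset.mem_pi] at h
    rw [Finset.prod_image]
    rintro ⟨i, hi⟩ - ⟨j, hj⟩ - hij
    have h1 := h.2 i hi
    have h2 := h.2 j hj
    simp only at hij
    rw [hij] at h1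
    exact Subtype.ext (huniq i j _ h1 h2)

lemma nP_const (N : ℕ) (σ : Fin N → ℝ) (z : ℝ) (h : ∀ i, σ i = z) (t : ℕ) (ht : t ≤ N) :
    nP N Finset.univ σ t = z ^ t := by
  unfold nP famE
  have : ∀ S ∈ Finset.powersetCard t (Finset.univ : Finset (Fin N)), ∏ i ∈ S, σ i = z ^ t := by
    intro S hS
    rw [Finset.prod_congr rfl (fun i _ => h i), Finset.prod_const,
      (Finset.mem_powersetCard.1 hS).2]
  rw [Finset.sum_congr rfl this, Finset.sum_const, Finset.card_powersetCard, Finset.card_univ,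
    Fintype.card_fin, nsmul_eq_mul]
  have : (N.choose t : ℝ) ≠ 0 := by exact_mod_cast (Nat.choose_pos ht).ne'
  field_simp

/-- equal, or in no common clique of size `s` or `s+1` -/
def NR {n : ℕ} (G : SimpleGraph (Fin n)) [DecidableRel G.Adj] (s : ℕ) (u w : Fin n) : Prop :=
  u = w ∨ (FSep (G.cliqueFinset s) u w ∧ FSep (G.cliqueFinset (s+1)) u w)

lemma NR.symm {n : ℕ} {G : SimpleGraph (Fin n)} [DecidableRel G.Adj] {s : ℕ} {u w : Fin n}
    (h : NR G s u w) : NR G s w u := by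
  rcases h with h | ⟨h1, h2⟩
  · exact Or.inl h.symm
  · exact Or.inr ⟨h1.symm, h2.symm⟩

lemma not_NR {n : ℕ} {G : SimpleGraph (Fin n)} [DecidableRel G.Adj] {s : ℕ} {u w : Fin n}
    (h : ¬ NR G s u w) : u ≠ w ∧ ∃ S : Finset (Fin n), G.IsClique (S : Set (Fin n)) ∧ s ≤ S.card ∧
      u ∈ S ∧ w ∈ S := by
  unfold NR FSep at h
  push Not at h
  refine ⟨h.1, ?_⟩
  by_cases h1 : ∀ S ∈ G.cliqueFinset s, u ∈ S → w ∉ S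
  · obtain ⟨S, hS, hu, hw⟩ := h.2 h1
    rw [SimpleGraph.mem_cliqueFinset_iff] at hS
    exact ⟨S, hS.isClique, by have := hS.card_eq; omega, hu, hw⟩
  · push Not at h1
    obtain ⟨S, hS, hu, hw⟩ := h1
    rw [SimpleGraph.mem_cliqueFinset_iff] at hS
    exact ⟨S, hS.isClique, by have := hS.card_eq; omega, hu, hw⟩

lemma not_NR_adj {n : ℕ} {G : SimpleGraph (Fin n)} [DecidableRel G.Adj] {s : ℕ} {u w : Fin n}
    (h : ¬ NR G s u w) : G.Adj u w := by
  obtain ⟨hne, S, hS, -, hu, hw⟩ := not_NR h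
  exact hS hu hw hne

lemma Extr.trans {n : ℕ} {G : SimpleGraph (Fin n)} [DecidableRel G.Adj] {s : ℕ} {A B : ℝ}
    (E : Extr G s A B) (x : Fin n → ℝ) (hx : IsMx G s A B x) (hpos : ∀ i, 0 < x i)
    (u v w : Fin n) (hv : ∃ S ∈ G.cliqueFinset s, v ∈ S) (h1 : NR G s u v) (h2 : NR G s v w) :
    NR G s u w := by
  by_contra h
  obtain ⟨hne, S, hS, hc, hu, hw⟩ := not_NR h
  rcases h1 with rfl | ⟨a1, a2⟩
  · exact h h2
  rcases h2 with rfl | ⟨b1, b2⟩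
  · exact h (Or.inr ⟨a1, a2⟩)
  obtain ⟨T, hT, hvT⟩ := hv
  by_cases hvu : v = u
  · subst hvu; exact a1 T hT hvT hvT
  by_cases hvw : v = w
  · subst hvw; exact b1 T hT hvT hvT
  exact E.no_bad x hx hpos u w v hne hvu hvw S hS hc hu hw T hT hvT a1 b1.symm a2 b2.symm

theorem equality_cases {n : ℕ} (G : SimpleGraph (Fin n)) [DecidableRel G.Adj]
    (s : ℕ) (hs : 1 ≤ s) (hsw : s < G.cliqueNum)
    (x : Fin n → ℝ) (hx : ∀ i, 0 < x i) :
    (fClique G (s + 1) x / (G.cliqueNum.choose (s + 1) : ℝ)) ^ ((1 : ℝ) / ((s : ℝ) + 1))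
        = (fClique G s x / (G.cliqueNum.choose s : ℝ)) ^ ((1 : ℝ) / (s : ℝ))
      ↔ ∃ V : Fin G.cliqueNum → Finset (Fin n),
          (∀ i, (V i).Nonempty) ∧
          (∀ i j, i ≠ j → Disjoint (V i) (V j)) ∧
          (∀ v : Fin n, (∃ S ∈ G.cliqueFinset s, v ∈ S) ↔ ∃ i, v ∈ V i) ∧
          (∀ i, ∀ u ∈ V i, ∀ w ∈ V i, ¬ G.Adj u w) ∧
          (∀ i j, i ≠ j → ∀ u ∈ V i, ∀ w ∈ V j, G.Adj u w) ∧
          (∀ i j, ∑ v ∈ V i, x v = ∑ v ∈ V j, x v) := by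
  have hx0 : ∀ i, 0 ≤ x i := fun i => (hx i).le
  change (famE (G.cliqueFinset (s+1)) x / (G.cliqueNum.choose (s + 1) : ℝ)) ^
      ((1 : ℝ) / ((s : ℝ) + 1))
    = (famE (G.cliqueFinset s) x / (G.cliqueNum.choose s : ℝ)) ^ ((1 : ℝ) / (s : ℝ)) ↔ _
  rw [rpow_equiv _ _ (div_nonneg (famE_nonneg _ _ hx0) (Nat.cast_nonneg _))
    (div_nonneg (famE_nonneg _ _ hx0) (Nat.cast_nonneg _)) s hs]
  obtain ⟨K, hK⟩ := G.exists_isNClique_cliqueNum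
  have hKc := hK.card_eq
  have subK : ∀ t (P : Finset (Fin n)), P ⊆ K → P.card ≤ t → t ≤ G.cliqueNum →
      ∃ T ∈ G.cliqueFinset t, P ⊆ T := by
    intro t P hP h1 h2
    obtain ⟨T, a1, a2, a3⟩ := Finset.exists_subsuperset_card_eq hP h1 (by omega)
    refine ⟨T, ?_, a1⟩
    rw [SimpleGraph.mem_cliqueFinset_iff]
    exact ⟨hK.isClique.subset (by exact_mod_cast a2), a3⟩
  constructor
  · intro heq
    have hA : 0 < famE (G.cliqueFinset s) x := by
      obtain ⟨T, hT, -⟩ := subK s ∅ (by simp) (by simp) hsw.le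
      exact famE_pos _ _ hx0 T hT fun i _ => hx i
    have hB : 0 < famE (G.cliqueFinset (s+1)) x := by
      obtain ⟨T, hT, -⟩ := subK (s+1) ∅ (by simp) (by simp) hsw
      exact famE_pos _ _ hx0 T hT fun i _ => hx i
    have E : Extr G s (famE (G.cliqueFinset s) x) (famE (G.cliqueFinset (s+1)) x) :=
      ⟨hs, hsw, hA, hB, heq⟩
    have hmx : IsMx G s (famE (G.cliqueFinset s) x) (famE (G.cliqueFinset (s+1)) x) x :=
      ⟨hx0, rfl, rfl⟩
    have tr := E.trans x hmx hx
    obtain ⟨k, hkK, hkinj, hksurj⟩ : ∃ k : Fin G.cliqueNum → Fin n, (∀ i, k i ∈ K) ∧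
        Function.Injective k ∧ ∀ v ∈ K, ∃ i, k i = v := by
      let e := K.equivFinOfCardEq hKc
      refine ⟨fun i => (e.symm i).1, fun i => (e.symm i).2, ?_, ?_⟩
      · intro i j hij
        exact e.symm.injective (Subtype.ext hij)
      · intro v hv
        exact ⟨e ⟨v, hv⟩, by simp⟩
    have hkR : ∀ i, ∃ S ∈ G.cliqueFinset s, k i ∈ S := by
      intro i
      obtain ⟨T, hT, h⟩ := subK s {k i} (by simpa using hkK i) (by simpa using hs) hsw.le
      exact ⟨T, hT, h (by simp)⟩
    have hkNR : ∀ i j, i ≠ j → ¬ NR G s (k i) (k j) := by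
      rintro i j hij (h | ⟨-, h⟩)
      · exact hij (hkinj h)
      · obtain ⟨T, hT, h'⟩ := subK (s+1) {k i, k j} (by
          intro v hv
          rcases Finset.mem_insert.1 hv with rfl | hv
          · exact hkK i
          · rw [Finset.mem_singleton.1 hv]; exact hkK j) (by
          have := Finset.card_le_two (a := k i) (b := k j); omega) hsw
        exact h T hT (h' (by simp)) (h' (by simp))
    have hex : ∀ v, ∃ i, NR G s v (k i) := by
      intro v
      by_contra hno
      push Not at hno
      have : G.IsNClique (G.cliqueNum + 1) (insert v K) := by
        refine hK.insert fun b hb => ?_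
        obtain ⟨i, rfl⟩ := hksurj b hb
        exact not_NR_adj (hno i)
      have h1 := SimpleGraph.IsClique.card_le_cliqueNum (tc := this.isClique)
      rw [this.card_eq] at h1
      omega
    classical
    let V : Fin G.cliqueNum → Finset (Fin n) := fun i =>
      Finset.univ.filter fun v => (∃ S ∈ G.cliqueFinset s, v ∈ S) ∧ NR G s v (k i)
    have memV : ∀ i v, v ∈ V i ↔ (∃ S ∈ G.cliqueFinset s, v ∈ S) ∧ NR G s v (k i) := by
      intro i v; simp [V]
    have hnot : ∀ i j, i ≠ j → ∀ v ∈ V i, ¬ NR G s v (k j) := by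
      intro i j hij v hv hj
      rw [memV] at hv
      exact hkNR i j hij (tr _ v _ hv.1 hv.2.symm hj)
    have p1 : ∀ i, (V i).Nonempty := fun i => ⟨k i, (memV i _).2 ⟨hkR i, Or.inl rfl⟩⟩
    have p2 : ∀ i j, i ≠ j → Disjoint (V i) (V j) := by
      intro i j hij
      rw [Finset.disjoint_left]
      intro v hi hj
      exact hnot i j hij v hi ((memV j v).1 hj).2
    have p3 : ∀ v : Fin n, (∃ S ∈ G.cliqueFinset s, v ∈ S) ↔ ∃ i, v ∈ V i := by
      intro v
      constructor
      · intro h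
        obtain ⟨i, hi⟩ := hex v
        exact ⟨i, (memV i v).2 ⟨h, hi⟩⟩
      · rintro ⟨i, hi⟩
        exact ((memV i v).1 hi).1
    have p4 : ∀ i, ∀ u ∈ V i, ∀ w ∈ V i, ¬ G.Adj u w := by
      intro i u hu w hw huw
      have c1 : G.IsNClique (G.cliqueNum - 1) (K.erase (k i)) := by
        refine ⟨hK.isClique.subset (by simp), ?_⟩
        rw [Finset.card_erase_of_mem (hkK i), hKc]
      have adj : ∀ v ∈ V i, ∀ b ∈ K.erase (k i), G.Adj v b := by
        intro v hv b hb
        obtain ⟨hne, hbK⟩ := Finset.mem_erase.1 hb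
        obtain ⟨j, rfl⟩ := hksurj b hbK
        exact not_NR_adj (hnot i j (fun h => hne (by rw [h])) v hv)
      have c2 := c1.insert (adj w hw)
      have c3 := c2.insert (a := u) (fun b hb => by
        rcases Finset.mem_insert.1 hb with rfl | hb
        · exact huw
        · exact adj u hu b hb)
      have h1 := SimpleGraph.IsClique.card_le_cliqueNum (tc := c3.isClique)
      rw [c3.card_eq] at h1
      omega
    have p5 : ∀ i j, i ≠ j → ∀ u ∈ V i, ∀ w ∈ V j, G.Adj u w := by
      intro i j hij u hu w hw
      apply not_NR_adj
      intro h
      have hw' := (memV j w).1 hw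
      exact hnot i j hij u hu (tr _ w _ hw'.1 h hw'.2)
    refine ⟨V, p1, p2, p3, p4, p5, ?_⟩
    rw [multipartite_famE G s _ x V p2 p3 p4 p5 hs s le_rfl,
      multipartite_famE G s _ x V p2 p3 p4 p5 hs (s+1) (by omega)] at heq
    rw [multipartite_famE G s _ x V p2 p3 p4 p5 hs (s+1) (by omega)] at hB
    intro i j
    exact maclaurin_eq_const (fun i => ∑ v ∈ V i, x v)
      (fun i => Finset.sum_nonneg fun v _ => hx0 v) Finset.univ G.cliqueNum (by simp) s hs hsw
      (div_pos hB (by exact_mod_cast Nat.choose_pos hsw)) heq i (Finset.mem_univ _) j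
      (Finset.mem_univ _)
  · rintro ⟨V, -, p2, p3, p4, p5, p6⟩
    rw [multipartite_famE G s _ x V p2 p3 p4 p5 hs s le_rfl,
      multipartite_famE G s _ x V p2 p3 p4 p5 hs (s+1) (by omega)]
    have i0 : Fin G.cliqueNum := ⟨0, by omega⟩
    have c1 := nP_const G.cliqueNum (fun i => ∑ v ∈ V i, x v) _ (fun i => p6 i i0) s hsw.le
    have c2 := nP_const G.cliqueNum (fun i => ∑ v ∈ V i, x v) _ (fun i => p6 i i0) (s+1) hsw
    unfold nP at c1 c2
    rw [c1, c2, ← pow_mul, ← pow_mul, mul_comm]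
end

section
/- Let G be a simple graph on n vertices with clique number ω. Then for every integer s with 1 ≤ s ≤ ω, the number of s-cliques satisfies k_s(G) ≤ C(ω,s)·(n/ω)^s. -/
open Finset

namespace MoonMoser

variable {n : ℕ} (G : SimpleGraph (Fin n)) [DecidableRel G.Adj]

/-- Common neighbourhood of a vertex set. -/
def cn (C : Finset (Fin n)) : Finset (Fin n) := univ.filter (fun v => ∀ c ∈ C, G.Adj v c)

lemma mem_cn {C : Finset (Fin n)} {v : Fin n} : v ∈ cn G C ↔ ∀ c ∈ C, G.Adj v c := by
  simp [cn]

lemma double_count (t : ℕ) (f : Finset (Fin n) → ℝ) :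
    ∑ C ∈ G.cliqueFinset t, (#(cn G C) : ℝ) * f C
      = ∑ A ∈ G.cliqueFinset (t + 1), ∑ a ∈ A, f (A.erase a) := by
  have h1 : ∀ C ∈ G.cliqueFinset t, (#(cn G C) : ℝ) * f C = ∑ v ∈ cn G C, f C := by
    intro C _
    simp
  rw [sum_congr rfl h1, sum_sigma', sum_sigma']
  have key : ∀ (C : Finset (Fin n)) (v : Fin n), v ∈ cn G C → v ∉ C := by
    intro C v hv hC
    exact G.loopless.irrefl v ((mem_cn G).1 hv v hC)
  refine sum_bij' (fun x _ => ⟨insert x.2 x.1, x.2⟩) (fun x _ => ⟨x.1.erase x.2, x.2⟩)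
    ?_ ?_ ?_ ?_ ?_
  · rintro ⟨C, v⟩ h
    simp only [mem_sigma, SimpleGraph.mem_cliqueFinset_iff] at h ⊢
    exact ⟨h.1.insert ((mem_cn G).1 h.2), mem_insert_self _ _⟩
  · rintro ⟨A, a⟩ h
    simp only [mem_sigma, SimpleGraph.mem_cliqueFinset_iff] at h ⊢
    obtain ⟨h1, h2⟩ := h
    refine ⟨⟨h1.1.subset (by simp), by rw [card_erase_of_mem h2, h1.2]; rfl⟩, ?_⟩
    rw [mem_cn]
    intro c hc
    exact h1.1 h2 (mem_of_mem_erase hc) (ne_of_mem_erase hc).symm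
  · rintro ⟨C, v⟩ h
    simp only [mem_sigma] at h
    simp [erase_insert (key C v h.2)]
  · rintro ⟨A, a⟩ h
    simp only [mem_sigma] at h
    simp [insert_erase h.2]
  · rintro ⟨C, v⟩ h
    simp only [mem_sigma] at h
    simp [erase_insert (key C v h.2)]

lemma local_count (t : ℕ) (A : Finset (Fin n)) (hA : #A = t + 1) :
    ∑ a ∈ A, (#(cn G (A.erase a)) : ℝ) ≤ n + t * #(cn G A) := by
  have h : ∑ a ∈ A, #(cn G (A.erase a)) ≤ n + t * #(cn G A) := by
    have h1 : ∑ a ∈ A, #(cn G (A.erase a))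
        = ∑ v : Fin n, #(A.filter (fun a => v ∈ cn G (A.erase a))) := by
      simp only [card_filter]
      rw [sum_comm]
      refine sum_congr rfl fun a _ => ?_
      rw [← card_filter]
      congr 1
      ext; simp
    have h2 : n + t * #(cn G A) = ∑ v : Fin n, (1 + t * if v ∈ cn G A then 1 else 0) := by
      rw [sum_add_distrib, ← mul_sum, ← card_filter]
      simp
    rw [h1, h2]
    refine sum_le_sum fun v _ => ?_
    split_ifs with hv
    · refine (card_filter_le _ _).trans ?_
      omega
    · rw [mul_zero, add_zero, card_le_one]
      intro a ha b hb
      by_contra hab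
      simp only [mem_filter, mem_cn, mem_erase] at ha hb
      apply hv
      rw [mem_cn]
      intro c hc
      by_cases hca : c = a
      · exact hb.2 c ⟨by rw [hca]; exact hab, hc⟩
      · exact ha.2 c ⟨hca, hc⟩
  exact_mod_cast h

/-- The Moon–Moser inequality. -/
lemma moon_moser (t : ℕ) :
    (((t : ℝ) + 1) * #(G.cliqueFinset (t + 1))) ^ 2 ≤
      #(G.cliqueFinset t) * (n * #(G.cliqueFinset (t + 1))
        + t * ((t + 2) * #(G.cliqueFinset (t + 2)))) := by
  have e : ∀ t : ℕ, ∑ C ∈ G.cliqueFinset t, (#(cn G C) : ℝ)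
      = ((t : ℝ) + 1) * #(G.cliqueFinset (t + 1)) := by
    intro t
    have := double_count G t (fun _ => 1)
    simp only [mul_one] at this
    rw [this, mul_comm, ← nsmul_eq_mul, ← sum_const]
    refine sum_congr rfl fun A hA => ?_
    rw [SimpleGraph.mem_cliqueFinset_iff] at hA
    simp [hA.2]
  have cs := sq_sum_le_card_mul_sum_sq (s := G.cliqueFinset t) (f := fun C => (#(cn G C) : ℝ))
  rw [e t] at cs
  refine cs.trans (mul_le_mul_of_nonneg_left ?_ (Nat.cast_nonneg _))
  have h2 := double_count G t (fun C => (#(cn G C) : ℝ))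
  simp only [pow_two]
  rw [h2]
  have e2 := e (t + 1)
  push_cast at e2
  calc _ ≤ ∑ A ∈ G.cliqueFinset (t + 1), ((n : ℝ) + t * #(cn G A)) := by
        refine sum_le_sum fun A hA => local_count G t A ?_
        rw [SimpleGraph.mem_cliqueFinset_iff] at hA
        exact hA.2
    _ = _ := by
        rw [sum_add_distrib, ← mul_sum, e2]
        simp only [sum_const, nsmul_eq_mul]
        ring

lemma ratio (j t : ℕ) (h : t + j = G.cliqueNum) :
    ((t : ℝ) + 1) * #(G.cliqueFinset (t + 1)) * ((t : ℝ) + j) ≤ n * j * #(G.cliqueFinset t) := by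
  induction j generalizing t with
  | zero =>
    have : #(G.cliqueFinset (t + 1)) = 0 := by
      rw [card_eq_zero, eq_empty_iff_forall_notMem]
      intro A hA
      rw [SimpleGraph.mem_cliqueFinset_iff] at hA
      have := SimpleGraph.IsClique.card_le_cliqueNum (tc := hA.1)
      have := hA.2
      omega
    simp [this]
  | succ j ih =>
    have ih := ih (t + 1) (by omega)
    have mm := moon_moser G t
    push_cast at ih ⊢
    rw [show t + 1 + 1 = t + 2 from rfl] at ih
    have ha : (0 : ℝ) ≤ #(G.cliqueFinset t) := Nat.cast_nonneg _
    have hb : (0 : ℝ) ≤ #(G.cliqueFinset (t + 1)) := Nat.cast_nonneg _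
    have ht : (0 : ℝ) ≤ t := Nat.cast_nonneg _
    have hj : (0 : ℝ) ≤ j := Nat.cast_nonneg _
    have hn : (0 : ℝ) ≤ n := Nat.cast_nonneg _
    generalize (#(G.cliqueFinset t) : ℝ) = a at *
    generalize (#(G.cliqueFinset (t + 1)) : ℝ) = b at *
    generalize (#(G.cliqueFinset (t + 2)) : ℝ) = c at *
    generalize (t : ℝ) = x at *
    generalize (j : ℝ) = y at *
    generalize (n : ℝ) = m at *
    rcases hb.eq_or_lt with hb0 | hb0
    · rw [← hb0]
      have : 0 ≤ m * (y + 1) * a := by positivity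
      linarith
    · have hpos : 0 < b * (x + 1) := by positivity
      refine le_of_mul_le_mul_left ?_ hpos
      have e1 : ((x + 1) * b) ^ 2 * (x + y + 1)
          ≤ a * (m * b + x * ((x + 2) * c)) * (x + y + 1) :=
        mul_le_mul_of_nonneg_right mm (by positivity)
      have e2 := mul_le_mul_of_nonneg_left ih (mul_nonneg ha ht)
      linarith

end MoonMoser

/-- For a graph `G` on `n` vertices with clique number `ω` and `1 ≤ s ≤ ω`, the number of
`s`-cliques satisfies `k_s(G) ≤ C(ω,s)·(n/ω)^s`. -/
theorem clique_count_upper_bound {n : ℕ} (G : SimpleGraph (Fin n)) [DecidableRel G.Adj]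
    (s : ℕ) (hs : 1 ≤ s) (hsw : s ≤ G.cliqueNum) :
    (#(G.cliqueFinset s) : ℝ)
      ≤ (G.cliqueNum.choose s : ℝ) * ((n : ℝ) / (G.cliqueNum : ℝ)) ^ s := by
  have hw : (0 : ℝ) < G.cliqueNum := by exact_mod_cast (by omega : 0 < G.cliqueNum)
  have main : ∀ t, t ≤ G.cliqueNum → (#(G.cliqueFinset t) : ℝ) * (G.cliqueNum : ℝ) ^ t
      ≤ (G.cliqueNum.choose t : ℝ) * (n : ℝ) ^ t := by
    intro t
    induction t with
    | zero =>
      intro _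
      have : #(G.cliqueFinset 0) ≤ 1 := by
        simpa using G.card_cliqueFinset_le (n := 0)
      simpa using this
    | succ t ih =>
      intro ht
      have ih := ih (by omega)
      obtain ⟨j, hj⟩ := Nat.exists_eq_add_of_le (by omega : t ≤ G.cliqueNum)
      have r := MoonMoser.ratio G j t hj.symm
      have hc := Nat.choose_succ_right_eq G.cliqueNum t
      rw [show G.cliqueNum - t = j by omega] at hc
      have hc' : (G.cliqueNum.choose (t + 1) : ℝ) * (t + 1) = G.cliqueNum.choose t * j := by
        exact_mod_cast hc
      have hj' : (t : ℝ) + j = G.cliqueNum := by exact_mod_cast hj.symm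
      rw [hj'] at r
      have ht0 : (0 : ℝ) < (t : ℝ) + 1 := by positivity
      refine le_of_mul_le_mul_left ?_ ht0
      calc ((t : ℝ) + 1) * (#(G.cliqueFinset (t + 1)) * (G.cliqueNum : ℝ) ^ (t + 1))
          = (((t : ℝ) + 1) * #(G.cliqueFinset (t + 1)) * G.cliqueNum) * (G.cliqueNum : ℝ) ^ t := by
            ring
        _ ≤ (n * j * #(G.cliqueFinset t)) * (G.cliqueNum : ℝ) ^ t := by gcongr
        _ = n * j * (#(G.cliqueFinset t) * (G.cliqueNum : ℝ) ^ t) := by ring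
        _ ≤ n * j * ((G.cliqueNum.choose t : ℝ) * (n : ℝ) ^ t) := by gcongr
        _ = (G.cliqueNum.choose t * j) * (n : ℝ) ^ (t + 1) := by ring
        _ = _ := by rw [← hc']; ring
  rw [div_pow, ← mul_div_assoc, le_div_iff₀ (by positivity)]
  exact main s hsw
end

section
/- Let G be a simple graph on vertex set [n] with clique number ω. Then for every integer s with 1 ≤ s ≤ ω and every x = (x_1,...,x_n) ∈ ℝ^n with x ≥ 0, one has f_s(G,x) ≤ C(ω,s)·((x_1 + ··· + x_n)/ω)^s. -/
open Finset

lemma bern_aux (u d : ℝ) (hu : 0 ≤ u) (hd : 0 ≤ u + d) (s : ℕ) :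
    u ^ (s + 1) + (s + 1) * u ^ s * d ≤ (u + d) ^ (s + 1) := by
  induction s with
  | zero => simp
  | succ k ih =>
    have h1 := mul_le_mul_of_nonneg_right ih hd
    have h2 : 0 ≤ ((k : ℝ) + 1) * u ^ k * d ^ 2 := by positivity
    push_cast
    calc _ ≤ u ^ (k + 1 + 1) + (k + 1 + 1) * u ^ (k + 1) * d + ((k : ℝ) + 1) * u ^ k * d ^ 2 := by
          linarith
      _ = (u ^ (k + 1) + (k + 1) * u ^ k * d) * (u + d) := by ring
      _ ≤ _ := by rw [pow_succ (u + d) (k + 1)]; exact h1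

lemma step_aux (m s : ℕ) (u a : ℝ) (hu : 0 ≤ u) (ha : 0 ≤ a) :
    (m.choose (s + 1) : ℝ) * u ^ (s + 1) + a * (m.choose s * u ^ s)
      ≤ ((m + 1).choose (s + 1) : ℝ) * ((m * u + a) / ((m + 1 : ℕ) : ℝ)) ^ (s + 1) := by
  have hm : (0 : ℝ) < (m : ℝ) + 1 := by positivity
  have h1 : ((m : ℝ) + 1) * m.choose s = (m + 1).choose (s + 1) * (s + 1) := by
    exact_mod_cast Nat.add_one_mul_choose_eq m s
  have h2 : ((m + 1).choose (s + 1) : ℝ) = m.choose s + m.choose (s + 1) := by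
    exact_mod_cast Nat.choose_succ_succ m s
  have e : (m * u + a) / ((m + 1 : ℕ) : ℝ) = u + (a - u) / (m + 1) := by
    push_cast; field_simp; ring
  have hd : 0 ≤ u + (a - u) / ((m : ℝ) + 1) := by rw [← e]; positivity
  have hb := mul_le_mul_of_nonneg_left (bern_aux u _ hu hd s)
    (Nat.cast_nonneg (α := ℝ) ((m + 1).choose (s + 1)))
  rw [e]
  refine le_trans (le_of_eq ?_) hb
  have h3 : (m.choose s : ℝ) = (m + 1).choose (s + 1) * (s + 1) / (m + 1) := by
    field_simp; linarith
  have h4 : (m.choose (s + 1) : ℝ) = (m + 1).choose (s + 1) - m.choose s := by linarith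
  rw [h4, h3]
  field_simp
  ring

lemma maclaurin_aux {α : Type*} [DecidableEq α] (x : α → ℝ) (hx : ∀ i, 0 ≤ x i) (m : ℕ) :
    ∀ (s : ℕ) (K : Finset α), K.card ≤ m →
      ∑ S ∈ K.powersetCard s, ∏ i ∈ S, x i ≤ (m.choose s : ℝ) * ((∑ i ∈ K, x i) / m) ^ s := by
  induction m with
  | zero =>
    intro s K hK
    have : K = ∅ := by simpa using hK
    subst this
    cases s with
    | zero => simp
    | succ s => rw [Finset.powersetCard_eq_empty.2 (by simp)]; simp
  | succ m ih =>
    intro s K hK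
    cases s with
    | zero => simp
    | succ s =>
      have key : ∀ K' : Finset α, K'.card ≤ m → (m : ℝ) * ((∑ i ∈ K', x i) / m) = ∑ i ∈ K', x i := by
        intro K' h
        rcases Nat.eq_zero_or_pos m with h0 | h0
        · subst h0
          have : K' = ∅ := by simpa using h
          simp [this]
        · field_simp
      rcases K.eq_empty_or_nonempty with rfl | ⟨a, haK⟩
      · rw [Finset.powersetCard_eq_empty.2 (by simp)]; simp
      · obtain ⟨K', haK', rfl⟩ : ∃ K', a ∉ K' ∧ insert a K' = K :=
          ⟨K.erase a, by simp, Finset.insert_erase haK⟩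
        rw [Finset.card_insert_of_notMem haK'] at hK
        have hc : K'.card ≤ m := by omega
        rw [Finset.powersetCard_succ_insert haK', Finset.sum_union, Finset.sum_image,
          Finset.sum_insert haK']
        · have hst := step_aux m s ((∑ i ∈ K', x i) / m) (x a)
            (div_nonneg (Finset.sum_nonneg fun i _ => hx i) (Nat.cast_nonneg m)) (hx a)
          rw [key K' hc, add_comm (∑ i ∈ K', x i)] at hst
          refine le_trans (add_le_add (ih (s + 1) K' hc) ?_) hst
          have : ∀ S ∈ K'.powersetCard s, ∏ i ∈ insert a S, x i = x a * ∏ i ∈ S, x i := by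
            intro S hS
            rw [Finset.prod_insert]
            exact fun h => haK' ((Finset.mem_powersetCard.1 hS).1 h)
          rw [Finset.sum_congr rfl this, ← Finset.mul_sum]
          exact mul_le_mul_of_nonneg_left (ih s K' hc) (hx a)
        · intro S hS T hT h
          have hS' : a ∉ S := fun h => haK' ((Finset.mem_powersetCard.1 hS).1 h)
          have hT' : a ∉ T := fun h => haK' ((Finset.mem_powersetCard.1 hT).1 h)
          rw [← Finset.erase_insert hS', ← Finset.erase_insert hT']
          exact congrArg (fun U => Finset.erase U a) h
        · rw [Finset.disjoint_left]
          intro S hS hS2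
          obtain ⟨T, _, rfl⟩ := Finset.mem_image.1 hS2
          exact haK' ((Finset.mem_powersetCard.1 hS).1 (Finset.mem_insert_self a T))

/-- Move all the weight of `j` to `i`. -/
def shiftW {n : ℕ} (x : Fin n → ℝ) (i j : Fin n) : Fin n → ℝ :=
  fun k => if k = j then 0 else if k = i then x i + x j else x k

lemma prod_shift_ne {n : ℕ} (x : Fin n → ℝ) (i j : Fin n) (S : Finset (Fin n))
    (hi : i ∉ S) (hj : j ∉ S) : ∏ k ∈ S, shiftW x i j k = ∏ k ∈ S, x k := by
  refine Finset.prod_congr rfl fun k hk => ?_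
  have h1 : k ≠ i := fun h => hi (h ▸ hk)
  have h2 : k ≠ j := fun h => hj (h ▸ hk)
  simp [shiftW, h1, h2]

lemma prod_shift_right {n : ℕ} (x : Fin n → ℝ) (i j : Fin n) (S : Finset (Fin n))
    (hj : j ∈ S) : ∏ k ∈ S, shiftW x i j k = 0 :=
  Finset.prod_eq_zero hj (by simp [shiftW])

lemma prod_shift_left {n : ℕ} (x : Fin n → ℝ) (i j : Fin n) (S : Finset (Fin n)) (hij : i ≠ j)
    (hi : i ∈ S) (hj : j ∉ S) :
    x i * ∏ k ∈ S, shiftW x i j k = (x i + x j) * ∏ k ∈ S, x k := by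
  rw [← Finset.mul_prod_erase S _ hi, ← Finset.mul_prod_erase S x hi,
    prod_shift_ne x i j _ (by simp) (by simp [hj])]
  simp [shiftW, hij]
  ring

lemma sum_shift {n : ℕ} (x : Fin n → ℝ) (i j : Fin n) (hij : i ≠ j) :
    ∑ k, shiftW x i j k = ∑ k, x k := by
  have hm : j ∈ (univ : Finset (Fin n)).erase i := by simp [hij.symm]
  rw [← Finset.add_sum_erase univ _ (mem_univ i), ← Finset.add_sum_erase _ _ hm,
    ← Finset.add_sum_erase univ x (mem_univ i), ← Finset.add_sum_erase _ x hm]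
  have : ∑ k ∈ (univ.erase i).erase j, shiftW x i j k = ∑ k ∈ (univ.erase i).erase j, x k := by
    refine Finset.sum_congr rfl fun k hk => ?_
    simp at hk
    simp [shiftW, hk]
  rw [this]
  simp [shiftW, hij]
  ring

lemma fClique_shift {n : ℕ} (G : SimpleGraph (Fin n)) [DecidableRel G.Adj] (s : ℕ)
    (x : Fin n → ℝ) (i j : Fin n) (hij : i ≠ j) (hadj : ¬ G.Adj i j) :
    (x i + x j) * fClique G s x
      = x i * fClique G s (shiftW x i j) + x j * fClique G s (shiftW x j i) := by
  unfold fClique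
  rw [Finset.mul_sum, Finset.mul_sum, Finset.mul_sum, ← Finset.sum_add_distrib]
  refine Finset.sum_congr rfl fun S hS => ?_
  have hcl := ((SimpleGraph.mem_cliqueFinset_iff).1 hS).1
  by_cases hi : i ∈ S <;> by_cases hj : j ∈ S
  · exact absurd (hcl hi hj hij) hadj
  · rw [prod_shift_left x i j S hij hi hj, prod_shift_right x j i S hi]; ring
  · rw [prod_shift_left x j i S hij.symm hj hi, prod_shift_right x i j S hj]; ring
  · rw [prod_shift_ne x i j S hi hj, prod_shift_ne x j i S hj hi]; ring

lemma supp_shift {n : ℕ} (x : Fin n → ℝ) (i j : Fin n) (hi : x i ≠ 0)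
    (hj : x j ≠ 0) :
    (univ.filter fun k => shiftW x i j k ≠ 0).card < (univ.filter fun k => x k ≠ 0).card := by
  apply Finset.card_lt_card
  rw [Finset.ssubset_iff_of_subset]
  · exact ⟨j, by simp [hj], by simp [shiftW]⟩
  · intro k hk
    have hk := (Finset.mem_filter.1 hk).2
    refine Finset.mem_filter.2 ⟨mem_univ _, fun h => hk ?_⟩
    unfold shiftW
    by_cases h1 : k = j
    · simp [h1]
    · by_cases h2 : k = i
      · subst h2; exact absurd h hi
      · simp [h1, h2, h]

lemma shift_nonneg {n : ℕ} (x : Fin n → ℝ) (hx : ∀ i, 0 ≤ x i) (i j : Fin n) :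
    ∀ k, 0 ≤ shiftW x i j k := by
  intro k
  unfold shiftW
  have := hx i
  have := hx j
  have := hx k
  split_ifs <;> linarith

lemma fClique_bound_aux {n : ℕ} (G : SimpleGraph (Fin n)) [DecidableRel G.Adj] (s : ℕ) (N : ℕ) :
    ∀ x : Fin n → ℝ, (∀ i, 0 ≤ x i) → (univ.filter fun k => x k ≠ 0).card ≤ N →
      fClique G s x
        ≤ (G.cliqueNum.choose s : ℝ) * ((∑ i, x i) / (G.cliqueNum : ℝ)) ^ s := by
  induction N using Nat.strong_induction_on with
  | _ N ih =>
  intro x hx hN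
  set K := univ.filter fun k => x k ≠ 0 with hK
  by_cases hcl : G.IsClique (K : Set (Fin n))
  · have hcard : K.card ≤ G.cliqueNum := hcl.card_le_cliqueNum
    have hmac := maclaurin_aux x hx G.cliqueNum s K hcard
    have hsum : ∑ i ∈ K, x i = ∑ i, x i := by
      rw [hK, Finset.sum_filter_ne_zero]
    rw [hsum] at hmac
    refine le_trans (le_of_eq ?_) hmac
    unfold fClique
    symm
    apply Finset.sum_subset
    · intro S hS
      rw [Finset.mem_powersetCard] at hS
      rw [SimpleGraph.mem_cliqueFinset_iff]
      exact ⟨hcl.subset (by exact_mod_cast hS.1), hS.2⟩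
    · intro S hS hS2
      rw [SimpleGraph.mem_cliqueFinset_iff] at hS
      have : ¬ S ⊆ K := fun h => hS2 (Finset.mem_powersetCard.2 ⟨h, hS.2⟩)
      obtain ⟨k, hk, hkK⟩ := Finset.not_subset.1 this
      exact Finset.prod_eq_zero hk (by simpa [hK] using hkK)
  · obtain ⟨i, hi, j, hj, hij, hadj⟩ : ∃ i, x i ≠ 0 ∧ ∃ j, x j ≠ 0 ∧ i ≠ j ∧ ¬ G.Adj i j := by
      by_contra hcon
      push Not at hcon
      apply hcl
      intro i hi j hj hij
      exact hcon i (by simpa [hK] using hi) j (by simpa [hK] using hj) hij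
    have h1 := ih _ (lt_of_lt_of_le (supp_shift x i j hi hj) hN) _ (shift_nonneg x hx i j) le_rfl
    have h2 := ih _ (lt_of_lt_of_le (supp_shift x j i hj hi) hN) _ (shift_nonneg x hx j i) le_rfl
    rw [sum_shift x i j hij] at h1
    rw [sum_shift x j i hij.symm] at h2
    have hpi : 0 < x i := lt_of_le_of_ne (hx i) hi.symm
    have hpj : 0 < x j := lt_of_le_of_ne (hx j) hj.symm
    have h3 := fClique_shift G s x i j hij hadj
    refine le_of_mul_le_mul_left ?_ (add_pos hpi hpj)
    rw [h3, add_mul]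
    exact add_le_add (mul_le_mul_of_nonneg_left h1 hpi.le) (mul_le_mul_of_nonneg_left h2 hpj.le)

/-- For a graph `G` with clique number `ω`, `1 ≤ s ≤ ω`, and `x ≥ 0`,
`f_s(G,x) ≤ C(ω,s)·((x_1 + ⋯ + x_n)/ω)^s`. -/
theorem fClique_upper_bound {n : ℕ} (G : SimpleGraph (Fin n)) [DecidableRel G.Adj]
    (s : ℕ) (hs : 1 ≤ s) (hsw : s ≤ G.cliqueNum)
    (x : Fin n → ℝ) (hx : ∀ i, 0 ≤ x i) :
    fClique G s x
      ≤ (G.cliqueNum.choose s : ℝ) * ((∑ i, x i) / (G.cliqueNum : ℝ)) ^ s := by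
  exact fClique_bound_aux G s _ x hx le_rfl
end

section
/- Let s ≥ 1 be an integer and let x_1,...,x_{s+1} be nonnegative reals such that the elementary symmetric polynomial of degree s satisfies e_s(x_1,...,x_{s+1}) = 1. Then x_1·x_2···x_{s+1} ≤ (s+1)^{-(s+1)/s}, and this bound is attained at x_1 = ··· = x_{s+1} = (s+1)^{-1/s}. -/
open Finset

lemma sum_powersetCard_eq (s : ℕ) (x : Fin (s + 1) → ℝ) :
    (∑ S ∈ (Finset.univ : Finset (Fin (s + 1))).powersetCard s, ∏ i ∈ S, x i)
      = ∑ i, ∏ j ∈ Finset.univ.erase i, x j := by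
  have hinj : Set.InjOn (fun i : Fin (s + 1) => (Finset.univ : Finset (Fin (s + 1))).erase i)
      (Finset.univ : Finset (Fin (s + 1))) := by
    intro a _ b _ hab
    by_contra hne
    have h1 : a ∈ (Finset.univ : Finset (Fin (s + 1))).erase b := by simp [hne]
    have hab' : (Finset.univ : Finset (Fin (s + 1))).erase a = Finset.univ.erase b := hab
    rw [← hab'] at h1
    simp at h1
  have himg : (Finset.univ : Finset (Fin (s + 1))).image
      (fun i => (Finset.univ : Finset (Fin (s + 1))).erase i)
      = (Finset.univ : Finset (Fin (s + 1))).powersetCard s := by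
    apply Finset.eq_of_subset_of_card_le
    · intro S hS
      obtain ⟨i, -, rfl⟩ := Finset.mem_image.1 hS
      simp [Finset.mem_powersetCard]
    · rw [Finset.card_image_of_injOn hinj]
      simp
  rw [← himg, Finset.sum_image hinj]

lemma prod_prod_erase (s : ℕ) (x : Fin (s + 1) → ℝ) :
    ∏ i, ∏ j ∈ Finset.univ.erase i, x j = (∏ i, x i) ^ s := by
  rw [Finset.prod_comm' (t' := Finset.univ) (s' := fun j => Finset.univ.erase j)
    (by intro a b; simp [eq_comm]), ← Finset.prod_pow]
  simp

/-- If `x_1, …, x_{s+1}` are nonnegative reals whose elementary symmetric polynomial of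
degree `s` equals `1`, then `x_1 ⋯ x_{s+1} ≤ (s+1)^{-(s+1)/s}`, and the bound is attained
at `x_1 = ⋯ = x_{s+1} = (s+1)^{-1/s}`. -/
theorem esymm_prod_bound (s : ℕ) (hs : 1 ≤ s) :
    (∀ x : Fin (s + 1) → ℝ, (∀ i, 0 ≤ x i) →
        (∑ S ∈ (Finset.univ : Finset (Fin (s + 1))).powersetCard s, ∏ i ∈ S, x i) = 1 →
        ∏ i, x i ≤ ((s : ℝ) + 1) ^ (-(((s : ℝ) + 1) / (s : ℝ)))) ∧
    ((∑ S ∈ (Finset.univ : Finset (Fin (s + 1))).powersetCard s,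
        ∏ _i ∈ S, ((s : ℝ) + 1) ^ (-(1 : ℝ) / (s : ℝ))) = 1 ∧
      (∏ _i : Fin (s + 1), ((s : ℝ) + 1) ^ (-(1 : ℝ) / (s : ℝ)))
        = ((s : ℝ) + 1) ^ (-(((s : ℝ) + 1) / (s : ℝ)))) := by
  have hs0 : (0 : ℝ) < s := by exact_mod_cast hs
  have hp : (0 : ℝ) < (s : ℝ) + 1 := by positivity
  have hpow : (((s : ℝ) + 1) ^ (-(1 : ℝ) / (s : ℝ))) ^ s = ((s : ℝ) + 1)⁻¹ := by
    rw [← Real.rpow_natCast, ← Real.rpow_mul hp.le, div_mul_cancel₀ _ hs0.ne', Real.rpow_neg_one]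
  have hprod : (((s : ℝ) + 1) ^ (-(1 : ℝ) / (s : ℝ))) ^ (s + 1)
      = ((s : ℝ) + 1) ^ (-(((s : ℝ) + 1) / (s : ℝ))) := by
    rw [← Real.rpow_natCast, ← Real.rpow_mul hp.le]
    congr 1
    push_cast
    ring
  refine ⟨?_, ?_, ?_⟩
  · intro x hx h1
    rw [sum_powersetCard_eq] at h1
    have hz : ∀ i ∈ (Finset.univ : Finset (Fin (s + 1))),
        0 ≤ ∏ j ∈ Finset.univ.erase i, x j := fun i _ => Finset.prod_nonneg fun j _ => hx j
    have hP : 0 ≤ ∏ i, x i := Finset.prod_nonneg fun j _ => hx j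
    have key := Real.geom_mean_le_arith_mean_weighted Finset.univ
      (fun _ : Fin (s + 1) => ((s : ℝ) + 1)⁻¹) (fun i => ∏ j ∈ Finset.univ.erase i, x j)
      (fun _ _ => by positivity) (by simp [hp.ne']) hz
    rw [Real.finsetProd_rpow _ _ hz, prod_prod_erase, ← Finset.mul_sum, h1, mul_one] at key
    have h2 : (∏ i, x i) ^ s ≤ ((s : ℝ) + 1)⁻¹ ^ (s + 1) := by
      have := pow_le_pow_left₀ (by positivity) key (s + 1)
      rwa [← Real.rpow_natCast (_ ^ ((s : ℝ) + 1)⁻¹), ← Real.rpow_mul (by positivity),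
        Nat.cast_add_one, inv_mul_cancel₀ hp.ne', Real.rpow_one] at this
    rw [← hprod]
    refine le_of_pow_le_pow_left₀ (n := s) (by omega) (by positivity) ?_
    rw [← pow_mul, mul_comm, pow_mul, hpow]
    exact h2
  · rw [sum_powersetCard_eq s (fun _ => ((s : ℝ) + 1) ^ (-(1 : ℝ) / (s : ℝ)))]
    simp only [Finset.prod_const, Finset.card_erase_of_mem (Finset.mem_univ _), Finset.card_univ,
      Fintype.card_fin, Nat.add_sub_cancel, hpow, Finset.sum_const, nsmul_eq_mul]
    push_cast
    exact mul_inv_cancel₀ hp.ne'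
  · rw [Finset.prod_const, Finset.card_univ, Fintype.card_fin, hprod]
end

section
/- Let G be a simple graph on vertex set [n] and let 1 ≤ s < ω(G). Then there exists y ∈ S_s(G) such that f_{s+1}(G,y) ≥ f_{s+1}(G,x) for all x ∈ S_s(G), and the support {v ∈ [n] : y_v > 0} induces a complete subgraph of G. -/
open Finset

/-- Derivative-like coefficient. -/
noncomputable def dC {n : ℕ} (G : SimpleGraph (Fin n)) [DecidableRel G.Adj] (s : ℕ)
    (u : Fin n) (x : Fin n → ℝ) : ℝ :=
  ∑ S ∈ (G.cliqueFinset s).filter (fun S => u ∈ S), ∏ i ∈ S.erase u, x i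

/-- The part not involving `u` nor `v`. -/
noncomputable def aC {n : ℕ} (G : SimpleGraph (Fin n)) [DecidableRel G.Adj] (s : ℕ)
    (u v : Fin n) (x : Fin n → ℝ) : ℝ :=
  ∑ S ∈ (G.cliqueFinset s).filter (fun S => u ∉ S ∧ v ∉ S), ∏ i ∈ S, x i

section
variable {n : ℕ} (G : SimpleGraph (Fin n)) [DecidableRel G.Adj]

theorem not_both {s : ℕ} {u v : Fin n} (huv : u ≠ v) (hn : ¬ G.Adj u v)
    {S : Finset (Fin n)} (hS : S ∈ G.cliqueFinset s) (hu : u ∈ S) : v ∉ S := by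
  intro hv
  rw [SimpleGraph.mem_cliqueFinset_iff] at hS
  exact hn (hS.isClique (by exact_mod_cast hu) (by exact_mod_cast hv) huv)

theorem f_decomp (s : ℕ) {u v : Fin n} (huv : u ≠ v) (hn : ¬ G.Adj u v) (x : Fin n → ℝ) :
    fClique G s x = aC G s u v x + x u * dC G s u x + x v * dC G s v x := by
  unfold fClique aC dC
  rw [Finset.mul_sum, Finset.mul_sum, Finset.sum_filter, Finset.sum_filter, Finset.sum_filter,
    ← Finset.sum_add_distrib, ← Finset.sum_add_distrib]
  refine Finset.sum_congr rfl fun S hS => ?_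
  by_cases hu : u ∈ S
  · have hv := not_both G huv hn hS hu
    simp [hu, hv, Finset.mul_prod_erase]
  · by_cases hv : v ∈ S
    · simp [hu, hv, Finset.mul_prod_erase]
    · simp [hu, hv]

theorem aC_congr (s : ℕ) {u v : Fin n} {x z : Fin n → ℝ}
    (h : ∀ i, i ≠ u → i ≠ v → z i = x i) : aC G s u v z = aC G s u v x := by
  unfold aC
  refine Finset.sum_congr rfl fun S hS => Finset.prod_congr rfl fun i hi => h i ?_ ?_
  · rintro rfl; exact (Finset.mem_filter.1 hS).2.1 hi
  · rintro rfl; exact (Finset.mem_filter.1 hS).2.2 hi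

theorem dC_congr (s : ℕ) {u v : Fin n} (huv : u ≠ v) (hn : ¬ G.Adj u v) {x z : Fin n → ℝ}
    (h : ∀ i, i ≠ u → i ≠ v → z i = x i) : dC G s u z = dC G s u x := by
  unfold dC
  refine Finset.sum_congr rfl fun S hS => Finset.prod_congr rfl fun i hi => h i ?_ ?_
  · exact (Finset.mem_erase.1 hi).1
  · rintro rfl
    rw [Finset.mem_filter] at hS
    exact not_both G huv hn hS.1 hS.2 (Finset.mem_erase.1 hi).2

theorem dC_nonneg (s : ℕ) (u : Fin n) {x : Fin n → ℝ} (hx : ∀ i, 0 ≤ x i) :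
    0 ≤ dC G s u x :=
  Finset.sum_nonneg fun _ _ => Finset.prod_nonneg fun i _ => hx i

theorem erase_mem {s : ℕ} {S : Finset (Fin n)} (hS : S ∈ G.cliqueFinset (s + 1)) {w : Fin n}
    (hw : w ∈ S) : S.erase w ∈ G.cliqueFinset s := by
  rw [SimpleGraph.mem_cliqueFinset_iff, SimpleGraph.isNClique_iff] at *
  refine ⟨hS.1.subset (by simp), ?_⟩
  rw [Finset.card_erase_of_mem hw, hS.2]; rfl

theorem dC_zero {s : ℕ} (hs : 1 ≤ s) (u : Fin n) {x : Fin n → ℝ} (hx : ∀ i, 0 ≤ x i)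
    (h : dC G s u x = 0) : dC G (s + 1) u x = 0 := by
  unfold dC at *
  rw [Finset.sum_eq_zero_iff_of_nonneg (fun _ _ => Finset.prod_nonneg fun i _ => hx i)] at h
  refine Finset.sum_eq_zero fun S hS => ?_
  rw [Finset.mem_filter] at hS
  have hc : (S.erase u).card = s := by
    have := (SimpleGraph.mem_cliqueFinset_iff.1 (erase_mem G hS.1 hS.2)).card_eq
    exact this
  obtain ⟨w, hw⟩ : (S.erase u).Nonempty := by rw [← Finset.card_pos]; omega
  have hw' := Finset.mem_erase.1 hw
  have := h (S.erase w) (Finset.mem_filter.2 ⟨erase_mem G hS.1 hw'.2,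
    Finset.mem_erase.2 ⟨hw'.1.symm, hS.2⟩⟩)
  rw [← Finset.mul_prod_erase _ _ hw, Finset.erase_right_comm, this, mul_zero]

theorem step_aux_s12 {s : ℕ} (hs : 1 ≤ s) {u v : Fin n} (huv : u ≠ v) (hn : ¬ G.Adj u v)
    {x : Fin n → ℝ} (hx : ∀ i, 0 ≤ x i) (hu : x u ≠ 0) (hv : x v ≠ 0)
    (h : dC G s v x = 0 ∨ 0 < dC G s u x ∧
      dC G (s+1) v x * dC G s u x ≤ dC G (s+1) u x * dC G s v x) :
    ∃ z : Fin n → ℝ, (∀ i, 0 ≤ z i) ∧ fClique G s z = fClique G s x ∧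
      fClique G (s+1) x ≤ fClique G (s+1) z ∧
      (univ.filter (fun i => z i ≠ 0)).card < (univ.filter (fun i => x i ≠ 0)).card := by
  have hB := dC_nonneg G s u hx
  have hC := dC_nonneg G s v hx
  have hz := dC_zero G hs v hx
  have hn' : ¬ G.Adj v u := fun h => hn h.symm
  set t := x v * (dC G s v x / dC G s u x) with ht
  have ht0 : 0 ≤ t := mul_nonneg (hx v) (div_nonneg hC hB)
  let z : Fin n → ℝ := fun i => if i = v then 0 else if i = u then x u + t else x i
  have zv : z v = 0 := by simp [z]
  have zu : z u = x u + t := by simp [z, huv]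
  have zo : ∀ i, i ≠ u → i ≠ v → z i = x i := fun i h1 h2 => by simp [z, h1, h2]
  refine ⟨z, ?_, ?_, ?_, ?_⟩
  · intro i
    simp only [z]
    split_ifs
    · exact le_rfl
    · exact add_nonneg (hx u) ht0
    · exact hx i
  · rw [f_decomp G s huv hn, f_decomp G s huv hn x, aC_congr G s zo, dC_congr G s huv hn zo, zv, zu]
    rcases h with h | ⟨h, -⟩
    · simp [h, ht]
    · rw [ht]; field_simp; ring
  · rw [f_decomp G _ huv hn, f_decomp G _ huv hn z, aC_congr G _ zo, dC_congr G _ huv hn zo, zv, zu]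
    rcases h with h | ⟨h, h'⟩
    · simp [h, ht, hz h]
    · have : x v * dC G (s+1) v x ≤ t * dC G (s+1) u x := by
        rw [ht, mul_assoc]
        refine mul_le_mul_of_nonneg_left ?_ (hx v)
        rw [div_mul_eq_mul_div, le_div_iff₀ h]
        linarith
      linarith
  · apply Finset.card_lt_card
    rw [Finset.ssubset_iff_of_subset]
    · exact ⟨v, by simp [hv], by simp [zv]⟩
    · intro i hi
      simp only [Finset.mem_filter, Finset.mem_univ, true_and] at *
      by_cases h1 : i = v
      · exact h1 ▸ hv
      · by_cases h2 : i = u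
        · exact h2 ▸ hu
        · rwa [zo i h2 h1] at hi

theorem step {s : ℕ} (hs : 1 ≤ s) {u v : Fin n} (huv : u ≠ v) (hn : ¬ G.Adj u v)
    {x : Fin n → ℝ} (hx : ∀ i, 0 ≤ x i) (hu : x u ≠ 0) (hv : x v ≠ 0) :
    ∃ z : Fin n → ℝ, (∀ i, 0 ≤ z i) ∧ fClique G s z = fClique G s x ∧
      fClique G (s+1) x ≤ fClique G (s+1) z ∧
      (univ.filter (fun i => z i ≠ 0)).card < (univ.filter (fun i => x i ≠ 0)).card := by
  have hn' : ¬ G.Adj v u := fun h => hn h.symm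
  rcases (dC_nonneg G s v hx).eq_or_lt with h | h
  · exact step_aux_s12 G hs huv hn hx hu hv (Or.inl h.symm)
  rcases (dC_nonneg G s u hx).eq_or_lt with h' | h'
  · exact step_aux_s12 G hs huv.symm hn' hx hv hu (Or.inl h'.symm)
  rcases le_total (dC G (s+1) v x * dC G s u x) (dC G (s+1) u x * dC G s v x) with h2 | h2
  · exact step_aux_s12 G hs huv hn hx hu hv (Or.inr ⟨h', h2⟩)
  · exact step_aux_s12 G hs huv.symm hn' hx hv hu (Or.inr ⟨h, h2⟩)

theorem reduce {s : ℕ} (hs : 1 ≤ s) (k : ℕ) : ∀ x : Fin n → ℝ, (∀ i, 0 ≤ x i) →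
    (univ.filter (fun i => x i ≠ 0)).card = k →
    ∃ z : Fin n → ℝ, (∀ i, 0 ≤ z i) ∧ fClique G s z = fClique G s x ∧
      fClique G (s+1) x ≤ fClique G (s+1) z ∧
      ∀ u v, u ≠ v → ¬ G.Adj u v → z u * z v = 0 := by
  induction k using Nat.strong_induction_on with
  | _ k ih =>
    intro x hx hk
    by_cases h : ∀ u v, u ≠ v → ¬ G.Adj u v → x u * x v = 0
    · exact ⟨x, hx, rfl, le_rfl, h⟩
    · push Not at h
      obtain ⟨u, v, huv, hn, h0⟩ := h
      obtain ⟨z, z0, z1, z2, z3⟩ := step G hs huv hn hx (left_ne_zero_of_mul h0)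
        (right_ne_zero_of_mul h0)
      obtain ⟨w, w0, w1, w2, w3⟩ := ih _ (hk ▸ z3) z z0 rfl
      exact ⟨w, w0, w1.trans z1, z2.trans w2, w3⟩

theorem prod_le_f {s : ℕ} {x : Fin n → ℝ} (hx : ∀ i, 0 ≤ x i) {S : Finset (Fin n)}
    (hS : S ∈ G.cliqueFinset s) : ∏ i ∈ S, x i ≤ fClique G s x :=
  Finset.single_le_sum (f := fun S => ∏ i ∈ S, x i)
    (fun _ _ => Finset.prod_nonneg fun i _ => hx i) hS

theorem bound_aux {s : ℕ} (hs : 1 ≤ s) {x : Fin n → ℝ} (hx : ∀ i, 0 ≤ x i)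
    (h1 : fClique G s x = 1) (hc : ∀ u v, u ≠ v → ¬ G.Adj u v → x u * x v = 0)
    {ε : ℝ} (hε : 0 < ε) {v : Fin n} (hv : 2 / ε ^ (s-1) < x v) :
    fClique G (s+1) x ≤ (G.cliqueFinset (s+1)).card * ε := by
  have hv0 : 0 < x v := lt_trans (by positivity) hv
  unfold fClique
  rw [← nsmul_eq_mul]
  refine Finset.sum_le_card_nsmul _ _ _ fun S hS => ?_
  by_cases hm : ∃ m ∈ S, x m < ε
  · obtain ⟨m, hm, hme⟩ := hm
    rw [← Finset.mul_prod_erase _ _ hm]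
    have h2 := prod_le_f G hx (erase_mem G hS hm)
    rw [h1] at h2
    nlinarith [hx m]
  · exfalso
    push Not at hm
    have hS' := SimpleGraph.mem_cliqueFinset_iff.1 hS
    obtain ⟨T, hT, hTc⟩ : ∃ T ⊆ S.erase v, T.card = s - 1 := by
      apply Finset.exists_subset_card_eq
      have := Finset.pred_card_le_card_erase (s := S) (a := v)
      rw [hS'.card_eq] at this
      omega
    have hvT : v ∉ T := fun h => by simpa using hT h
    have hTε : ∀ i ∈ T, ε ≤ x i := fun i hi => hm i (Finset.mem_erase.1 (hT hi)).2
    have hpos : ∀ i ∈ insert v T, x i ≠ 0 := by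
      intro i hi
      rcases Finset.mem_insert.1 hi with rfl | hi
      · exact hv0.ne'
      · exact (lt_of_lt_of_le hε (hTε i hi)).ne'
    have hcl : insert v T ∈ G.cliqueFinset s := by
      rw [SimpleGraph.mem_cliqueFinset_iff, SimpleGraph.isNClique_iff]
      refine ⟨?_, ?_⟩
      · intro a ha b hb hab
        by_contra hn
        exact mul_ne_zero (hpos a (by exact_mod_cast ha)) (hpos b (by exact_mod_cast hb))
          (hc a b hab hn)
      · rw [Finset.card_insert_of_notMem hvT, hTc]; omega
    have h2 := prod_le_f G hx hcl
    rw [h1, Finset.prod_insert hvT] at h2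
    have h3 : ε ^ (s-1) ≤ ∏ i ∈ T, x i := by
      rw [← hTc, ← Finset.prod_const]
      exact Finset.prod_le_prod (fun _ _ => hε.le) hTε
    have hp : 0 < ε ^ (s-1) := by positivity
    rw [div_lt_iff₀ hp] at hv
    nlinarith

theorem f_cont (s : ℕ) : Continuous (fClique G s) := by
  unfold fClique
  fun_prop

theorem exists_start {s : ℕ} (hs : 1 ≤ s) (hsw : s < G.cliqueNum) :
    ∃ y : Fin n → ℝ, (∀ i, 0 ≤ y i) ∧ fClique G s y = 1 ∧ 0 < fClique G (s+1) y ∧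
      ∀ u v, u ≠ v → ¬ G.Adj u v → y u * y v = 0 := by
  obtain ⟨K0, hK0⟩ := G.exists_isNClique_cliqueNum
  obtain ⟨K, hKs, hKc⟩ := Finset.exists_subset_card_eq (s := K0) (n := s + 1)
    (by rw [hK0.card_eq]; omega)
  have hK : K ∈ G.cliqueFinset (s+1) := by
    rw [SimpleGraph.mem_cliqueFinset_iff, SimpleGraph.isNClique_iff]
    exact ⟨hK0.isClique.subset (by exact_mod_cast hKs), hKc⟩
  let e : Fin n → ℝ := fun i => if i ∈ K then 1 else 0
  have he : ∀ i, 0 ≤ e i := fun i => by simp only [e]; split_ifs <;> norm_num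
  have heK : ∀ S ⊆ K, ∏ i ∈ S, e i = 1 := fun S hS =>
    Finset.prod_eq_one fun i hi => by simp [e, hS hi]
  obtain ⟨w, hw⟩ : K.Nonempty := by rw [← Finset.card_pos]; omega
  have hM : 1 ≤ fClique G s e := by
    rw [← heK (K.erase w) (Finset.erase_subset _ _)]
    exact prod_le_f G he (erase_mem G hK hw)
  set M := fClique G s e with hMd
  have hM0 : 0 < M⁻¹ := by positivity
  set c := (M⁻¹) ^ ((s : ℝ)⁻¹) with hcd
  have hc0 : 0 < c := Real.rpow_pos_of_pos hM0 _
  have hcs : c ^ s = M⁻¹ := Real.rpow_inv_natCast_pow hM0.le (by omega)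
  have hom : ∀ r, fClique G r (fun i => c * e i) = c ^ r * fClique G r e := by
    intro r
    unfold fClique
    rw [Finset.mul_sum]
    refine Finset.sum_congr rfl fun S hS => ?_
    rw [Finset.prod_mul_distrib, Finset.prod_const,
      (SimpleGraph.mem_cliqueFinset_iff.1 hS).card_eq]
  refine ⟨fun i => c * e i, fun i => mul_nonneg hc0.le (he i), ?_, ?_, ?_⟩
  · rw [hom, hcs]; exact inv_mul_cancel₀ (by positivity)
  · rw [hom]
    have := prod_le_f G he hK
    rw [heK K subset_rfl] at this
    have : 0 < fClique G (s+1) e := by linarith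
    positivity
  · intro u v huv hn
    by_cases hu : u ∈ K
    · simp [e, not_both G huv hn hK hu]
    · simp [e, hu]

end

/-- For `1 ≤ s < ω(G)` there is a maximizer `y` of `f_{s+1}(G,·)` on
`S_s(G) = {x : x ≥ 0, f_s(G,x) = 1}` whose support induces a complete subgraph of `G`. -/
theorem exists_max_with_clique_support {n : ℕ} (G : SimpleGraph (Fin n))
    [DecidableRel G.Adj] (s : ℕ) (hs : 1 ≤ s) (hsw : s < G.cliqueNum) :
    ∃ y : Fin n → ℝ, (∀ i, 0 ≤ y i) ∧ fClique G s y = 1 ∧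
      (∀ x : Fin n → ℝ, (∀ i, 0 ≤ x i) → fClique G s x = 1 →
        fClique G (s + 1) x ≤ fClique G (s + 1) y) ∧
      G.IsClique {v : Fin n | 0 < y v} := by
  obtain ⟨y0, h0, h1, h2, h3⟩ := exists_start G hs hsw
  set δ := fClique G (s+1) y0 with hδ
  set ε := δ / ((G.cliqueFinset (s+1)).card + 1) with hε
  have hε0 : 0 < ε := by positivity
  have hNε : (G.cliqueFinset (s+1)).card * ε < δ := by
    have : ((G.cliqueFinset (s+1)).card + 1) * ε = δ := by rw [hε]; field_simp
    linarith
  set R := 2 / ε ^ (s-1) with hR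
  let C : Set (Fin n → ℝ) := Set.Icc (fun _ => 0) (fun _ => R) ∩
    ({x | fClique G s x = 1} ∩ {x | ∀ u v, u ≠ v → ¬ G.Adj u v → x u * x v = 0})
  have hC : IsCompact C := by
    apply isCompact_Icc.inter_right
    apply IsClosed.inter
    · exact isClosed_eq (f_cont G s) continuous_const
    · simp only [Set.setOf_forall]
      refine isClosed_iInter fun u => isClosed_iInter fun v => isClosed_iInter fun _ =>
        isClosed_iInter fun _ => isClosed_eq (by fun_prop) continuous_const
  have key : ∀ x : Fin n → ℝ, (∀ i, 0 ≤ x i) → fClique G s x = 1 →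
      (∀ u v, u ≠ v → ¬ G.Adj u v → x u * x v = 0) → δ ≤ fClique G (s+1) x → x ∈ C := by
    intro x hx hx1 hxc hxd
    refine ⟨⟨hx, fun v => ?_⟩, hx1, hxc⟩
    by_contra hlt
    have := bound_aux G hs hx hx1 hxc hε0 (v := v) (not_le.1 hlt)
    linarith
  have hy0 : y0 ∈ C := key y0 h0 h1 h3 le_rfl
  obtain ⟨y, hy, hmax⟩ := hC.exists_isMaxOn ⟨y0, hy0⟩ (f_cont G (s+1)).continuousOn
  refine ⟨y, hy.1.1, hy.2.1, ?_, ?_⟩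
  · intro x hx hx1
    obtain ⟨z, z0, z1, z2, z3⟩ := reduce G hs _ x hx rfl
    refine z2.trans ?_
    rcases le_total δ (fClique G (s+1) z) with h | h
    · exact hmax (key z z0 (z1.trans hx1) z3 h)
    · exact h.trans (hmax hy0)
  · intro a ha b hb hab
    by_contra hn
    exact (mul_pos ha hb).ne' (hy.2.2 a b hab hn)
end
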